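/- For every fixed ε > 0 there is a constant C(ε) such that, with the notation of the context, for any permutation (i, j, k) of (1, 2, 3) one has N₀(B) ≤ C(ε) · (X_iX_jY_k + B^{6/11}) · B^ε. -/

import Mathlib

/-- The set `S₀(B)` of sextuples `(x₁, x₂, x₃, y₁, y₂, y₃)` of positive integers (encoded as a
pair of functions `Fin 3 → ℤ`) such that `Xᵢ/2 < xᵢ ≤ Xᵢ` and `Yᵢ/2 < yᵢ ≤ Yᵢ`, the equation
`a₁x₁²y₁³ + a₂x₂²y₂³ + a₃x₃²y₃³ = 0` holds, `gcd(x₁y₁, x₂y₂, x₃y₃) = 1`,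
`gcd(a₁a₂a₃, x₁x₂x₃y₁y₂y₃) = 1`, and `a₁y₁, a₂y₂, a₃y₃` are all squarefree. -/
def S0 (a : Fin 3 → ℤ) (X Y : Fin 3 → ℝ) : Set ((Fin 3 → ℤ) × (Fin 3 → ℤ)) :=
  {p | (∀ i, 0 < p.1 i) ∧ (∀ i, 0 < p.2 i) ∧
    (∀ i, X i / 2 < (p.1 i : ℝ) ∧ (p.1 i : ℝ) ≤ X i) ∧
    (∀ i, Y i / 2 < (p.2 i : ℝ) ∧ (p.2 i : ℝ) ≤ Y i) ∧
    a 0 * p.1 0 ^ 2 * p.2 0 ^ 3 + a 1 * p.1 1 ^ 2 * p.2 1 ^ 3 +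
      a 2 * p.1 2 ^ 2 * p.2 2 ^ 3 = 0 ∧
    Int.gcd (p.1 0 * p.2 0) (Int.gcd (p.1 1 * p.2 1) (p.1 2 * p.2 2)) = 1 ∧
    Int.gcd (a 0 * a 1 * a 2) (p.1 0 * p.1 1 * p.1 2 * p.2 0 * p.2 1 * p.2 2) = 1 ∧
    (∀ i, Squarefree (a i * p.2 i))}

/-!
Two ways of fibring the solutions are played against each other.

Fixing `y₁, y₂, y₃` leaves primitive points on a conic `∑ Aᵢ xᵢ² = 0` with `Aᵢ = aᵢ yᵢ³`. Modulo
each `Aᵢ` the ratio of the other two coordinates is one of few square roots; two points in the same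
classes have polar form divisible by `A₁A₂A₃`, which forces their ratios apart. This gives
`≪ B^ε (Y₁Y₂Y₃ + √B)` solutions.

Fixing `xᵢ, xⱼ, yₖ` leaves a binary cubic form `α u³ + β v³` that has to be a fixed integer times a
square. Modulo `aₖ yₖ³` the ratio `u / v` is one of few cube roots, so `(u, v)` lies on one of few
lattices of index `|aₖ| yₖ³`. On each lattice the square sieve, fed by Weil's bound for `∑ χ(f(t))`
with `f` cubic (proved by Stepanov's method), lets only the power `2/3` of the points through.
This gives `≪ B^ε Xᵢ Xⱼ Yₖ (1 + (Yᵢ Yⱼ / Yₖ³)^(2/3))` solutions, and the smaller of the two bounds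
is `≪ B^ε (Xᵢ Xⱼ Yₖ + B^(6/11))`.
-/

namespace SquarefulSum

/-! ### Weil's bound by Stepanov's method -/

section Stepanov

open Polynomial

/-- The cofactor in the `k`-th derivative of `f ^ n * r`: it is a polynomial multiple of
`f ^ (n - k)`, and `derivCofactor f n k r` is the other factor. It is linear in `r`, which makes
the vanishing conditions of Stepanov's method a linear system. -/
noncomputable def derivCofactor {R : Type*} [CommRing R] (f : R[X]) (n : ℕ) :
    ℕ → R[X] →ₗ[R] R[X]
  | 0 => LinearMap.id
  | k + 1 => (LinearMap.mulLeft R (((n - k : ℕ) : R[X]) * derivative f) +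
      LinearMap.mulLeft R f ∘ₗ derivative) ∘ₗ derivCofactor f n k

lemma derivCofactor_succ_apply {R : Type*} [CommRing R] (f : R[X]) (n k : ℕ) (r : R[X]) :
    derivCofactor f n (k + 1) r = ((n - k : ℕ) : R[X]) * derivative f * derivCofactor f n k r +
      f * derivative (derivCofactor f n k r) := by
  simp [derivCofactor, mul_assoc]

lemma iterate_derivative_pow_mul {R : Type*} [CommRing R] (f r : R[X]) {n k : ℕ} (hk : k ≤ n) :
    derivative^[k] (f ^ n * r) = f ^ (n - k) * derivCofactor f n k r := by
  induction k with
  | zero => simp [derivCofactor]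
  | succ k ih =>
    obtain ⟨m, rfl⟩ : ∃ m, n = m + (k + 1) := ⟨n - (k + 1), by omega⟩
    have hm : m + (k + 1) - k = m + 1 := by omega
    rw [Function.iterate_succ_apply', ih (by omega), derivCofactor_succ_apply, hm,
      Nat.add_sub_cancel, derivative_mul, derivative_pow_succ]
    push_cast
    simp only [map_add, map_natCast, map_one]
    ring

lemma natDegree_derivCofactor_le {R : Type*} [CommRing R] (f : R[X]) (n k : ℕ) (r : R[X]) :
    (derivCofactor f n k r).natDegree ≤ r.natDegree + k * (f.natDegree - 1) := by
  induction k with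
  | zero => simp [derivCofactor]
  | succ k ih =>
    rw [derivCofactor_succ_apply, add_one_mul, ← add_assoc]
    set q := derivCofactor f n k r
    refine natDegree_add_le_of_degree_le ?_ ?_
    · have hf : (((n - k : ℕ) : R[X]) * derivative f).natDegree ≤ f.natDegree - 1 :=
        (by simpa using natDegree_C_mul_le ((n - k : ℕ) : R) (derivative f) :
          (((n - k : ℕ) : R[X]) * derivative f).natDegree ≤ (derivative f).natDegree).trans
          (natDegree_derivative_le f)
      exact natDegree_mul_le.trans (by omega)
    · rcases Nat.eq_zero_or_pos q.natDegree with hq | hq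
      · simp [derivative_of_natDegree_zero hq]
      · have hfq := natDegree_mul_le (p := f) (q := derivative q)
        have hdq := natDegree_derivative_le q
        omega

lemma iterate_derivative_mul_of_derivative_eq_zero {R : Type*} [CommRing R] {h : R[X]}
    (hh : derivative h = 0) (r : R[X]) (k : ℕ) :
    derivative^[k] (h * r) = h * derivative^[k] r := by
  induction k with
  | zero => rfl
  | succ k ih => simp [Function.iterate_succ_apply', ih, hh]

lemma eq_zero_of_sq_mul_eq {F : Type*} [Field F] {f r s : F[X]} {c : F} (hc : c ≠ 0)
    (hf : Squarefree f) (hdeg : 0 < f.natDegree) (h : r ^ 2 * f = C c * s ^ 2) :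
    r = 0 ∧ s = 0 := by
  have hu : IsUnit (C c : F[X]) := isUnit_C.2 hc.isUnit
  have hr : r = 0 := by
    by_contra hr
    have hrs : r ^ 2 ∣ s ^ 2 := (hu.dvd_mul_left).1 ⟨f, h.symm⟩
    obtain ⟨t, rfl⟩ := (IsIntegrallyClosed.pow_dvd_pow_iff two_ne_zero).1 hrs
    have hft : f = C c * t ^ 2 := by
      apply mul_left_cancel₀ (pow_ne_zero 2 hr)
      rw [h]; ring
    have ht : IsUnit t := hf t ⟨C c, by rw [hft]; ring⟩
    have hfu : IsUnit f := hft ▸ hu.mul (ht.pow 2)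
    exact hdeg.ne' (natDegree_eq_zero_of_isUnit hfu)
  refine ⟨hr, ?_⟩
  have : C c * s ^ 2 = 0 := by rw [← h, hr]; ring
  simpa [hc] using this

variable {p : ℕ} [Fact p.Prime]

lemma X_pow_dvd_pow_sub_C_coeff_zero (f : (ZMod p)[X]) : X ^ p ∣ f ^ p - C (f.coeff 0) := by
  have hX : X ∣ f - C (f.coeff 0) := by simp [X_dvd_iff]
  have := pow_dvd_pow_of_dvd hX p
  rwa [sub_pow_char, ← C_pow, ZMod.pow_card] at this

/-- Multiplying `r + s f ^ (p / 2)` by `(r - s f ^ (p / 2)) f` gives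
`r² f - s² f ^ p ≡ r² f - f(0) s²` modulo `X ^ p`, an expression of degree less than `p`. -/
lemma eq_zero_of_X_pow_dvd_add_mul_pow (hp2 : p ≠ 2) {f r s : (ZMod p)[X]} (hf : Squarefree f)
    (hdeg : 0 < f.natDegree) (hf0 : f.coeff 0 ≠ 0) (hr : 2 * r.natDegree + f.natDegree < p)
    (hs : 2 * s.natDegree < p) (h : X ^ p ∣ r + s * f ^ (p / 2)) : r = 0 ∧ s = 0 := by
  have hodd : p % 2 = 1 := (Fact.out : p.Prime).eq_two_or_odd.resolve_left hp2
  have hfp : f ^ p = f * (f ^ (p / 2)) ^ 2 := by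
    rw [← pow_mul, ← pow_succ']; congr 1; omega
  refine eq_zero_of_sq_mul_eq hf0 hf hdeg (sub_eq_zero.1 ?_)
  have hdvd : X ^ p ∣ r ^ 2 * f - C (f.coeff 0) * s ^ 2 := by
    have e : r ^ 2 * f - C (f.coeff 0) * s ^ 2 = (r + s * f ^ (p / 2)) *
        ((r - s * f ^ (p / 2)) * f) + (f ^ p - C (f.coeff 0)) * s ^ 2 := by rw [hfp]; ring
    rw [e]
    exact dvd_add (h.mul_right _) ((X_pow_dvd_pow_sub_C_coeff_zero f).mul_right _)
  by_contra hne
  have hle := natDegree_le_of_dvd hdvd hne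
  rw [natDegree_X_pow] at hle
  have h1 : (r ^ 2 * f).natDegree ≤ p - 1 := by
    have := natDegree_mul_le (p := r ^ 2) (q := f)
    have := natDegree_pow_le (p := r) (n := 2)
    omega
  have h2 : (C (f.coeff 0) * s ^ 2).natDegree ≤ p - 1 := by
    have := natDegree_C_mul_le (f.coeff 0) (s ^ 2)
    have := natDegree_pow_le (p := s) (n := 2)
    omega
  have := natDegree_sub_le_of_le h1 h2
  omega

lemma eq_zero_of_sum_X_pow_mul_eq_zero (hp2 : p ≠ 2) {f : (ZMod p)[X]} (hf : Squarefree f)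
    (hdeg : 0 < f.natDegree) (hf0 : f.coeff 0 ≠ 0) {J : ℕ} {r s : Fin J → (ZMod p)[X]}
    (hr : ∀ j, 2 * (r j).natDegree + f.natDegree < p) (hs : ∀ j, 2 * (s j).natDegree < p)
    (h : ∑ j : Fin J, X ^ (p * (j : ℕ)) * (r j + s j * f ^ (p / 2)) = 0) (k : Fin J) :
    r k = 0 ∧ s k = 0 := by
  induction k using WellFoundedLT.induction with
  | _ k ih =>
  have hrest : X ^ (p * (k + 1) : ℕ) ∣
      ∑ j ∈ Finset.univ.erase k, X ^ (p * (j : ℕ)) * (r j + s j * f ^ (p / 2)) := by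
    refine Finset.dvd_sum fun j hj => ?_
    rcases lt_or_gt_of_ne (Finset.ne_of_mem_erase hj) with hlt | hgt
    · simp [ih j hlt]
    · exact (pow_dvd_pow _ (Nat.mul_le_mul_left _ hgt)).mul_right _
  have hk : X ^ (p * (k + 1) : ℕ) ∣ X ^ (p * (k : ℕ)) * (r k + s k * f ^ (p / 2)) := by
    rw [← Finset.add_sum_erase _ _ (Finset.mem_univ k)] at h
    rw [eq_neg_of_add_eq_zero_left h]
    exact (dvd_neg).2 hrest
  rw [mul_add_one, pow_add] at hk
  exact eq_zero_of_X_pow_dvd_add_mul_pow hp2 hf hdeg hf0 (hr k) (hs k)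
    ((mul_dvd_mul_iff_left (pow_ne_zero _ X_ne_zero)).1 hk)

/-- The linear form on the coefficient polynomials `r j`, `s j` of
`∑ j : Fin J, X ^ (p * j) * (f ^ l * r j + f ^ (l + p / 2) * s j)` whose vanishing makes the `k`-th
derivative of that sum vanish at every `x` with `f(x) ^ (p / 2) = e`; there `X ^ p = X`. -/
noncomputable def stepanovCondition (f : (ZMod p)[X]) (e : ZMod p) (l d J k : ℕ) :
    (Fin J → degreeLT (ZMod p) d × degreeLT (ZMod p) d) →ₗ[ZMod p] (ZMod p)[X] :=
  ∑ j : Fin J, LinearMap.mulLeft (ZMod p) (X ^ (j : ℕ)) ∘ₗ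
    (derivCofactor f l k ∘ₗ (degreeLT (ZMod p) d).subtype ∘ₗ LinearMap.fst _ _ _ +
      e • derivCofactor f (l + p / 2) k ∘ₗ (degreeLT (ZMod p) d).subtype ∘ₗ
        LinearMap.snd _ _ _) ∘ₗ LinearMap.proj j

lemma stepanovCondition_apply (f : (ZMod p)[X]) (e : ZMod p) (l d J k : ℕ)
    (v : Fin J → degreeLT (ZMod p) d × degreeLT (ZMod p) d) :
    stepanovCondition f e l d J k v = ∑ j : Fin J, X ^ (j : ℕ) *
      (derivCofactor f l k (v j).1 + e • derivCofactor f (l + p / 2) k (v j).2) := by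
  simp [stepanovCondition]

lemma natDegree_lt_of_mem_degreeLT {R : Type*} [Semiring R] {d : ℕ} (hd : 0 < d)
    (r : degreeLT R d) : (r : R[X]).natDegree < d := by
  rcases eq_or_ne (r : R[X]) 0 with h | h
  · simpa [h] using hd
  · exact (natDegree_lt_iff_degree_lt h).2 (mem_degreeLT.1 r.2)

lemma natDegree_stepanovCondition_lt (f : (ZMod p)[X]) (e : ZMod p) {l d J k : ℕ} (hk : k < l)
    (hd : 0 < d) (v : Fin J → degreeLT (ZMod p) d × degreeLT (ZMod p) d) :
    (stepanovCondition f e l d J k v).natDegree < d + l * (f.natDegree - 1) + J := by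
  rw [stepanovCondition_apply]
  suffices (∑ j : Fin J, X ^ (j : ℕ) * (derivCofactor f l k (v j).1 +
      e • derivCofactor f (l + p / 2) k (v j).2)).natDegree ≤
      (d - 1 + l * (f.natDegree - 1)) + J by omega
  refine natDegree_sum_le_of_forall_le _ _ fun j _ => ?_
  have hkl : k * (f.natDegree - 1) ≤ l * (f.natDegree - 1) := Nat.mul_le_mul_right _ hk.le
  have hcof : ∀ (n : ℕ) (r : degreeLT (ZMod p) d),
      (derivCofactor f n k r).natDegree ≤ d - 1 + l * (f.natDegree - 1) := fun n r => by
    have := natDegree_derivCofactor_le f n k (r : (ZMod p)[X])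
    have := natDegree_lt_of_mem_degreeLT hd r
    omega
  have hsum := natDegree_add_le_of_degree_le (hcof l (v j).1)
    ((natDegree_smul_le e _).trans (hcof (l + p / 2) (v j).2))
  have hmul := natDegree_mul_le (p := (X : (ZMod p)[X]) ^ (j : ℕ))
    (q := derivCofactor f l k (v j).1 + e • derivCofactor f (l + p / 2) k (v j).2)
  rw [natDegree_X_pow] at hmul
  omega

lemma exists_stepanovCondition_eq_zero (f : (ZMod p)[X]) (e : ZMod p) {l d J : ℕ} (hd : 0 < d)
    (hcount : l * (d + l * (f.natDegree - 1) + J) < 2 * (J * d)) :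
    ∃ v : Fin J → degreeLT (ZMod p) d × degreeLT (ZMod p) d, v ≠ 0 ∧
      ∀ k < l, stepanovCondition f e l d J k v = 0 := by
  set N := d + l * (f.natDegree - 1) + J
  let Φ : (Fin J → degreeLT (ZMod p) d × degreeLT (ZMod p) d) →ₗ[ZMod p]
      (Fin l × Fin N → ZMod p) :=
    LinearMap.pi fun km => lcoeff (ZMod p) (km.2 : ℕ) ∘ₗ stepanovCondition f e l d J km.1
  have hdim : Module.finrank (ZMod p) (degreeLT (ZMod p) d) = d := by
    rw [(degreeLTEquiv (ZMod p) d).finrank_eq, Module.finrank_fin_fun]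
  have : Module.Finite (ZMod p) (degreeLT (ZMod p) d) :=
    Module.Finite.equiv (degreeLTEquiv (ZMod p) d).symm
  have hker : LinearMap.ker Φ ≠ ⊥ := by
    apply LinearMap.ker_ne_bot_of_finrank_lt
    rw [Module.finrank_fintype_fun_eq_card, Module.finrank_pi_fintype]
    simp only [Module.finrank_prod, hdim, Fintype.card_prod, Fintype.card_fin, Finset.sum_const,
      Finset.card_univ, smul_eq_mul]
    linarith
  obtain ⟨v, hv, hv0⟩ := (Submodule.ne_bot_iff _).1 hker
  refine ⟨v, hv0, fun k hk => Polynomial.ext fun m => ?_⟩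
  rcases Nat.lt_or_ge m N with hm | hm
  · simpa [Φ] using congrFun (LinearMap.mem_ker.1 hv) (⟨k, hk⟩, ⟨m, hm⟩)
  · rw [coeff_eq_zero_of_natDegree_lt
      ((natDegree_stepanovCondition_lt f e hk hd v).trans_le hm), coeff_zero]

/-- The auxiliary polynomial of Stepanov's method. -/
noncomputable def stepanovPoly (f : (ZMod p)[X]) (l : ℕ) {d J : ℕ}
    (v : Fin J → degreeLT (ZMod p) d × degreeLT (ZMod p) d) : (ZMod p)[X] :=
  ∑ j : Fin J, X ^ (p * (j : ℕ)) * (f ^ l * ((v j).1 : (ZMod p)[X]) +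
    f ^ (l + p / 2) * ((v j).2 : (ZMod p)[X]))

lemma natDegree_stepanovPoly_le (f : (ZMod p)[X]) (l : ℕ) {d J : ℕ} (hd : 0 < d)
    (v : Fin J → degreeLT (ZMod p) d × degreeLT (ZMod p) d) :
    (stepanovPoly f l v).natDegree ≤ (l + p / 2) * f.natDegree + d + p * J := by
  refine natDegree_sum_le_of_forall_le _ _ fun j _ => ?_
  have hj : p * (j : ℕ) ≤ p * J := Nat.mul_le_mul_left _ j.2.le
  have hterm : ∀ n ≤ l + p / 2, ∀ r : degreeLT (ZMod p) d,
      (f ^ n * (r : (ZMod p)[X])).natDegree ≤ (l + p / 2) * f.natDegree + d := fun n hn r => by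
    have := natDegree_mul_le (p := f ^ n) (q := (r : (ZMod p)[X]))
    have := natDegree_pow_le (p := f) (n := n)
    have := Nat.mul_le_mul_right f.natDegree hn
    have := natDegree_lt_of_mem_degreeLT hd r
    omega
  have hsum := natDegree_add_le_of_degree_le (hterm l (by omega) (v j).1)
    (hterm (l + p / 2) le_rfl (v j).2)
  have hmul := natDegree_mul_le (p := (X : (ZMod p)[X]) ^ (p * (j : ℕ)))
    (q := f ^ l * (v j).1 + f ^ (l + p / 2) * (v j).2)
  rw [natDegree_X_pow] at hmul
  omega

lemma stepanovPoly_ne_zero (hp2 : p ≠ 2) {f : (ZMod p)[X]} (hf : Squarefree f)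
    (hdeg : 0 < f.natDegree) (hf0 : f.coeff 0 ≠ 0) (l : ℕ) {d J : ℕ} (hd0 : 0 < d)
    (hd : 2 * d + f.natDegree ≤ p + 1) {v : Fin J → degreeLT (ZMod p) d × degreeLT (ZMod p) d}
    (hv : v ≠ 0) : stepanovPoly f l v ≠ 0 := by
  intro h
  have hfac : stepanovPoly f l v = f ^ l *
      ∑ j : Fin J, X ^ (p * (j : ℕ)) *
        (((v j).1 : (ZMod p)[X]) + ((v j).2 : (ZMod p)[X]) * f ^ (p / 2)) := by
    rw [stepanovPoly, Finset.mul_sum]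
    exact Finset.sum_congr rfl fun j _ => by ring
  rw [h, eq_comm, mul_eq_zero_iff_left (pow_ne_zero _ hf.ne_zero)] at hfac
  have hdeg_lt := fun r : degreeLT (ZMod p) d => natDegree_lt_of_mem_degreeLT hd0 r
  refine hv (funext fun j => ?_)
  obtain ⟨h1, h2⟩ := eq_zero_of_sum_X_pow_mul_eq_zero hp2 hf hdeg hf0
    (fun j => by have := hdeg_lt (v j).1; omega) (fun j => by have := hdeg_lt (v j).2; omega)
    hfac j
  exact Prod.ext (Subtype.ext h1) (Subtype.ext h2)

lemma eval_iterate_derivative_stepanovPoly (f : (ZMod p)[X]) {e x : ZMod p}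
    (hx : f.eval x ^ (p / 2) = e) {l k : ℕ} (hk : k ≤ l) {d J : ℕ}
    (v : Fin J → degreeLT (ZMod p) d × degreeLT (ZMod p) d) :
    (derivative^[k] (stepanovPoly f l v)).eval x =
      f.eval x ^ (l - k) * (stepanovCondition f e l d J k v).eval x := by
  have hX : ∀ j : ℕ, derivative (X ^ (p * j) : (ZMod p)[X]) = 0 := fun j => by
    simp [derivative_X_pow]
  have hsub : l + p / 2 - k = l - k + p / 2 := by omega
  rw [stepanovPoly, iterate_derivative_sum, stepanovCondition_apply, eval_finsetSum,
    eval_finsetSum, Finset.mul_sum]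
  refine Finset.sum_congr rfl fun j _ => ?_
  rw [iterate_derivative_mul_of_derivative_eq_zero (hX j), iterate_map_add derivative,
    iterate_derivative_pow_mul _ _ hk, iterate_derivative_pow_mul _ _ (by omega), hsub]
  simp only [eval_mul, eval_pow, eval_X, eval_add, eval_smul, smul_eq_mul, pow_mul,
    ZMod.pow_card, pow_add, hx]
  ring

lemma card_mul_le_natDegree_of_le_rootMultiplicity {R : Type*} [CommRing R] [IsDomain R]
    {f : R[X]} {s : Finset R} {l : ℕ} (h : ∀ x ∈ s, l ≤ f.rootMultiplicity x) :
    s.card * l ≤ f.natDegree := by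
  classical
  have hsub : s.val.bind (fun x => Multiset.replicate l x) ≤ f.roots := by
    refine Multiset.le_iff_count.2 fun x => ?_
    rw [count_roots, Multiset.count_bind]
    by_cases hx : x ∈ s
    · refine le_trans (le_of_eq ?_) (h x hx)
      change ∑ b ∈ s, _ = _
      simp [Multiset.count_replicate, hx]
    · change ∑ b ∈ s, _ ≤ _
      simp [Multiset.count_replicate, hx]
  have := (Multiset.card_le_card hsub).trans (card_roots' f)
  simpa [Multiset.card_bind] using this

theorem stepanov_bound (hp2 : p ≠ 2) {f : (ZMod p)[X]} (hf : Squarefree f)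
    (hdeg : 0 < f.natDegree) (hf0 : f.coeff 0 ≠ 0) (e : ZMod p) {l d J : ℕ} (hl : l ≤ p)
    (hd0 : 0 < d) (hd : 2 * d + f.natDegree ≤ p + 1)
    (hcount : l * (d + l * (f.natDegree - 1) + J) < 2 * (J * d)) :
    (Finset.univ.filter fun x : ZMod p => f.eval x ^ (p / 2) = e).card * l ≤
      (l + p / 2) * f.natDegree + d + p * J := by
  obtain ⟨v, hv0, hv⟩ := exists_stepanovCondition_eq_zero f e hd0 hcount
  have hne := stepanovPoly_ne_zero hp2 hf hdeg hf0 l hd0 hd hv0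
  refine (card_mul_le_natDegree_of_le_rootMultiplicity (f := stepanovPoly f l v) ?_).trans
    (natDegree_stepanovPoly_le f l hd0 v)
  intro x hx
  rcases Nat.eq_zero_or_pos l with rfl | hl0
  · exact Nat.zero_le _
  have hfac : ((l - 1).factorial : ZMod p) ∈ nonZeroDivisors (ZMod p) := by
    apply mem_nonZeroDivisors_of_ne_zero
    rw [Ne, ZMod.natCast_eq_zero_iff, (Fact.out : p.Prime).dvd_factorial]
    omega
  refine Nat.le_of_pred_lt
    ((lt_rootMultiplicity_iff_isRoot_iterate_derivative_of_mem_nonZeroDivisors hne hfac).2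
      fun k hk => ?_)
  rw [IsRoot.def, eval_iterate_derivative_stepanovPoly f (Finset.mem_filter.1 hx).2 (by omega),
    hv k (by omega), eval_zero, mul_zero]

lemma two_mul_card_eval_pow_eq_le (hp : 37 ≤ p) {f : (ZMod p)[X]} (hf : Squarefree f)
    (hdeg : 0 < f.natDegree) (hdeg3 : f.natDegree ≤ 3) (hf0 : f.coeff 0 ≠ 0) (e : ZMod p) :
    2 * (Finset.univ.filter fun x : ZMod p => f.eval x ^ (p / 2) = e).card ≤
      p + 12 * p.sqrt + 42 := by
  have hodd : p % 2 = 1 := (Fact.out : p.Prime).eq_two_or_odd.resolve_left (by omega)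
  obtain ⟨d, hd⟩ : ∃ d, p = 2 * d + 3 := ⟨(p - 3) / 2, by omega⟩
  obtain ⟨l, hl⟩ : ∃ l, l = p.sqrt := ⟨_, rfl⟩
  obtain ⟨J, hJ⟩ : ∃ J, J = l / 2 + 4 := ⟨_, rfl⟩
  have hlp : l * l ≤ p := hl ▸ Nat.sqrt_le p
  have hpl : p < (l + 1) * (l + 1) := hl ▸ Nat.lt_succ_sqrt p
  have hl6 : 6 ≤ l := by by_contra! h; nlinarith
  have hJl : l + 7 ≤ 2 * J := by omega
  have hcount : l * (d + l * (f.natDegree - 1) + J) < 2 * (J * d) := by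
    have hle : l * (d + l * (f.natDegree - 1) + J) ≤ l * (d + l * 2 + J) := by gcongr; omega
    refine hle.trans_lt ?_
    rcases hl6.eq_or_lt with rfl | h
    · obtain rfl : J = 7 := by omega
      omega
    · have hJd : (l + 7) * d ≤ 2 * J * d := Nat.mul_le_mul_right _ hJl
      have hlJ : l * (2 * J) ≤ l * (l + 8) := Nat.mul_le_mul_left _ (by omega)
      nlinarith
  have hbound := stepanov_bound (by omega) hf hdeg hf0 e (by nlinarith) (by omega) (by omega) hcount
  generalize (Finset.univ.filter fun x : ZMod p => f.eval x ^ (p / 2) = e).card = n at hbound ⊢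
  have hhalf : (l + p / 2) * f.natDegree ≤ (l + (d + 1)) * 3 := by gcongr; omega
  rw [← hl]
  by_contra! hcon
  have h1 : l * (p + 12 * l + 43) ≤ l * (2 * n) := Nat.mul_le_mul_left _ hcon
  have h2 : p * (2 * J) ≤ p * (l + 8) := Nat.mul_le_mul_left _ (by omega)
  nlinarith

end Stepanov

section Weil

open Polynomial

variable {p : ℕ} [Fact p.Prime]

lemma natCast_ne_zero_of_pos_of_lt {n : ℕ} (hn : 0 < n) (hnp : n < p) : (n : ZMod p) ≠ 0 :=
  fun h => (Nat.le_of_dvd hn ((ZMod.natCast_eq_zero_iff n p).1 h)).not_gt hnp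

lemma abs_quadraticChar_le_one (a : ZMod p) : |quadraticChar (ZMod p) a| ≤ 1 := by
  rcases eq_or_ne a 0 with rfl | h
  · simp
  · rcases quadraticChar_dichotomy h with h | h <;> simp [h]

lemma unit_mul_quadraticChar (hp2 : 2 < p) (e : ℤˣ) (a : ZMod p) :
    e * quadraticChar (ZMod p) a =
      2 * (if a ^ (p / 2) = ((e : ℤ) : ZMod p) then 1 else 0) - 1 + (if a = 0 then 1 else 0) := by
  have : Fact (2 < p) := ⟨hp2⟩
  have hpow := quadraticChar_eq_pow_of_char_ne_two' (F := ZMod p)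
    (by rw [ZMod.ringChar_zmod_n]; omega) a
  rw [ZMod.card] at hpow
  have hne : (1 : ZMod p) ≠ -1 := (ZMod.neg_one_ne_one).symm
  rw [← hpow]
  rcases eq_or_ne a 0 with rfl | ha
  · rcases Int.units_eq_one_or e with rfl | rfl <;> simp
  · rcases quadraticChar_dichotomy ha with h | h <;>
      rcases Int.units_eq_one_or e with rfl | rfl <;> simp [h, ha, hne, hne.symm]

lemma card_filter_eval_eq_zero_le {F : Type*} [Field F] [Fintype F] [DecidableEq F] {f : F[X]}
    (hf : f ≠ 0) : (Finset.univ.filter fun x : F => f.eval x = 0).card ≤ f.natDegree := by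
  have hsub : (Finset.univ.filter fun x : F => f.eval x = 0) ⊆ f.roots.toFinset :=
    fun x hx => by simpa [hf] using hx
  exact ((Finset.card_le_card hsub).trans (Multiset.toFinset_card_le _)).trans (card_roots' f)

lemma unit_mul_sum_quadraticChar_le (hp : 37 ≤ p) {f : (ZMod p)[X]} (hf : Squarefree f)
    (hdeg : 0 < f.natDegree) (hdeg3 : f.natDegree ≤ 3) (hf0 : f.coeff 0 ≠ 0) (e : ℤˣ) :
    e * ∑ x : ZMod p, quadraticChar (ZMod p) (f.eval x) ≤ 12 * p.sqrt + 45 := by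
  have hroots := (card_filter_eval_eq_zero_le hf.ne_zero).trans hdeg3
  have hcard := two_mul_card_eval_pow_eq_le hp hf hdeg hdeg3 hf0 (e : ℤ)
  have hsum : e * ∑ x : ZMod p, quadraticChar (ZMod p) (f.eval x) =
      2 * (Finset.univ.filter fun x : ZMod p => f.eval x ^ (p / 2) = ((e : ℤ) : ZMod p)).card -
        p + (Finset.univ.filter fun x : ZMod p => f.eval x = 0).card := by
    rw [Finset.mul_sum, Finset.sum_congr rfl fun x _ => unit_mul_quadraticChar (by omega) e _,
      Finset.sum_add_distrib, Finset.sum_sub_distrib, ← Finset.mul_sum, Finset.sum_boole,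
      Finset.sum_boole]
    simp [ZMod.card]
  rw [hsum]
  omega

lemma squarefree_taylor {F : Type*} [Field F] {f : F[X]} (hf : Squarefree f) (c : F) :
    Squarefree (taylor c f) := by
  rintro g ⟨h, hg⟩
  have hdvd : (taylorEquiv c).symm g * (taylorEquiv c).symm g ∣ f :=
    ⟨(taylorEquiv c).symm h, by
      rw [← map_mul, ← map_mul, ← hg, AlgEquiv.eq_symm_apply]; rfl⟩
  exact (isUnit_map_iff (taylorEquiv c).symm g).1 (hf _ hdvd)

lemma exists_eval_ne_zero_of_natDegree_lt {f : (ZMod p)[X]} (hf : f ≠ 0)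
    (hdeg : f.natDegree < p) : ∃ c, f.eval c ≠ 0 := by
  by_contra! h
  exact hf (eq_zero_of_natDegree_lt_card_of_eval_eq_zero f Function.injective_id h
    (by rwa [ZMod.card]))

theorem abs_sum_quadraticChar_eval_le (hp : 3 < p) {f : (ZMod p)[X]} (hf : Squarefree f)
    (hdeg : 0 < f.natDegree) (hdeg3 : f.natDegree ≤ 3) :
    |((∑ x : ZMod p, quadraticChar (ZMod p) (f.eval x) : ℤ) : ℝ)| ≤ 20 * √p := by
  have hs : √p * √p = p := Real.mul_self_sqrt (by positivity)
  have hs0 : 0 ≤ √(p : ℝ) := Real.sqrt_nonneg _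
  rcases Nat.lt_or_ge p 37 with hp37 | hp37
  · have htriv : |∑ x : ZMod p, quadraticChar (ZMod p) (f.eval x)| ≤ p := by
      calc _ ≤ ∑ x : ZMod p, |quadraticChar (ZMod p) (f.eval x)| := Finset.abs_sum_le_sum_abs _ _
        _ ≤ ∑ _x : ZMod p, (1 : ℤ) := Finset.sum_le_sum fun x _ => abs_quadraticChar_le_one _
        _ = p := by simp [ZMod.card]
    have htriv' : |((∑ x : ZMod p, quadraticChar (ZMod p) (f.eval x) : ℤ) : ℝ)| ≤ p := by
      exact_mod_cast htriv
    have : (p : ℝ) < 37 := by exact_mod_cast hp37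
    nlinarith
  · obtain ⟨c, hc⟩ := exists_eval_ne_zero_of_natDegree_lt hf.ne_zero (by omega : f.natDegree < p)
    have hshift : ∑ x : ZMod p, quadraticChar (ZMod p) ((taylor c f).eval x) =
        ∑ x : ZMod p, quadraticChar (ZMod p) (f.eval x) := by
      simp only [taylor_eval]
      exact Fintype.sum_equiv (Equiv.addRight c) _ _ fun x => rfl
    have hle := unit_mul_sum_quadraticChar_le hp37 (squarefree_taylor hf c)
      (by rwa [natDegree_taylor]) (by rwa [natDegree_taylor]) (by rwa [taylor_coeff_zero])
    rw [hshift] at hle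
    have habs : |∑ x : ZMod p, quadraticChar (ZMod p) (f.eval x)| ≤ 12 * p.sqrt + 45 :=
      abs_le'.2 ⟨by simpa using hle 1, by simpa using hle (-1)⟩
    have habs' : |((∑ x : ZMod p, quadraticChar (ZMod p) (f.eval x) : ℤ) : ℝ)| ≤
        12 * (p.sqrt : ℝ) + 45 := by exact_mod_cast habs
    have : (p.sqrt : ℝ) ≤ √p := Real.nat_sqrt_le_real_sqrt
    have : (37 : ℝ) ≤ p := by exact_mod_cast hp37
    nlinarith

end Weil

/-! ### Character sums of binary cubic forms -/

section CubicForm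

open Polynomial

/-- The binary cubic form `c₁ (u · z)³ + c₂ (v · z)³`. -/
def cubicForm {R : Type*} [CommRing R] (c u v z : R × R) : R :=
  c.1 * (u.1 * z.1 + u.2 * z.2) ^ 3 + c.2 * (v.1 * z.1 + v.2 * z.2) ^ 3

lemma map_cubicForm {R S : Type*} [CommRing R] [CommRing S] (φ : R →+* S) (c u v z : R × R) :
    φ (cubicForm c u v z) =
      cubicForm (c.map φ φ) (u.map φ φ) (v.map φ φ) (z.map φ φ) := by
  simp [cubicForm]

lemma cubicForm_smul {R : Type*} [CommRing R] (c u v z : R × R) (l : R) :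
    cubicForm c u v (l • z) = l ^ 3 * cubicForm c u v z := by
  simp only [cubicForm, Prod.smul_fst, Prod.smul_snd, smul_eq_mul]
  ring

/-- The dehomogenisation of `cubicForm c u v`. -/
noncomputable def cubicPoly {R : Type*} [CommRing R] (c u v : R × R) : R[X] :=
  cubicForm (c.map C C) (u.map C C) (v.map C C) (X, 1)

lemma eval_cubicPoly {R : Type*} [CommRing R] (c u v : R × R) (x : R) :
    (cubicPoly c u v).eval x = cubicForm c u v (x, 1) := by
  simp [cubicPoly, cubicForm]

lemma natDegree_cubicPoly_le {R : Type*} [CommRing R] (c u v : R × R) :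
    (cubicPoly c u v).natDegree ≤ 3 := by
  simp only [cubicPoly, cubicForm, Prod.map_fst, Prod.map_snd, mul_one]
  compute_degree

lemma cubicPoly_swap {R : Type*} [CommRing R] (c u v : R × R) :
    cubicPoly c.swap v u = cubicPoly c u v := by
  simp [cubicPoly, cubicForm, add_comm]

lemma three_mul_cubicPoly_sub {R : Type*} [CommRing R] (c u v : R × R) :
    C (3 * v.1) * cubicPoly c u v - (C v.1 * X + C v.2) * derivative (cubicPoly c u v) =
      C (-3 * c.1 * (u.1 * v.2 - u.2 * v.1)) * (C u.1 * X + C u.2) ^ 2 := by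
  simp only [cubicPoly, cubicForm, Prod.map_fst, Prod.map_snd, mul_one, derivative_add,
    derivative_mul, derivative_C, derivative_pow, derivative_X, C_mul, C_sub, C_neg, map_ofNat,
    Nat.cast_ofNat]
  ring

lemma det_swap_ne_zero {R : Type*} [CommRing R] {u v : R × R}
    (huv : u.1 * v.2 - u.2 * v.1 ≠ 0) : v.1 * u.2 - v.2 * u.1 ≠ 0 := by
  contrapose! huv
  linear_combination -huv

lemma fst_eq_zero_of_natDegree_cubicPoly_eq_zero {F : Type*} [Field F] (h3 : (3 : F) ≠ 0)
    {c u v : F × F} (hc : c.1 ≠ 0) (huv : u.1 * v.2 - u.2 * v.1 ≠ 0)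
    (hdeg : (cubicPoly c u v).natDegree = 0) : u.1 = 0 := by
  by_contra hu
  have h := congrArg natDegree (three_mul_cubicPoly_sub c u v)
  have hk : -3 * c.1 * (u.1 * v.2 - u.2 * v.1) ≠ 0 :=
    mul_ne_zero (mul_ne_zero (neg_ne_zero.2 h3) hc) huv
  rw [derivative_of_natDegree_zero hdeg, mul_zero, sub_zero, natDegree_C_mul hk, natDegree_pow,
    natDegree_linear hu] at h
  have := natDegree_C_mul_le (3 * v.1) (cubicPoly c u v)
  omega

lemma natDegree_cubicPoly_pos {F : Type*} [Field F] (h3 : (3 : F) ≠ 0) {c u v : F × F}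
    (hc₁ : c.1 ≠ 0) (hc₂ : c.2 ≠ 0) (huv : u.1 * v.2 - u.2 * v.1 ≠ 0) :
    0 < (cubicPoly c u v).natDegree := by
  refine Nat.pos_of_ne_zero fun hdeg => huv ?_
  have hu := fst_eq_zero_of_natDegree_cubicPoly_eq_zero h3 hc₁ huv hdeg
  have hv := fst_eq_zero_of_natDegree_cubicPoly_eq_zero h3 (c := c.swap) hc₂
    (det_swap_ne_zero huv) (by rwa [cubicPoly_swap])
  rw [hu, hv]
  ring

lemma dvd_sq_of_dvd_cubicPoly {F : Type*} [Field F] (h3 : (3 : F) ≠ 0) {c u v : F × F}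
    (hc : c.1 ≠ 0) (huv : u.1 * v.2 - u.2 * v.1 ≠ 0) {g : F[X]} (hg : g ∣ cubicPoly c u v)
    (hg' : g ∣ derivative (cubicPoly c u v)) : g ∣ (C u.1 * X + C u.2) ^ 2 := by
  have hunit : IsUnit (C (-3 * c.1 * (u.1 * v.2 - u.2 * v.1)) : F[X]) :=
    isUnit_C.2 (mul_ne_zero (mul_ne_zero (neg_ne_zero.2 h3) hc) huv).isUnit
  rw [← hunit.dvd_mul_left, ← three_mul_cubicPoly_sub]
  exact dvd_sub (hg.mul_left _) (hg'.mul_left _)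

lemma isCoprime_linear {F : Type*} [Field F] {u v : F × F} (huv : u.1 * v.2 - u.2 * v.1 ≠ 0) :
    IsCoprime (C u.1 * X + C u.2) (C v.1 * X + C v.2) := by
  refine ⟨C (-(u.1 * v.2 - u.2 * v.1)⁻¹ * v.1), C ((u.1 * v.2 - u.2 * v.1)⁻¹ * u.1), ?_⟩
  rw [← C_1, ← inv_mul_cancel₀ huv]
  simp only [map_mul, map_neg, map_sub]
  ring

lemma squarefree_cubicPoly {F : Type*} [Field F] (h3 : (3 : F) ≠ 0) {c u v : F × F}
    (hc₁ : c.1 ≠ 0) (hc₂ : c.2 ≠ 0) (huv : u.1 * v.2 - u.2 * v.1 ≠ 0) :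
    Squarefree (cubicPoly c u v) := by
  rintro g ⟨h, hg⟩
  have hdvd : g ∣ cubicPoly c u v := ⟨g * h, by rw [hg, mul_assoc]⟩
  have hdvd' : g ∣ derivative (cubicPoly c u v) :=
    ⟨2 * derivative g * h + g * derivative h, by rw [hg]; simp only [derivative_mul]; ring⟩
  have hu := dvd_sq_of_dvd_cubicPoly h3 hc₁ huv hdvd hdvd'
  have hv := dvd_sq_of_dvd_cubicPoly h3 (c := c.swap) (g := g) hc₂ (det_swap_ne_zero huv)
    (by rwa [cubicPoly_swap]) (by rwa [cubicPoly_swap])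
  exact (isCoprime_linear huv).pow.isUnit_of_dvd' hu hv

variable {p : ℕ} [Fact p.Prime]

lemma three_ne_zero_of_three_lt (hp : 3 < p) : (3 : ZMod p) ≠ 0 := by
  exact_mod_cast natCast_ne_zero_of_pos_of_lt (p := p) three_pos hp

lemma abs_sum_quadraticChar_cubicForm_one_le (hp : 3 < p) {c u v : ZMod p × ZMod p}
    (hc₁ : c.1 ≠ 0) (hc₂ : c.2 ≠ 0) (huv : u.1 * v.2 - u.2 * v.1 ≠ 0) :
    |((∑ x : ZMod p, quadraticChar (ZMod p) (cubicForm c u v (x, 1)) : ℤ) : ℝ)| ≤ 20 * √p := by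
  have h3 := three_ne_zero_of_three_lt hp
  simpa only [eval_cubicPoly] using abs_sum_quadraticChar_eval_le hp
    (squarefree_cubicPoly h3 hc₁ hc₂ huv) (natDegree_cubicPoly_pos h3 hc₁ hc₂ huv)
    (natDegree_cubicPoly_le c u v)

lemma quadraticChar_pow_three (a : ZMod p) :
    quadraticChar (ZMod p) (a ^ 3) = quadraticChar (ZMod p) a := by
  rcases eq_or_ne a 0 with rfl | h
  · simp
  · rw [map_pow, pow_succ, quadraticChar_sq_one h, one_mul]

lemma quadraticChar_cubicForm_smul (c u v z : ZMod p × ZMod p) (l : ZMod p) :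
    quadraticChar (ZMod p) (cubicForm c u v (l • z)) =
      quadraticChar (ZMod p) l * quadraticChar (ZMod p) (cubicForm c u v z) := by
  rw [cubicForm_smul, map_mul, quadraticChar_pow_three]

lemma sum_quadraticChar_cubicForm_of_ne_zero (c u v : ZMod p × ZMod p) {t : ZMod p}
    (ht : t ≠ 0) :
    ∑ s : ZMod p, quadraticChar (ZMod p) (cubicForm c u v (s, t)) =
      quadraticChar (ZMod p) t *
        ∑ x : ZMod p, quadraticChar (ZMod p) (cubicForm c u v (x, 1)) := by
  rw [Finset.mul_sum, ← Equiv.sum_comp (Equiv.mulLeft₀ t ht)]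
  refine Finset.sum_congr rfl fun x _ => ?_
  rw [← quadraticChar_cubicForm_smul]
  simp

lemma sum_ite_eq_zero_const {M : Type*} [CommRing M] (a : M) :
    ∑ t : ZMod p, (if t = 0 then 0 else a) = (p - 1) * a := by
  have hsplit := Finset.add_sum_erase Finset.univ (fun t : ZMod p => if t = 0 then 0 else a)
    (Finset.mem_univ 0)
  rw [← hsplit, Finset.sum_congr rfl fun t ht => if_neg (Finset.ne_of_mem_erase ht)]
  simp [ZMod.card, (Fact.out : p.Prime).one_le]

lemma sum_quadraticChar_cubicForm_mul_snd (c u v : ZMod p × ZMod p) :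
    ∑ z : ZMod p × ZMod p, quadraticChar (ZMod p) (cubicForm c u v z * z.2) =
      (p - 1) * ∑ x : ZMod p, quadraticChar (ZMod p) (cubicForm c u v (x, 1)) := by
  rw [Fintype.sum_prod_type_right, ← sum_ite_eq_zero_const]
  refine Finset.sum_congr rfl fun t _ => ?_
  split_ifs with ht
  · simp [ht]
  · simp only [map_mul]
    rw [← Finset.sum_mul, sum_quadraticChar_cubicForm_of_ne_zero c u v ht, mul_right_comm, ← sq,
      quadraticChar_sq_one ht, one_mul]

/-- The coordinates `(g · z, h · z)` on the plane, for `g` and `h` of determinant `1`. -/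
def dotEquiv {R : Type*} [CommRing R] (g h : R × R) (hgh : g.1 * h.2 - g.2 * h.1 = 1) :
    R × R ≃ R × R where
  toFun z := (g.1 * z.1 + g.2 * z.2, h.1 * z.1 + h.2 * z.2)
  invFun w := (h.2 * w.1 - g.2 * w.2, g.1 * w.2 - h.1 * w.1)
  left_inv z := Prod.ext (by linear_combination z.1 * hgh) (by linear_combination z.2 * hgh)
  right_inv w := Prod.ext (by linear_combination w.1 * hgh) (by linear_combination w.2 * hgh)

lemma exists_det_eq_one {F : Type*} [Field F] {h : F × F} (hh : h ≠ 0) :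
    ∃ g : F × F, g.1 * h.2 - g.2 * h.1 = 1 := by
  rcases eq_or_ne h.2 0 with h2 | h2
  · have h1 : h.1 ≠ 0 := fun h1 => hh (Prod.ext h1 h2)
    exact ⟨(0, -h.1⁻¹), by simp [h1]⟩
  · exact ⟨(h.2⁻¹, 0), by simp [h2]⟩

lemma abs_sum_quadraticChar_cubicForm_mul_dot_le (hp : 3 < p) {c u v : ZMod p × ZMod p}
    (hc₁ : c.1 ≠ 0) (hc₂ : c.2 ≠ 0) (huv : u.1 * v.2 - u.2 * v.1 ≠ 0) (h : ZMod p × ZMod p) :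
    |((∑ z : ZMod p × ZMod p, quadraticChar (ZMod p)
      (cubicForm c u v z * (h.1 * z.1 + h.2 * z.2)) : ℤ) : ℝ)| ≤ (p - 1) * (20 * √p) := by
  have hp1 : (0 : ℝ) ≤ (p : ℝ) - 1 := by
    rw [sub_nonneg]; exact_mod_cast (Fact.out : p.Prime).one_le
  rcases eq_or_ne h 0 with rfl | hh
  · simpa using mul_nonneg hp1 (by positivity)
  obtain ⟨g, hgh⟩ := exists_det_eq_one hh
  let coord : ZMod p × ZMod p → ZMod p × ZMod p := fun w =>
    (w.1 * h.2 - w.2 * h.1, w.2 * g.1 - w.1 * g.2)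
  have hdet : (coord u).1 * (coord v).2 - (coord u).2 * (coord v).1 ≠ 0 := by
    convert huv using 1
    simp only [coord]
    linear_combination (u.1 * v.2 - u.2 * v.1) * hgh
  have hcoord : ∀ w, cubicForm c u v ((dotEquiv g h hgh).symm w) *
      (h.1 * ((dotEquiv g h hgh).symm w).1 + h.2 * ((dotEquiv g h hgh).symm w).2) =
        cubicForm c (coord u) (coord v) w * w.2 := fun w => by
    rw [show h.1 * ((dotEquiv g h hgh).symm w).1 + h.2 * ((dotEquiv g h hgh).symm w).2 = w.2 from
      congrArg Prod.snd ((dotEquiv g h hgh).apply_symm_apply w)]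
    simp only [dotEquiv, Equiv.coe_fn_symm_mk, cubicForm, coord]
    ring
  rw [← Equiv.sum_comp (dotEquiv g h hgh).symm]
  simp only [hcoord]
  rw [sum_quadraticChar_cubicForm_mul_snd]
  push_cast
  rw [abs_mul, abs_of_nonneg hp1]
  exact mul_le_mul_of_nonneg_left
    (by exact_mod_cast abs_sum_quadraticChar_cubicForm_one_le hp hc₁ hc₂ hdet) hp1

end CubicForm

section Fourier

variable {G : Type*} [AddCommGroup G] [Fintype G]

lemma sum_addChar_mul_conj [DecidableEq G] (a b : G) :
    ∑ ψ : AddChar G ℂ, ψ a * starRingEnd ℂ (ψ b) = if a = b then (Fintype.card G : ℂ) else 0 := by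
  simp_rw [← AddChar.map_neg_eq_conj, ← AddChar.map_add_eq_mul, AddChar.sum_apply_eq_ite,
    ← sub_eq_add_neg, sub_eq_zero]

lemma apply_sub_mul_card (K : G → ℂ) (a b : G) :
    K (a - b) * Fintype.card G =
      ∑ ψ : AddChar G ℂ, (∑ z, K z * ψ⁻¹ z) * (ψ a * starRingEnd ℂ (ψ b)) := by
  classical
  have hψ : ∀ (ψ : AddChar G ℂ) (z : G), K z * ψ⁻¹ z * (ψ a * starRingEnd ℂ (ψ b)) =
      K z * (ψ (a - b) * starRingEnd ℂ (ψ z)) := fun ψ z => by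
    rw [AddChar.inv_apply, ← AddChar.map_neg_eq_conj, ← AddChar.map_neg_eq_conj, sub_eq_add_neg,
      AddChar.map_add_eq_mul]
    ring
  simp_rw [Finset.sum_mul, hψ]
  rw [Finset.sum_comm]
  simp_rw [← Finset.mul_sum, sum_addChar_mul_conj]
  simp

lemma sum_norm_sq_sum_addChar [DecidableEq G] {ι : Type*} (s : Finset ι) (π : ι → G) :
    ∑ ψ : AddChar G ℂ, ‖∑ x ∈ s, ψ (π x)‖ ^ 2 =
      ((s ×ˢ s).filter fun z => π z.1 = π z.2).card * Fintype.card G := by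
  have hsq : ∀ ψ : AddChar G ℂ, ((‖∑ x ∈ s, ψ (π x)‖ ^ 2 : ℝ) : ℂ) =
      ∑ z ∈ s ×ˢ s, ψ (π z.1) * starRingEnd ℂ (ψ (π z.2)) := fun ψ => by
    rw [Complex.ofReal_pow, ← Complex.mul_conj', map_sum, Finset.sum_mul_sum,
      ← Finset.sum_product']
  rw [← Complex.ofReal_inj, Complex.ofReal_sum]
  simp_rw [hsq]
  rw [Finset.sum_comm]
  simp_rw [sum_addChar_mul_conj]
  rw [← Finset.sum_filter]
  simp

theorem norm_sum_sum_apply_sub_le [DecidableEq G] {K : G → ℂ} {M : ℝ}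
    (hM : ∀ ψ : AddChar G ℂ, ‖∑ z, K z * ψ z‖ ≤ M) {ι : Type*} (s : Finset ι) (π : ι → G) :
    ‖∑ x ∈ s, ∑ y ∈ s, K (π x - π y)‖ ≤
      M * ((s ×ˢ s).filter fun z => π z.1 = π z.2).card := by
  have hcard : (0 : ℝ) < Fintype.card G := by exact_mod_cast Fintype.card_pos
  have hsum : (∑ x ∈ s, ∑ y ∈ s, K (π x - π y)) * Fintype.card G =
      ∑ ψ : AddChar G ℂ, (∑ z, K z * ψ⁻¹ z) *
        ((∑ x ∈ s, ψ (π x)) * starRingEnd ℂ (∑ x ∈ s, ψ (π x))) := by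
    simp_rw [Finset.sum_mul (s := s), apply_sub_mul_card]
    rw [Finset.sum_congr rfl fun x _ => Finset.sum_comm, Finset.sum_comm]
    refine Finset.sum_congr rfl fun ψ _ => ?_
    rw [map_sum, Finset.mul_sum s]
    refine Finset.sum_congr rfl fun x _ => ?_
    rw [Finset.mul_sum s, Finset.mul_sum s]
  refine le_of_mul_le_mul_right ?_ hcard
  calc ‖∑ x ∈ s, ∑ y ∈ s, K (π x - π y)‖ * Fintype.card G
    _ = ‖(∑ x ∈ s, ∑ y ∈ s, K (π x - π y)) * Fintype.card G‖ := by
        rw [norm_mul, Complex.norm_natCast]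
    _ ≤ ∑ ψ : AddChar G ℂ, M * ‖∑ x ∈ s, ψ (π x)‖ ^ 2 := by
      rw [hsum]
      refine (norm_sum_le _ _).trans (Finset.sum_le_sum fun ψ _ => ?_)
      rw [norm_mul, Complex.mul_conj', norm_pow, Complex.norm_real, norm_norm]
      gcongr
      exact hM ψ⁻¹
    _ = M * ((s ×ˢ s).filter fun z => π z.1 = π z.2).card * Fintype.card G := by
      rw [← Finset.mul_sum, sum_norm_sq_sum_addChar, mul_assoc]

lemma norm_sum_mul_mul_addChar_le {G₁ G₂ : Type*} [AddCommGroup G₁] [AddCommGroup G₂]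
    [Fintype G₁] [Fintype G₂] (e : G ≃+ G₁ × G₂) {K₁ : G₁ → ℂ} {K₂ : G₂ → ℂ} {M₁ M₂ : ℝ}
    (h₁ : ∀ ψ : AddChar G₁ ℂ, ‖∑ z, K₁ z * ψ z‖ ≤ M₁)
    (h₂ : ∀ ψ : AddChar G₂ ℂ, ‖∑ z, K₂ z * ψ z‖ ≤ M₂) (ψ : AddChar G ℂ) :
    ‖∑ z, K₁ (e z).1 * K₂ (e z).2 * ψ z‖ ≤ M₁ * M₂ := by
  let ψ₁ := ψ.compAddMonoidHom (e.symm.toAddMonoidHom.comp (AddMonoidHom.inl G₁ G₂))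
  let ψ₂ := ψ.compAddMonoidHom (e.symm.toAddMonoidHom.comp (AddMonoidHom.inr G₁ G₂))
  have hψ : ∀ w : G₁ × G₂, ψ (e.symm w) = ψ₁ w.1 * ψ₂ w.2 := fun w => by
    simp [ψ₁, ψ₂, ← AddChar.map_add_eq_mul, ← map_add]
  have hfac : ∑ z, K₁ (e z).1 * K₂ (e z).2 * ψ z =
      (∑ w, K₁ w * ψ₁ w) * ∑ w, K₂ w * ψ₂ w := by
    rw [Fintype.sum_mul_sum, ← Fintype.sum_prod_type']
    refine Fintype.sum_equiv e.toEquiv _ _ fun z => ?_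
    rw [AddEquiv.toEquiv_eq_coe, AddEquiv.coe_toEquiv, ← e.symm_apply_apply z, hψ,
      e.apply_symm_apply]
    ring
  rw [hfac, norm_mul]
  exact mul_le_mul (h₁ ψ₁) (h₂ ψ₂) (norm_nonneg _) ((norm_nonneg _).trans (h₁ ψ₁))

variable {p : ℕ} [Fact p.Prime]

lemma exists_addChar_apply_eq (ψ : AddChar (ZMod p × ZMod p) ℂ) :
    ∃ h : ZMod p × ZMod p, ∀ z, ψ z = ZMod.stdAddChar (h.1 * z.1 + h.2 * z.2) := by
  have hstd : ∀ φ : AddChar (ZMod p) ℂ, ∃ a, ∀ t, φ t = ZMod.stdAddChar (a * t) := fun φ => by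
    have hinj : Function.Injective fun a : ZMod p => (ZMod.stdAddChar (N := p)).mulShift a :=
      AddChar.to_mulShift_inj_of_isPrimitive (ZMod.isPrimitive_stdAddChar p)
    obtain ⟨a, ha⟩ := ((Fintype.bijective_iff_injective_and_card _).2
      ⟨hinj, AddChar.card_eq.symm⟩).surjective φ
    exact ⟨a, fun t => by rw [← ha, AddChar.mulShift_apply]⟩
  obtain ⟨a, ha⟩ := hstd (ψ.compAddMonoidHom (AddMonoidHom.inl _ _))
  obtain ⟨b, hb⟩ := hstd (ψ.compAddMonoidHom (AddMonoidHom.inr _ _))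
  refine ⟨(a, b), fun z => ?_⟩
  rw [AddChar.map_add_eq_mul, ← ha, ← hb]
  simp [← AddChar.map_add_eq_mul]

/-- The quadratic character modulo `p` with complex values. -/
noncomputable def complexQuadraticChar (p : ℕ) [Fact p.Prime] : MulChar (ZMod p) ℂ :=
  (quadraticChar (ZMod p)).ringHomComp (Int.castRingHom ℂ)

lemma complexQuadraticChar_apply (a : ZMod p) :
    complexQuadraticChar p a = (quadraticChar (ZMod p) a : ℂ) := rfl

lemma isQuadratic_complexQuadraticChar : (complexQuadraticChar p).IsQuadratic :=
  (quadraticChar_isQuadratic (ZMod p)).comp _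

lemma complexQuadraticChar_ne_one (hp2 : p ≠ 2) : complexQuadraticChar p ≠ 1 :=
  (MulChar.ringHomComp_ne_one_iff (Int.cast_injective)).2
    (quadraticChar_ne_one (by rwa [ZMod.ringChar_zmod_n]))

lemma norm_gaussSum_complexQuadraticChar (hp2 : p ≠ 2) :
    ‖gaussSum (complexQuadraticChar p) ZMod.stdAddChar‖ = √p := by
  have hsq := congrArg norm (gaussSum_sq (χ := complexQuadraticChar p)
    (complexQuadraticChar_ne_one hp2)
    isQuadratic_complexQuadraticChar (ZMod.isPrimitive_stdAddChar p))
  have hneg : ‖complexQuadraticChar p (-1)‖ = 1 := by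
    rcases quadraticChar_dichotomy (neg_ne_zero.2 (one_ne_zero (α := ZMod p))) with h | h <;>
      simp [complexQuadraticChar_apply, h]
  rw [norm_pow, norm_mul, hneg, one_mul, ZMod.card, Complex.norm_natCast] at hsq
  rw [← hsq, Real.sqrt_sq (norm_nonneg _)]

lemma sum_complexQuadraticChar_mul_stdAddChar (hp2 : p ≠ 2) (b : ZMod p) :
    ∑ l : ZMod p, complexQuadraticChar p l * ZMod.stdAddChar (b * l) =
      complexQuadraticChar p b * gaussSum (complexQuadraticChar p) ZMod.stdAddChar := by
  rcases eq_or_ne b 0 with rfl | hb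
  · simpa [complexQuadraticChar_apply] using
      MulChar.sum_eq_zero_of_ne_one (complexQuadraticChar_ne_one hp2)
  · have h := gaussSum_mulShift_eq (complexQuadraticChar p) ZMod.stdAddChar (Units.mk0 b hb)
    rwa [isQuadratic_complexQuadraticChar.inv] at h

/-- Rescaling `z` by `l` multiplies the summand by `χ(l)`, so averaging over `l` replaces the
additive character by a Gauss sum times the quadratic character of a linear form. -/
lemma sub_one_mul_sum_cubicForm_mul_stdAddChar (hp2 : p ≠ 2) (c u v h : ZMod p × ZMod p) :
    ((p : ℂ) - 1) * ∑ z : ZMod p × ZMod p, complexQuadraticChar p (cubicForm c u v z) *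
      ZMod.stdAddChar (h.1 * z.1 + h.2 * z.2) =
      gaussSum (complexQuadraticChar p) ZMod.stdAddChar *
        ((∑ z : ZMod p × ZMod p, quadraticChar (ZMod p)
          (cubicForm c u v z * (h.1 * z.1 + h.2 * z.2)) : ℤ) : ℂ) := by
  set χ := complexQuadraticChar p with hχ
  have hscale : ∀ l : ZMod p, χ l * ∑ z : ZMod p × ZMod p, χ (cubicForm c u v z) *
      ZMod.stdAddChar ((h.1 * z.1 + h.2 * z.2) * l) =
      if l = 0 then 0 else ∑ z : ZMod p × ZMod p, χ (cubicForm c u v z) *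
        ZMod.stdAddChar (h.1 * z.1 + h.2 * z.2) := fun l => by
    split_ifs with hl
    · rw [hl, MulChar.map_zero, zero_mul]
    · rw [Finset.mul_sum]
      refine Fintype.sum_equiv ((Equiv.mulLeft₀ l hl).prodCongr (Equiv.mulLeft₀ l hl)) _ _
        fun z => ?_
      change _ = χ (cubicForm c u v (l • z)) * ZMod.stdAddChar (h.1 * (l * z.1) + h.2 * (l * z.2))
      rw [hχ, complexQuadraticChar_apply, complexQuadraticChar_apply, complexQuadraticChar_apply,
        quadraticChar_cubicForm_smul, Int.cast_mul, mul_assoc]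
      congr 3
      ring
  rw [← sum_ite_eq_zero_const, ← Finset.sum_congr rfl fun l _ => hscale l]
  simp_rw [Finset.mul_sum]
  rw [Finset.sum_comm, Int.cast_sum, Finset.mul_sum]
  refine Finset.sum_congr rfl fun z _ => ?_
  rw [Finset.sum_congr rfl fun l _ => mul_left_comm (χ l) _ _, ← Finset.mul_sum,
    sum_complexQuadraticChar_mul_stdAddChar hp2, map_mul, Int.cast_mul,
    ← complexQuadraticChar_apply, ← complexQuadraticChar_apply]
  ring

theorem norm_sum_cubicForm_mul_addChar_le (hp : 3 < p) {c u v : ZMod p × ZMod p}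
    (hc₁ : c.1 ≠ 0) (hc₂ : c.2 ≠ 0) (huv : u.1 * v.2 - u.2 * v.1 ≠ 0)
    (ψ : AddChar (ZMod p × ZMod p) ℂ) :
    ‖∑ z : ZMod p × ZMod p, (quadraticChar (ZMod p) (cubicForm c u v z) : ℂ) * ψ z‖ ≤ 20 * p := by
  obtain ⟨h, hψ⟩ := exists_addChar_apply_eq ψ
  have hp1 : (0 : ℝ) < (p : ℝ) - 1 := by
    rw [sub_pos]; exact_mod_cast (Fact.out : p.Prime).one_lt
  have hnorm : ‖(p : ℂ) - 1‖ = (p : ℝ) - 1 := by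
    rw [← Complex.ofReal_natCast, ← Complex.ofReal_one, ← Complex.ofReal_sub, Complex.norm_real,
      Real.norm_of_nonneg hp1.le]
  have hsum := congrArg norm (sub_one_mul_sum_cubicForm_mul_stdAddChar (by omega) c u v h)
  rw [norm_mul, norm_mul, hnorm, norm_gaussSum_complexQuadraticChar (by omega),
    Complex.norm_intCast] at hsum
  simp only [hψ]
  refine le_of_mul_le_mul_left (hsum.trans_le ?_) hp1
  calc √p * |((∑ z : ZMod p × ZMod p, quadraticChar (ZMod p)
        (cubicForm c u v z * (h.1 * z.1 + h.2 * z.2)) : ℤ) : ℝ)|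
      ≤ √p * ((p - 1) * (20 * √p)) := by
        gcongr
        exact abs_sum_quadraticChar_cubicForm_mul_dot_le hp hc₁ hc₂ huv h
    _ = ((p : ℝ) - 1) * (20 * p) := by
        linear_combination (20 * ((p : ℝ) - 1)) * Real.mul_self_sqrt (Nat.cast_nonneg (α := ℝ) p)

lemma norm_sum_cubicForm_line_le (hp : 3 < p) {c u v : ZMod p × ZMod p} (hc₁ : c.1 ≠ 0)
    (hc₂ : c.2 ≠ 0) (huv : u.1 * v.2 - u.2 * v.1 ≠ 0) (t : ZMod p) :
    ‖∑ s : ZMod p, (quadraticChar (ZMod p) (cubicForm c u v (s, t)) : ℂ)‖ ≤ 20 * √p := by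
  rw [← Int.cast_sum, Complex.norm_intCast]
  rcases eq_or_ne t 0 with rfl | ht
  · have hs : ∀ s, quadraticChar (ZMod p) (cubicForm c u v (s, 0)) =
        quadraticChar (ZMod p) s * quadraticChar (ZMod p) (cubicForm c u v (1, 0)) := fun s => by
      rw [← quadraticChar_cubicForm_smul]
      simp
    rw [Finset.sum_congr rfl fun s _ => hs s, ← Finset.sum_mul,
      quadraticChar_sum_zero (by rw [ZMod.ringChar_zmod_n]; omega)]
    simp
  · rw [sum_quadraticChar_cubicForm_of_ne_zero c u v ht, Int.cast_mul, abs_mul]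
    have hχ : |((quadraticChar (ZMod p) t : ℤ) : ℝ)| ≤ 1 := by
      exact_mod_cast abs_quadraticChar_le_one t
    exact (mul_le_of_le_one_left (abs_nonneg _) hχ).trans
      (abs_sum_quadraticChar_cubicForm_one_le hp hc₁ hc₂ huv)

end Fourier

/-! ### Character sums over boxes -/

section Box

/-- The integer points of the box `[0, L₁) × [0, L₂)`. -/
noncomputable def box (L₁ L₂ : ℕ) : Finset (ℤ × ℤ) := Finset.Ico (0 : ℤ) L₁ ×ˢ Finset.Ico (0 : ℤ) L₂

/-- Reduction of integer vectors modulo `m`. -/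
def reduceMod (m : ℕ) : ℤ × ℤ →+* ZMod m × ZMod m :=
  (Int.castRingHom (ZMod m)).prodMap (Int.castRingHom (ZMod m))

lemma reduceMod_apply (m : ℕ) (x : ℤ × ℤ) : reduceMod m x = ((x.1 : ZMod m), (x.2 : ZMod m)) := rfl

lemma card_box (L₁ L₂ : ℕ) : (box L₁ L₂).card = L₁ * L₂ := by simp [box]

variable {m : ℕ} [NeZero m]

lemma card_Ico_filter_intCast_eq (a : ℤ) (L : ℕ) (z : ZMod m) :
    ∃ v : ℤ, (((Finset.Ico a (a + L)).filter fun i : ℤ => (i : ZMod m) = z).card : ℤ) =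
      ⌈((a - v : ℤ) : ℚ) / m + (L : ℚ) / m⌉ - ⌈((a - v : ℤ) : ℚ) / m⌉ := by
  obtain ⟨v, rfl⟩ := ZMod.intCast_surjective z
  have hm : (0 : ℤ) < m := by exact_mod_cast NeZero.pos m
  have hmono : ⌈((a - v : ℤ) : ℚ) / m⌉ ≤ ⌈((a - v : ℤ) : ℚ) / m + (L : ℚ) / m⌉ :=
    Int.ceil_mono (le_add_of_nonneg_right (by positivity))
  refine ⟨v, ?_⟩
  simp_rw [ZMod.intCast_eq_intCast_iff]
  rw [Int.Ico_filter_modEq_card _ _ hm]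
  have hsplit : (((a + L : ℤ) : ℚ) - v) / (m : ℤ) = ((a - v : ℤ) : ℚ) / m + (L : ℚ) / m := by
    push_cast; ring
  rw [hsplit, ← Int.cast_sub, Int.cast_natCast, max_eq_left (sub_nonneg.2 hmono)]

lemma card_Ico_mul_filter_intCast_eq (a : ℤ) (n : ℕ) (z : ZMod m) :
    ((Finset.Ico a (a + (n * m : ℕ))).filter fun i : ℤ => (i : ZMod m) = z).card = n := by
  obtain ⟨v, hv⟩ := card_Ico_filter_intCast_eq a (n * m) z
  have hnm : ((n * m : ℕ) : ℚ) / m = n := by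
    rw [Nat.cast_mul, mul_div_cancel_right₀ _ (NeZero.ne _)]
  rw [hnm, Int.ceil_add_natCast] at hv
  omega

lemma card_Ico_filter_intCast_eq_le (a : ℤ) (L : ℕ) (z : ZMod m) :
    (((Finset.Ico a (a + L)).filter fun i : ℤ => (i : ZMod m) = z).card : ℝ) ≤ L / m + 1 := by
  obtain ⟨v, hv⟩ := card_Ico_filter_intCast_eq a L z
  have h : (((Finset.Ico a (a + L)).filter fun i : ℤ => (i : ZMod m) = z).card : ℚ) ≤
      L / m + 1 := by
    have hv' := congrArg (Int.cast (R := ℚ)) hv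
    push_cast at hv'
    have h₁ := Int.ceil_lt_add_one (((a - v : ℤ) : ℚ) / m + (L : ℚ) / m)
    have h₂ := Int.le_ceil (((a - v : ℤ) : ℚ) / m)
    push_cast at h₁ h₂
    linarith
  simpa using (Rat.cast_le (K := ℝ)).2 h

lemma sum_Ico_mul_intCast (n : ℕ) (f : ZMod m → ℂ) :
    ∑ i ∈ Finset.Ico (0 : ℤ) (n * m : ℕ), f i = n * ∑ z, f z := by
  rw [← Finset.sum_fiberwise _ (fun i : ℤ => (i : ZMod m)), Finset.mul_sum]
  refine Finset.sum_congr rfl fun z _ => ?_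
  rw [Finset.sum_congr rfl fun i hi => congrArg f (Finset.mem_filter.1 hi).2, Finset.sum_const,
    nsmul_eq_mul]
  have h := card_Ico_mul_filter_intCast_eq 0 n z
  rw [zero_add] at h
  rw [h]

variable {K : ZMod m × ZMod m → ℂ} {E M : ℝ}

lemma norm_sum_Ico_mul_product_le (hE : ∀ t, ‖∑ s, K (s, t)‖ ≤ E) (n : ℕ) (I : Finset ℤ)
    (w : ZMod m × ZMod m) :
    ‖∑ x ∈ Finset.Ico (0 : ℤ) (n * m : ℕ) ×ˢ I, K (reduceMod m x - w)‖ ≤ I.card * (n * E) := by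
  rw [Finset.sum_product_right, ← nsmul_eq_mul]
  refine (norm_sum_le _ _).trans (Finset.sum_le_card_nsmul _ _ _ fun y _ => ?_)
  have hsum : ∑ i ∈ Finset.Ico (0 : ℤ) (n * m : ℕ), K (reduceMod m (i, y) - w) =
      n * ∑ s, K (s, y - w.2) := by
    rw [← Equiv.sum_comp (Equiv.subRight w.1)]
    exact sum_Ico_mul_intCast n fun z => K (z - w.1, y - w.2)
  rw [hsum, norm_mul, Complex.norm_natCast]
  gcongr
  exact hE _

lemma norm_sum_Ico_mul_product_sub_le (hE : ∀ t, ‖∑ s, K (s, t)‖ ≤ E) (n : ℕ) (I : Finset ℤ)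
    (w : ZMod m × ZMod m) :
    ‖∑ x ∈ Finset.Ico (0 : ℤ) (n * m : ℕ) ×ˢ I, K (w - reduceMod m x)‖ ≤ I.card * (n * E) := by
  have hE' : ∀ t, ‖∑ s, K (-(s, t))‖ ≤ E := fun t => by
    have h := Equiv.sum_comp (Equiv.neg (ZMod m)) fun s => K (s, -t)
    exact (congrArg norm h).trans_le (hE (-t))
  simpa only [neg_sub] using norm_sum_Ico_mul_product_le (K := fun z => K (-z)) hE' n I w

lemma card_filter_reduceMod_eq_le (L₁ L₂ : ℕ) :
    ((((Finset.Ico ((L₁ / m * m : ℕ) : ℤ) L₁ ×ˢ Finset.Ico (0 : ℤ) L₂) ×ˢ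
      (Finset.Ico ((L₁ / m * m : ℕ) : ℤ) L₁ ×ˢ Finset.Ico (0 : ℤ) L₂)).filter
        fun z => reduceMod m z.1 = reduceMod m z.2).card : ℝ) ≤ L₁ * L₂ * (L₂ / m + 1) := by
  have htail : ((L₁ / m * m : ℕ) : ℤ) ≤ L₁ ∧ (L₁ : ℤ) < (L₁ / m * m : ℕ) + m := by
    have := Nat.div_add_mod' L₁ m
    have := Nat.mod_lt L₁ (NeZero.pos m)
    omega
  set I := Finset.Ico ((L₁ / m * m : ℕ) : ℤ) L₁
  set R := I ×ˢ Finset.Ico (0 : ℤ) L₂ with hR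
  have hfiber : ∀ x ∈ R, ((R.filter fun y => reduceMod m x = reduceMod m y).card : ℝ) ≤
      L₂ / m + 1 := fun x _ => by
    have h := card_Ico_filter_intCast_eq_le 0 L₂ (x.2 : ZMod m)
    rw [zero_add] at h
    refine le_trans (Nat.cast_le.2 ?_) h
    refine Finset.card_le_card_of_injOn Prod.snd (fun y hy => ?_) fun y hy y' hy' hyy' => ?_
    · simp_all [reduceMod_apply, Prod.ext_iff]
    · simp only [Finset.coe_filter, Set.mem_ofPred_eq, reduceMod_apply, Prod.ext_iff] at hy hy'
      have hdvd : (m : ℤ) ∣ y.1 - y'.1 := by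
        rw [← ZMod.intCast_zmod_eq_zero_iff_dvd, Int.cast_sub, ← hy.2.1, hy'.2.1, sub_self]
      have hI := Finset.mem_Ico.1 (Finset.mem_product.1 hy.1).1
      have hI' := Finset.mem_Ico.1 (Finset.mem_product.1 hy'.1).1
      have := Int.eq_zero_of_abs_lt_dvd hdvd (abs_lt.2 ⟨by omega, by omega⟩)
      exact Prod.ext (by omega) hyy'
  have hcard : (R.card : ℝ) ≤ L₁ * L₂ := by
    rw [hR, Finset.card_product, Int.card_Ico, Int.card_Ico, ← Nat.cast_mul, Nat.cast_le, sub_zero,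
      Int.toNat_natCast]
    gcongr
    omega
  rw [Finset.card_filter, Finset.sum_product]
  simp_rw [← Finset.card_filter]
  rw [Nat.cast_sum]
  refine (Finset.sum_le_card_nsmul _ _ _ hfiber).trans ?_
  rw [nsmul_eq_mul]
  gcongr

/-- The part of the box made of complete residue systems in the first coordinate is handled by
summing along lines; only the remaining strip, whose points are almost incongruent, needs the
Fourier bound. -/
theorem norm_sum_box_sub_le (hM : ∀ ψ : AddChar (ZMod m × ZMod m) ℂ, ‖∑ z, K z * ψ z‖ ≤ M)
    (hE : ∀ t, ‖∑ s, K (s, t)‖ ≤ E) (L₁ L₂ : ℕ) :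
    ‖∑ x ∈ box L₁ L₂, ∑ y ∈ box L₁ L₂, K (reduceMod m (x - y))‖ ≤
      2 * (L₁ * L₂ * (L₂ * (L₁ / m * E))) + M * (L₁ * L₂ * (L₂ / m + 1)) := by
  have hE₀ : 0 ≤ E := (norm_nonneg _).trans (hE 0)
  have hM₀ : 0 ≤ M := (norm_nonneg _).trans (hM 0)
  set n := L₁ / m
  set A := Finset.Ico (0 : ℤ) (n * m : ℕ) ×ˢ Finset.Ico (0 : ℤ) L₂ with hA
  set R := Finset.Ico ((n * m : ℕ) : ℤ) L₁ ×ˢ Finset.Ico (0 : ℤ) L₂ with hR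
  have hnm : n * m ≤ L₁ := Nat.div_mul_le_self L₁ m
  have hbox : box L₁ L₂ = A ∪ R := by
    rw [hA, hR, ← Finset.union_product, Finset.Ico_union_Ico_eq_Ico (by omega) (by omega), box]
  have hdisj : Disjoint A R :=
    Finset.disjoint_product.2 (.inl (Finset.Ico_disjoint_Ico_consecutive _ _ _))
  have hcard : ((box L₁ L₂).card : ℝ) = L₁ * L₂ := by rw [card_box, Nat.cast_mul]
  have hline : ((Finset.Ico (0 : ℤ) L₂).card : ℝ) * (n * E) ≤ L₂ * (L₁ / m * E) := by
    rw [Int.card_Ico, sub_zero, Int.toNat_natCast]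
    gcongr
    exact Nat.cast_div_le
  have hleft : ‖∑ y ∈ box L₁ L₂, ∑ x ∈ A, K (reduceMod m x - reduceMod m y)‖ ≤
      L₁ * L₂ * (L₂ * (L₁ / m * E)) := by
    rw [← hcard, ← nsmul_eq_mul]
    exact (norm_sum_le _ _).trans (Finset.sum_le_card_nsmul _ _ _ fun y _ =>
      (norm_sum_Ico_mul_product_le hE n _ _).trans hline)
  have hright : ‖∑ x ∈ R, ∑ y ∈ A, K (reduceMod m x - reduceMod m y)‖ ≤
      L₁ * L₂ * (L₂ * (L₁ / m * E)) := by
    refine (norm_sum_le _ _).trans ((Finset.sum_le_card_nsmul _ _ _ fun y _ =>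
      (norm_sum_Ico_mul_product_sub_le hE n _ _).trans hline).trans ?_)
    rw [nsmul_eq_mul, ← hcard, hbox]
    gcongr
    exact Finset.subset_union_right
  have htail : ‖∑ x ∈ R, ∑ y ∈ R, K (reduceMod m x - reduceMod m y)‖ ≤
      M * (L₁ * L₂ * (L₂ / m + 1)) :=
    (norm_sum_sum_apply_sub_le hM R (reduceMod m)).trans
      (mul_le_mul_of_nonneg_left (card_filter_reduceMod_eq_le L₁ L₂) hM₀)
  rw [Finset.sum_comm] at hleft
  have hsplit : ∑ x ∈ box L₁ L₂, ∑ y ∈ box L₁ L₂, K (reduceMod m (x - y)) =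
      ∑ x ∈ A, ∑ y ∈ box L₁ L₂, K (reduceMod m x - reduceMod m y) +
        (∑ x ∈ R, ∑ y ∈ A, K (reduceMod m x - reduceMod m y) +
          ∑ x ∈ R, ∑ y ∈ R, K (reduceMod m x - reduceMod m y)) := by
    simp_rw [map_sub, hbox, Finset.sum_union hdisj, Finset.sum_add_distrib]
  rw [hsplit, two_mul, add_assoc]
  exact norm_add_le_of_le hleft (norm_add_le_of_le hright htail)

end Box

section ChineseRemainder

open NumberTheorySymbols

variable {p q : ℕ}

/-- The Chinese remainder isomorphism applied to both coordinates. -/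
def chineseRemainderPair (h : p.Coprime q) :
    ZMod (p * q) × ZMod (p * q) ≃+ (ZMod p × ZMod p) × (ZMod q × ZMod q) :=
  ((ZMod.chineseRemainder h).toAddEquiv.prodCongr (ZMod.chineseRemainder h).toAddEquiv).trans
    (AddEquiv.prodProdProdComm _ _ _ _)

lemma chineseRemainderPair_reduceMod (h : p.Coprime q) (x : ℤ × ℤ) :
    chineseRemainderPair h (reduceMod (p * q) x) = (reduceMod p x, reduceMod q x) := by
  have hcast : ∀ n : ℤ, ZMod.chineseRemainder h n = ((n : ZMod p), (n : ZMod q)) :=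
    map_intCast _
  change (((ZMod.chineseRemainder h x.1).1, (ZMod.chineseRemainder h x.2).1),
    ((ZMod.chineseRemainder h x.1).2, (ZMod.chineseRemainder h x.2).2)) = _
  rw [hcast, hcast]
  rfl

lemma norm_sum_chineseRemainderPair_line_le [NeZero p] [NeZero q] (h : p.Coprime q)
    {K₁ : ZMod p × ZMod p → ℂ} {K₂ : ZMod q × ZMod q → ℂ} {E₁ E₂ : ℝ}
    (h₁ : ∀ t, ‖∑ s, K₁ (s, t)‖ ≤ E₁) (h₂ : ∀ t, ‖∑ s, K₂ (s, t)‖ ≤ E₂) (t : ZMod (p * q)) :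
    ‖∑ s, K₁ (chineseRemainderPair h (s, t)).1 * K₂ (chineseRemainderPair h (s, t)).2‖ ≤
      E₁ * E₂ := by
  have hfac : ∑ s, K₁ (chineseRemainderPair h (s, t)).1 * K₂ (chineseRemainderPair h (s, t)).2 =
      (∑ s, K₁ (s, (ZMod.chineseRemainder h t).1)) *
        ∑ s, K₂ (s, (ZMod.chineseRemainder h t).2) := by
    rw [Fintype.sum_mul_sum, ← Fintype.sum_prod_type']
    exact Fintype.sum_equiv (ZMod.chineseRemainder h).toEquiv _ _ fun s => rfl
  rw [hfac, norm_mul]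
  exact mul_le_mul (h₁ _) (h₂ _) (norm_nonneg _) ((norm_nonneg _).trans (h₁ 0))

lemma jacobiSym_eq_quadraticChar [Fact p.Prime] (n : ℤ) :
    J(n | p) = quadraticChar (ZMod p) (n : ZMod p) := by
  rw [← jacobiSym.legendreSym.to_jacobiSym, legendreSym]

lemma jacobiSym_cubicForm [Fact p.Prime] (c u v x : ℤ × ℤ) :
    J(cubicForm c u v x | p) = quadraticChar (ZMod p)
      (cubicForm (reduceMod p c) (reduceMod p u) (reduceMod p v) (reduceMod p x)) := by
  rw [jacobiSym_eq_quadraticChar]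
  exact congrArg _ (map_cubicForm (Int.castRingHom (ZMod p)) c u v x)

lemma reduceMod_ne_zero_of_not_dvd [Fact p.Prime] {c u v : ℤ × ℤ}
    (h : ¬(p : ℤ) ∣ c.1 * c.2 * (u.1 * v.2 - u.2 * v.1)) :
    (reduceMod p c).1 ≠ 0 ∧ (reduceMod p c).2 ≠ 0 ∧
      (reduceMod p u).1 * (reduceMod p v).2 - (reduceMod p u).2 * (reduceMod p v).1 ≠ 0 := by
  rw [← ZMod.intCast_zmod_eq_zero_iff_dvd] at h
  push_cast at h
  simp only [mul_eq_zero, not_or] at h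
  exact ⟨h.1.1, h.1.2, h.2⟩

theorem abs_sum_jacobiSym_mul_jacobiSym_le (hp : p.Prime) (hq : q.Prime) (hpq : p ≠ q)
    (hp₃ : 3 < p) (hq₃ : 3 < q) {c u v : ℤ × ℤ}
    (hpc : ¬(p : ℤ) ∣ c.1 * c.2 * (u.1 * v.2 - u.2 * v.1))
    (hqc : ¬(q : ℤ) ∣ c.1 * c.2 * (u.1 * v.2 - u.2 * v.1)) (L₁ L₂ : ℕ) :
    |((∑ x ∈ box L₁ L₂, ∑ y ∈ box L₁ L₂,
      J(cubicForm c u v (x - y) | p) * J(cubicForm c u v (x - y) | q) : ℤ) : ℝ)| ≤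
      400 * (L₁ * L₂) * (2 * (L₁ * L₂) / √(p * q) + p * q + L₂) := by
  have : Fact p.Prime := ⟨hp⟩
  have : Fact q.Prime := ⟨hq⟩
  have hcop : p.Coprime q := (Nat.coprime_primes hp hq).2 hpq
  obtain ⟨hp₁, hp₂, hpd⟩ := reduceMod_ne_zero_of_not_dvd hpc
  obtain ⟨hq₁, hq₂, hqd⟩ := reduceMod_ne_zero_of_not_dvd hqc
  let K (m : ℕ) [Fact m.Prime] (z : ZMod m × ZMod m) : ℂ :=
    quadraticChar (ZMod m) (cubicForm (reduceMod m c) (reduceMod m u) (reduceMod m v) z)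
  have h := norm_sum_box_sub_le
    (K := fun z => K p (chineseRemainderPair hcop z).1 * K q (chineseRemainderPair hcop z).2)
    (norm_sum_mul_mul_addChar_le (chineseRemainderPair hcop)
      (norm_sum_cubicForm_mul_addChar_le hp₃ hp₁ hp₂ hpd)
      (norm_sum_cubicForm_mul_addChar_le hq₃ hq₁ hq₂ hqd))
    (norm_sum_chineseRemainderPair_line_le hcop
      (norm_sum_cubicForm_line_le hp₃ hp₁ hp₂ hpd)
      (norm_sum_cubicForm_line_le hq₃ hq₁ hq₂ hqd)) L₁ L₂
  simp only [K, chineseRemainderPair_reduceMod, ← jacobiSym_cubicForm] at h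
  rw [← Complex.norm_intCast]
  push_cast
  refine h.trans_eq ?_
  have hp₀ : 0 < √(p : ℝ) := Real.sqrt_pos.2 (by exact_mod_cast hp.pos)
  have hq₀ : 0 < √(q : ℝ) := Real.sqrt_pos.2 (by exact_mod_cast hq.pos)
  rw [Real.sqrt_mul (Nat.cast_nonneg p), Nat.cast_mul]
  have hpp := Real.mul_self_sqrt (Nat.cast_nonneg (α := ℝ) p)
  have hqq := Real.mul_self_sqrt (Nat.cast_nonneg (α := ℝ) q)
  generalize √(p : ℝ) = a at *
  generalize √(q : ℝ) = b at *
  rw [← hpp, ← hqq]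
  field_simp
  ring

end ChineseRemainder

/-! ### The square sieve -/

section SquareSieve

open NumberTheorySymbols

lemma mul_le_card_filter_sub_eq {S T : ℕ} {z : ℤ × ℤ} (hz₁ : |z.1| ≤ S) (hz₂ : |z.2| ≤ T) :
    S * T ≤ ((box (2 * S) (2 * T) ×ˢ box (2 * S) (2 * T)).filter fun w => w.1 - w.2 = z).card := by
  rw [← card_box]
  refine Finset.card_le_card_of_injOn
    (fun i => ((i.1 + max z.1 0, i.2 + max z.2 0), (i.1 + max (-z.1) 0, i.2 + max (-z.2) 0)))
    (fun i hi => ?_) fun i _ j _ hij => ?_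
  · simp only [box, Finset.coe_product, Finset.coe_Ico, Set.mem_prod, Set.mem_Ico] at hi
    simp only [box, Finset.coe_filter, Finset.mem_product, Finset.mem_Ico, Set.mem_ofPred_eq,
      Prod.ext_iff, Prod.fst_sub, Prod.snd_sub]
    rw [abs_le] at hz₁ hz₂
    push_cast
    omega
  · simp only [Prod.mk.injEq] at hij
    exact Prod.ext (by omega) (by omega)

lemma card_mul_le_sum_box_sub {S T : ℕ} {Z : Finset (ℤ × ℤ)}
    (hZ : ∀ z ∈ Z, |z.1| ≤ S ∧ |z.2| ≤ T) {Φ : ℤ × ℤ → ℝ} (hΦ : ∀ z, 0 ≤ Φ z) {κ : ℝ}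
    (hκ : ∀ z ∈ Z, κ ≤ Φ z) :
    Z.card * (S * T * κ) ≤
      ∑ x ∈ box (2 * S) (2 * T), ∑ y ∈ box (2 * S) (2 * T), Φ (x - y) := by
  set W := box (2 * S) (2 * T) ×ˢ box (2 * S) (2 * T)
  have hfiber : ∀ z ∈ Z, S * T * κ ≤ ∑ w ∈ W with w.1 - w.2 = z, Φ (w.1 - w.2) := fun z hz => by
    rw [Finset.sum_congr rfl fun w hw => congrArg Φ (Finset.mem_filter.1 hw).2, Finset.sum_const,
      nsmul_eq_mul]
    have hcard : (S * T : ℝ) ≤ (W.filter fun w => w.1 - w.2 = z).card := by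
      exact_mod_cast mul_le_card_filter_sub_eq (hZ z hz).1 (hZ z hz).2
    have := hΦ z
    calc S * T * κ ≤ S * T * Φ z := by gcongr; exact hκ z hz
      _ ≤ _ := by gcongr
  calc Z.card * (S * T * κ) ≤ ∑ z ∈ Z, ∑ w ∈ W with w.1 - w.2 = z, Φ (w.1 - w.2) := by
        rw [← nsmul_eq_mul]
        exact Finset.card_nsmul_le_sum _ _ _ hfiber
    _ = ∑ w ∈ W with w.1 - w.2 ∈ Z, Φ (w.1 - w.2) := Finset.sum_fiberwise_eq_sum_filter ..
    _ ≤ ∑ w ∈ W, Φ (w.1 - w.2) :=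
        Finset.sum_le_sum_of_subset_of_nonneg (Finset.filter_subset _ _) fun _ _ _ => hΦ _
    _ = _ := Finset.sum_product' _ _ fun x y => Φ (x - y)

lemma abs_jacobiSym_le_one (n : ℤ) {p : ℕ} (hp : p.Prime) : |J(n | p)| ≤ 1 := by
  have : Fact p.Prime := ⟨hp⟩
  rw [jacobiSym_eq_quadraticChar]
  exact abs_quadraticChar_le_one _

lemma sum_box_jacobiSym_mul_self_le {p : ℕ} (hp : p.Prime) (g : ℤ × ℤ → ℤ) (L₁ L₂ : ℕ) :
    ((∑ x ∈ box L₁ L₂, ∑ y ∈ box L₁ L₂, J(g (x - y) | p) * J(g (x - y) | p) : ℤ) : ℝ) ≤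
      ((L₁ * L₂ : ℝ)) ^ 2 := by
  have h : ∑ x ∈ box L₁ L₂, ∑ y ∈ box L₁ L₂, J(g (x - y) | p) * J(g (x - y) | p) ≤
      ((box L₁ L₂).card : ℤ) * (box L₁ L₂).card := by
    rw [← nsmul_eq_mul]
    refine Finset.sum_le_card_nsmul _ _ _ fun x _ => ?_
    rw [← mul_one ((box L₁ L₂).card : ℤ), ← nsmul_eq_mul]
    refine Finset.sum_le_card_nsmul _ _ _ fun y _ => ?_
    rw [← abs_mul_abs_self]
    exact mul_le_one₀ (abs_jacobiSym_le_one _ hp) (abs_nonneg _) (abs_jacobiSym_le_one _ hp)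
  rw [card_box] at h
  exact_mod_cast h.trans_eq (by push_cast; ring)

lemma sum_box_sub_sq_sum (Q : Finset ℕ) (g : ℤ × ℤ → ℤ) (L₁ L₂ : ℕ) :
    ∑ x ∈ box L₁ L₂, ∑ y ∈ box L₁ L₂, ((∑ p ∈ Q, J(g (x - y) | p) : ℤ) : ℝ) ^ 2 =
      ∑ p ∈ Q, ∑ q ∈ Q,
        ((∑ x ∈ box L₁ L₂, ∑ y ∈ box L₁ L₂, J(g (x - y) | p) * J(g (x - y) | q) : ℤ) : ℝ) := by
  push_cast
  simp_rw [sq, Finset.sum_mul_sum]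
  rw [Finset.sum_congr rfl fun x _ => Finset.sum_comm, Finset.sum_comm]
  refine Finset.sum_congr rfl fun p _ => ?_
  rw [Finset.sum_congr rfl fun x _ => Finset.sum_comm, Finset.sum_comm]

variable {c u v : ℤ × ℤ} {S T : ℕ} {P₀ P : ℝ} {Q : Finset ℕ}

lemma sum_box_sub_sq_sum_jacobiSym_le (hP₀ : 0 < P₀)
    (hQ : ∀ p ∈ Q, p.Prime ∧ 3 < p ∧ P₀ ≤ p ∧ p ≤ P ∧
      ¬(p : ℤ) ∣ c.1 * c.2 * (u.1 * v.2 - u.2 * v.1)) (L₁ L₂ : ℕ) :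
    ∑ x ∈ box L₁ L₂, ∑ y ∈ box L₁ L₂,
      ((∑ p ∈ Q, J(cubicForm c u v (x - y) | p) : ℤ) : ℝ) ^ 2 ≤
      Q.card * (L₁ * L₂) ^ 2 +
        Q.card ^ 2 * (400 * (L₁ * L₂) * (2 * (L₁ * L₂) / P₀ + P ^ 2 + L₂)) := by
  set D : ℝ := 400 * (L₁ * L₂) * (2 * (L₁ * L₂) / P₀ + P ^ 2 + L₂) with hD
  have hD₀ : 0 ≤ D := by positivity
  have hpair : ∀ p ∈ Q, ∀ q ∈ Q, ((∑ x ∈ box L₁ L₂, ∑ y ∈ box L₁ L₂,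
      J(cubicForm c u v (x - y) | p) * J(cubicForm c u v (x - y) | q) : ℤ) : ℝ) ≤
      (if p = q then (L₁ * L₂ : ℝ) ^ 2 else 0) + D := fun p hp q hq => by
    obtain ⟨hp', hp₃, hpP₀, hpP, hpc⟩ := hQ p hp
    obtain ⟨hq', hq₃, hqP₀, hqP, hqc⟩ := hQ q hq
    split_ifs with hpq
    · subst hpq
      exact (sum_box_jacobiSym_mul_self_le hp' _ L₁ L₂).trans (le_add_of_nonneg_right hD₀)
    · rw [zero_add, hD, sq P]
      refine ((le_abs_self _).trans
        (abs_sum_jacobiSym_mul_jacobiSym_le hp' hq' hpq hp₃ hq₃ hpc hqc L₁ L₂)).trans ?_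
      have hsqrt : P₀ ≤ √(p * q) := Real.le_sqrt_of_sq_le (by rw [sq]; gcongr)
      have : 0 ≤ P := hP₀.le.trans (hpP₀.trans hpP)
      gcongr
  rw [sum_box_sub_sq_sum]
  refine (Finset.sum_le_sum fun p hp => Finset.sum_le_sum fun q hq =>
    hpair p hp q hq).trans_eq ?_
  simp_rw [Finset.sum_add_distrib, Finset.sum_ite_eq, Finset.sum_const, nsmul_eq_mul]
  rw [Finset.sum_congr rfl fun p hp => if_pos hp, Finset.sum_const, nsmul_eq_mul]
  ring

/-- Heath-Brown's square sieve, with the sum over `z` smoothed by counting representations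
`z = x - y` in a box twice as large. -/
theorem card_le_of_le_sum_jacobiSym (hS : 0 < S) (hT : 0 < T) (hP₀ : 0 < P₀) (hQne : Q.Nonempty)
    (hQ : ∀ p ∈ Q, p.Prime ∧ 3 < p ∧ P₀ ≤ p ∧ p ≤ P ∧
      ¬(p : ℤ) ∣ c.1 * c.2 * (u.1 * v.2 - u.2 * v.1))
    {Z : Finset (ℤ × ℤ)} (hZ : ∀ z ∈ Z, |z.1| ≤ S ∧ |z.2| ≤ T)
    (hZQ : ∀ z ∈ Z, (Q.card : ℤ) ≤ 2 * ∑ p ∈ Q, J(cubicForm c u v z | p)) :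
    (Z.card : ℝ) ≤ 64 * (S * T) / Q.card + 6400 * (8 * (S * T) / P₀ + P ^ 2 + 2 * T) := by
  have hlow := card_mul_le_sum_box_sub hZ
    (Φ := fun z => ((∑ p ∈ Q, J(cubicForm c u v z | p) : ℤ) : ℝ) ^ 2) (fun z => sq_nonneg _)
    (κ := (Q.card / 2 : ℝ) ^ 2) fun z hz => by
      have h : (Q.card : ℝ) ≤ 2 * ((∑ p ∈ Q, J(cubicForm c u v z | p) : ℤ) : ℝ) := by
        exact_mod_cast hZQ z hz
      gcongr
      linarith
  have h := hlow.trans (sum_box_sub_sq_sum_jacobiSym_le hP₀ hQ (2 * S) (2 * T))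
  have : (0 : ℝ) < Q.card := by exact_mod_cast hQne.card_pos
  have : (0 : ℝ) < S := by exact_mod_cast hS
  have : (0 : ℝ) < T := by exact_mod_cast hT
  refine le_of_mul_le_mul_right (h.trans_eq ?_) (by positivity : 0 < S * T * (Q.card / 2 : ℝ) ^ 2)
  push_cast
  field_simp
  ring

end SquareSieve

section SquareValues

open NumberTheorySymbols

lemma card_le_two_mul_of_primes_dvd {n : ℤ} (hn : n ≠ 0) {l : ℝ} (hl : |(n : ℝ)| ≤ Real.exp l)
    {R : Finset ℕ} (hR : ∀ p ∈ R, p.Prime ∧ (p : ℤ) ∣ n) : (R.card : ℝ) ≤ 2 * l := by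
  have hdvd : ∏ p ∈ R, p ∣ n.natAbs := Finset.prod_primes_dvd _ (fun p hp => (hR p hp).1.prime)
    fun p hp => Int.natCast_dvd.1 (hR p hp).2
  have hpow : 2 ^ R.card ≤ n.natAbs :=
    (Finset.pow_card_le_prod _ _ _ fun p hp => (hR p hp).1.two_le).trans
      (Nat.le_of_dvd (Int.natAbs_pos.2 hn) hdvd)
  have hexp : (2 : ℝ) ^ R.card ≤ Real.exp l := by
    refine le_trans ?_ hl
    rw [← Int.cast_abs, ← Nat.cast_natAbs]
    exact_mod_cast hpow
  have hlog := Real.log_le_log (by positivity) hexp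
  rw [Real.log_exp, Real.log_pow] at hlog
  nlinarith [Real.log_two_gt_d9, Nat.cast_nonneg (α := ℝ) R.card]

lemma jacobiSym_sq (m : ℤ) {p : ℕ} (hp : p.Prime) :
    J(m ^ 2 | p) = if (p : ℤ) ∣ m ^ 2 then 0 else 1 := by
  have : Fact p.Prime := ⟨hp⟩
  simp_rw [jacobiSym_eq_quadraticChar, ← ZMod.intCast_zmod_eq_zero_iff_dvd]
  split_ifs with h
  · rw [h, MulChar.map_zero]
  · push_cast at h ⊢
    rw [map_pow, quadraticChar_sq_one fun h' => h (by rw [h', zero_pow two_ne_zero])]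

lemma card_le_two_mul_sum_jacobiSym {Q : Finset ℕ} (hQ : ∀ p ∈ Q, p.Prime) {l : ℝ}
    (hlQ : 4 * l ≤ Q.card) {n : ℤ} (hn : n ≠ 0) (hnl : |(n : ℝ)| ≤ Real.exp l)
    (hsq : IsSquare n) : (Q.card : ℤ) ≤ 2 * ∑ p ∈ Q, J(n | p) := by
  have hcard : ((Q.filter fun p : ℕ => (p : ℤ) ∣ n).card : ℝ) ≤ 2 * l :=
    card_le_two_mul_of_primes_dvd hn hnl fun p hp =>
      ⟨hQ p (Finset.mem_filter.1 hp).1, (Finset.mem_filter.1 hp).2⟩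
  have hsum : ∑ p ∈ Q, J(n | p) = (Q.card : ℤ) - (Q.filter fun p : ℕ => (p : ℤ) ∣ n).card := by
    obtain ⟨m, rfl⟩ := (isSquare_iff_exists_sq _).1 hsq
    rw [Finset.sum_congr rfl fun p hp => jacobiSym_sq m (hQ p hp), Finset.sum_ite,
      Finset.sum_const_zero, zero_add, Finset.sum_const, nsmul_one, eq_sub_iff_add_eq',
      ← Finset.card_filter_add_card_filter_not (s := Q) fun p : ℕ => (p : ℤ) ∣ m ^ 2, Nat.cast_add]
  have : 2 * (Q.filter fun p : ℕ => (p : ℤ) ∣ n).card ≤ Q.card := by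
    have : 2 * ((Q.filter fun p : ℕ => (p : ℤ) ∣ n).card : ℝ) ≤ Q.card := by linarith
    exact_mod_cast this
  omega

lemma div_three_le_log_mul_primeCounting {n : ℕ} (hn : 6 ≤ n) :
    (n : ℝ) / 3 ≤ Real.log n * n.primeCounting := by
  have hn' : (6 : ℝ) ≤ n := by exact_mod_cast hn
  have hpi := Chebyshev.pi_ge n
  rw [div_le_iff₀ (Real.log_pos (by linarith)), mul_comm] at hpi
  have hlog : Real.log (n + 1) ≤ n * 0.35 := by
    have h8 : Real.log 8 ≤ 2.0795 := by
      rw [show (8 : ℝ) = 2 ^ 3 by norm_num, Real.log_pow]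
      push_cast
      linarith [Real.log_two_lt_d9]
    have := Real.log_le_sub_one_of_pos (x := ((n : ℝ) + 1) / 8) (by positivity)
    rw [Real.log_div (by positivity) (by norm_num)] at this
    linarith
  have : (n : ℝ) * 0.6931471803 ≤ n * Real.log 2 := by gcongr; exact Real.log_two_gt_d9.le
  linarith

lemma exists_le_mul_primeCounting {l r : ℝ} (hl : 1 ≤ l) (hr : 1 ≤ r) (hrl : r ≤ Real.exp l) :
    ∃ P : ℕ, r ≤ P ∧ P ≤ 2002 * (l ^ 2 * r) ∧ (P : ℝ) ≤ 30 * l * P.primeCounting ∧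
      33 * l ≤ P.primeCounting := by
  have hl₂ : 1 ≤ l ^ 2 := one_le_pow₀ hl
  obtain ⟨P, hP⟩ : ∃ P : ℕ, P = ⌈r⌉₊ + 1000 * ⌈l ^ 2⌉₊ := ⟨_, rfl⟩
  have hP' : (P : ℝ) = ⌈r⌉₊ + 1000 * ⌈l ^ 2⌉₊ := by rw [hP]; push_cast; rfl
  have hr_le := Nat.le_ceil r
  have hl_le := Nat.le_ceil (l ^ 2)
  have hle_r := (Nat.ceil_lt_add_one (zero_le_one.trans hr)).le
  have hle_l := (Nat.ceil_lt_add_one (zero_le_one.trans hl₂)).le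
  have hlog : Real.log P ≤ 10 * l := by
    have hP_exp : (P : ℝ) ≤ 2 ^ 12 * Real.exp l := by
      nlinarith [Real.quadratic_le_exp_of_nonneg (zero_le_one.trans hl)]
    have h := Real.log_le_log (by linarith) hP_exp
    rw [Real.log_mul (by norm_num) (Real.exp_pos _).ne', Real.log_exp, Real.log_pow] at h
    push_cast at h
    linarith [Real.log_two_lt_d9]
  have hpi : (P : ℝ) ≤ 30 * l * P.primeCounting := by
    have h6 : 6 ≤ P := by
      have : (6 : ℝ) ≤ P := by linarith
      exact_mod_cast this
    have := div_three_le_log_mul_primeCounting h6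
    have : Real.log P * P.primeCounting ≤ 10 * l * P.primeCounting := by gcongr
    linarith
  refine ⟨P, by linarith, by nlinarith, hpi, ?_⟩
  have : l * (1000 * l) ≤ l * (30 * P.primeCounting) := by nlinarith
  linarith [le_of_mul_le_mul_left this (by linarith)]

lemma exists_sieving_primes {l r : ℝ} (hl : 1 ≤ l) (hr : 1 ≤ r) (hrl : r ≤ Real.exp l) {n : ℤ}
    (hn : n ≠ 0) (hnl : |(n : ℝ)| ≤ Real.exp l) :
    ∃ Q : Finset ℕ, (∀ p ∈ Q, p.Prime ∧ 3 < p ∧ r / (120 * l) ≤ p ∧ p ≤ 2002 * (l ^ 2 * r) ∧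
      ¬(p : ℤ) ∣ n) ∧ 4 * l ≤ Q.card ∧ r / (60 * l) ≤ Q.card := by
  obtain ⟨P, hrP, hP, hPpi, hpi⟩ := exists_le_mul_primeCounting hl hr hrl
  set π := P.primeCounting with hπ
  set Q₀ := (Finset.range (P + 1)).filter Nat.Prime with hQ₀
  have hQ₀card : Q₀.card = π := by
    rw [hQ₀, hπ, Nat.primeCounting, Nat.primeCounting', Nat.count_eq_card_filter_range]
  set R := Q₀.filter fun p : ℕ => (p : ℤ) ∣ n with hR
  set Q := Q₀.filter fun p : ℕ => π < 4 * p ∧ ¬(p : ℤ) ∣ n with hQ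
  have hRcard : (R.card : ℝ) ≤ 2 * l := card_le_two_mul_of_primes_dvd hn hnl fun p hp => by
    simp only [hR, hQ₀, Finset.mem_filter] at hp
    exact ⟨hp.1.2, hp.2⟩
  have hcover : Q₀ ⊆ Q ∪ R ∪ Finset.Icc 1 (π / 4) := fun p hp => by
    have := (Finset.mem_filter.1 hp).2.one_le
    simp only [Finset.mem_union, hQ, hR, Finset.mem_filter, Finset.mem_Icc, hp, true_and]
    by_cases hpn : (p : ℤ) ∣ n
    · simp [hpn]
    · simp only [hpn, not_false_eq_true, and_true]
      omega
  have hcard : (π : ℝ) ≤ 2 * Q.card := by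
    have h := (Finset.card_le_card hcover).trans ((Finset.card_union_le _ _).trans
      (Nat.add_le_add_right (Finset.card_union_le Q R) _))
    rw [hQ₀card, Nat.card_Icc, Nat.add_sub_cancel] at h
    have h' : (π : ℝ) ≤ Q.card + R.card + (π / 4 : ℕ) := by exact_mod_cast h
    have : ((π / 4 : ℕ) : ℝ) ≤ π / 4 := Nat.cast_div_le
    linarith
  refine ⟨Q, fun p hp => ?_, by linarith, ?_⟩
  · simp only [hQ, hQ₀, Finset.mem_filter, Finset.mem_range] at hp
    obtain ⟨⟨hpP, hp'⟩, hpπ, hpn⟩ := hp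
    have hpπ' : (π : ℝ) ≤ 4 * p := by exact_mod_cast hpπ.le
    have hpP' : (p : ℝ) ≤ P := by exact_mod_cast Nat.le_of_lt_succ hpP
    have h3p : (3 : ℝ) < p := by linarith
    refine ⟨hp', by exact_mod_cast h3p, ?_, hpP'.trans hP, hpn⟩
    rw [div_le_iff₀ (by positivity)]
    nlinarith
  · rw [div_le_iff₀ (by positivity)]
    nlinarith

theorem card_cubicForm_isSquare_le {c u v : ℤ × ℤ} {S T : ℕ} (hT : 0 < T) (hTS : T ≤ S)
    {l r : ℝ} (hl : 1 ≤ l) (hr : 1 ≤ r) (hr₃ : r ^ 3 = S * T) (hrl : r ≤ Real.exp l)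
    (hD : c.1 * c.2 * (u.1 * v.2 - u.2 * v.1) ≠ 0)
    (hDl : |((c.1 * c.2 * (u.1 * v.2 - u.2 * v.1) : ℤ) : ℝ)| ≤ Real.exp l)
    {Z : Finset (ℤ × ℤ)} (hZ : ∀ z ∈ Z, |z.1| ≤ S ∧ |z.2| ≤ T)
    (hF : ∀ z ∈ Z, cubicForm c u v z ≠ 0 ∧ |((cubicForm c u v z : ℤ) : ℝ)| ≤ Real.exp l ∧
      IsSquare (cubicForm c u v z)) :
    (Z.card : ℝ) ≤ 3 * 10 ^ 10 * l ^ 4 * r ^ 2 := by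
  obtain ⟨Q, hQ, hlQ, hrQ⟩ := exists_sieving_primes hl hr hrl hD hDl
  have hQ₀ : (0 : ℝ) < Q.card := by linarith
  have hsieve := card_le_of_le_sum_jacobiSym (hT.trans_le hTS) hT (by positivity)
    (Finset.card_pos.1 (by exact_mod_cast hQ₀)) hQ hZ fun z hz =>
      card_le_two_mul_sum_jacobiSym (fun p hp => (hQ p hp).1) hlQ (hF z hz).1 (hF z hz).2.1
        (hF z hz).2.2
  have hdiag : 64 * (S * T) / (Q.card : ℝ) ≤ 3840 * (l * r ^ 2) := by
    rw [div_le_iff₀ (by positivity)] at hrQ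
    rw [div_le_iff₀ hQ₀, ← hr₃]
    nlinarith [sq_nonneg r]
  have hsmall : 8 * (S * T) / (r / (120 * l)) = 960 * (l * r ^ 2) := by
    rw [← hr₃]
    field_simp
    norm_num
  have hT_le : (T : ℝ) ≤ r ^ 2 := by
    have hTS' : (T : ℝ) ≤ S := by exact_mod_cast hTS
    refine le_of_sq_le_sq ?_ (by positivity)
    calc (T : ℝ) ^ 2 ≤ S * T := by rw [sq]; gcongr
      _ = r ^ 3 := hr₃.symm
      _ ≤ r ^ 4 := pow_le_pow_right₀ hr (by norm_num)
      _ = (r ^ 2) ^ 2 := by ring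
  have hl₁ : l * r ^ 2 ≤ l ^ 4 * r ^ 2 := by gcongr; exact le_self_pow₀ hl (by norm_num)
  have hl₀ : r ^ 2 ≤ l ^ 4 * r ^ 2 := le_mul_of_one_le_left (by positivity) (one_le_pow₀ hl)
  rw [hsmall] at hsieve
  nlinarith

end SquareValues

/-! ### Divisors and roots of unity -/

section Divisors

variable {ε : ℝ}

lemma natCast_add_one_le_mul_rpow (hε : 0 < ε) {x : ℝ} (hx : 2 ≤ x) (e : ℕ) :
    (e : ℝ) + 1 ≤ (1 + 1 / (ε * Real.log 2)) * (x ^ e) ^ ε := by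
  have : 0 < Real.log 2 := Real.log_pos one_lt_two
  have hexp : 1 + e * ε * Real.log 2 ≤ (x ^ e) ^ ε := calc
    1 + e * ε * Real.log 2 ≤ Real.exp (e * ε * Real.log 2) := by
      rw [add_comm]; exact Real.add_one_le_exp _
    _ = ((2 : ℝ) ^ e) ^ ε := by
      rw [← Real.rpow_natCast, ← Real.rpow_mul two_pos.le, Real.rpow_def_of_pos two_pos]
      congr 1; ring
    _ ≤ (x ^ e) ^ ε := by gcongr
  calc (e : ℝ) + 1 ≤ e + 1 + (1 / (ε * Real.log 2) + e * ε * Real.log 2) :=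
        le_add_of_nonneg_right (by positivity)
    _ = (1 + 1 / (ε * Real.log 2)) * (1 + e * ε * Real.log 2) := by field_simp; ring
    _ ≤ (1 + 1 / (ε * Real.log 2)) * (x ^ e) ^ ε := by gcongr

lemma natCast_add_one_le_rpow {x : ℝ} (hx : 0 ≤ x) (hxε : 2 ≤ x ^ ε) (e : ℕ) :
    (e : ℝ) + 1 ≤ (x ^ e) ^ ε := calc
  (e : ℝ) + 1 ≤ 2 ^ e := by exact_mod_cast Nat.lt_two_pow_self (n := e)
  _ ≤ (x ^ ε) ^ e := by gcongr
  _ = (x ^ e) ^ ε := by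
    rw [← Real.rpow_natCast, ← Real.rpow_natCast, ← Real.rpow_mul hx, ← Real.rpow_mul hx, mul_comm]

lemma exists_card_divisors_le_mul_rpow (hε : 0 < ε) :
    ∃ C : ℝ, 1 ≤ C ∧ ∀ n : ℕ, n ≠ 0 → (n.divisors.card : ℝ) ≤ C * (n : ℝ) ^ ε := by
  obtain ⟨K, hK⟩ := exists_nat_ge ((2 : ℝ) ^ (1 / ε))
  set A : ℝ := 1 + 1 / (ε * Real.log 2)
  have hA : 1 ≤ A := le_add_of_nonneg_right (by positivity)
  have hprime : ∀ p e : ℕ, p.Prime →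
      (e : ℝ) + 1 ≤ (if p < K then A else 1) * ((p : ℝ) ^ e) ^ ε := by
    intro p e hp
    split_ifs with hpK
    · exact natCast_add_one_le_mul_rpow hε (by exact_mod_cast hp.two_le) e
    · rw [one_mul]
      refine natCast_add_one_le_rpow p.cast_nonneg ?_ e
      calc (2 : ℝ) = ((2 : ℝ) ^ (1 / ε)) ^ ε := by
            rw [← Real.rpow_mul two_pos.le, one_div_mul_cancel hε.ne', Real.rpow_one]
        _ ≤ (p : ℝ) ^ ε := by
            gcongr
            exact hK.trans (by exact_mod_cast not_lt.1 hpK)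
  have hsmall : ∀ s : Finset ℕ, ∏ p ∈ s, (if p < K then A else 1) ≤ A ^ K := by
    intro s
    rw [Finset.prod_ite, Finset.prod_const, Finset.prod_const_one, mul_one]
    refine pow_le_pow_right₀ hA ?_
    have hsub : s.filter (· < K) ⊆ Finset.range K := fun p hp =>
      Finset.mem_range.2 (Finset.mem_filter.1 hp).2
    simpa using Finset.card_le_card hsub
  refine ⟨A ^ K, one_le_pow₀ hA, fun n hn => ?_⟩
  have hfactor : (n : ℝ) ^ ε = ∏ p ∈ n.primeFactors, ((p : ℝ) ^ n.factorization p) ^ ε := by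
    rw [Real.finsetProd_rpow _ _ fun _ _ => by positivity]
    congr 1
    exact_mod_cast (Nat.prod_factorization_pow_eq_self hn).symm
  rw [Nat.card_divisors hn, hfactor]
  push_cast
  calc ∏ p ∈ n.primeFactors, ((n.factorization p : ℝ) + 1)
      ≤ ∏ p ∈ n.primeFactors, (if p < K then A else 1) * ((p : ℝ) ^ n.factorization p) ^ ε :=
        Finset.prod_le_prod (fun _ _ => by positivity) fun p hp =>
          hprime p _ (Nat.prime_of_mem_primeFactors hp)
    _ ≤ A ^ K * ∏ p ∈ n.primeFactors, ((p : ℝ) ^ n.factorization p) ^ ε := by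
        rw [Finset.prod_mul_distrib]
        gcongr
        exact hsmall _

end Divisors

section RootsOfUnity

lemma card_rootsOfUnity_prod (R S : Type*) [CommMonoid R] [CommMonoid S] (m : ℕ) :
    Nat.card (rootsOfUnity m (R × S)) =
      Nat.card (rootsOfUnity m R) * Nat.card (rootsOfUnity m S) := by
  rw [← Nat.card_prod]
  refine Nat.card_congr
    ⟨fun t => (⟨(MulEquiv.prodUnits t.1).1, ?_⟩, ⟨(MulEquiv.prodUnits t.1).2, ?_⟩),
      fun t => ⟨MulEquiv.prodUnits.symm (t.1.1, t.2.1), ?_⟩, fun t => by simp, fun t => by simp⟩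
  · rw [mem_rootsOfUnity, ← Prod.pow_fst, ← map_pow, (mem_rootsOfUnity _ _).1 t.2]; simp
  · rw [mem_rootsOfUnity, ← Prod.pow_snd, ← map_pow, (mem_rootsOfUnity _ _).1 t.2]; simp
  · rw [mem_rootsOfUnity, ← map_pow, Prod.pow_mk, (mem_rootsOfUnity _ _).1 t.1.2,
      (mem_rootsOfUnity _ _).1 t.2.2]
    simp

lemma card_rootsOfUnity_zmod_mul (m : ℕ) {a b : ℕ} (hab : a.Coprime b) :
    Nat.card (rootsOfUnity m (ZMod (a * b))) =
      Nat.card (rootsOfUnity m (ZMod a)) * Nat.card (rootsOfUnity m (ZMod b)) := by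
  rw [← card_rootsOfUnity_prod]
  exact Nat.card_congr ((ZMod.chineseRemainder hab).toMulEquiv.restrictRootsOfUnity m).toEquiv

lemma card_rootsOfUnity_zmod_odd_prime_pow_le {m : ℕ} (hm : 0 < m) {p : ℕ} (hp : p.Prime)
    (hp₂ : p ≠ 2) (e : ℕ) : Nat.card (rootsOfUnity m (ZMod (p ^ e))) ≤ m := by
  have : NeZero (p ^ e) := ⟨pow_ne_zero e hp.ne_zero⟩
  have : IsCyclic (ZMod (p ^ e))ˣ := ZMod.isCyclic_units_of_prime_pow p hp hp₂ e
  have h := IsCyclic.card_pow_eq_one_le (α := (ZMod (p ^ e))ˣ) hm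
  rwa [← Nat.subtype_card (p := (· ∈ rootsOfUnity m (ZMod (p ^ e)))) _ fun t => by
    simp [mem_rootsOfUnity]] at h

lemma card_rootsOfUnity_zmod_prime_pow_le {m : ℕ} (hm : 0 < m) (hm₄ : m ≤ 4) {p e : ℕ}
    (hp : p.Prime) (he : 0 < e) (h16 : ¬16 ∣ p ^ e) :
    Nat.card (rootsOfUnity m (ZMod (p ^ e))) ≤ (e + 1) ^ 2 := by
  rcases eq_or_ne p 2 with rfl | hp₂
  · have he₃ : e ≤ 3 := by
      by_contra h
      exact h16 (pow_dvd_pow 2 (by omega : 4 ≤ e))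
    have h : Nat.card (rootsOfUnity m (ZMod (2 ^ e))) ≤ Nat.card (ZMod (2 ^ e))ˣ :=
      Subgroup.card_le_card_group _
    rw [Nat.card_eq_fintype_card (α := (ZMod (2 ^ e))ˣ), ZMod.card_units_eq_totient,
      Nat.totient_prime_pow hp he] at h
    refine h.trans ?_
    interval_cases e <;> simp
  · have := card_rootsOfUnity_zmod_odd_prime_pow_le hm hp hp₂ e
    nlinarith

lemma card_rootsOfUnity_zmod_le {m : ℕ} (hm : 0 < m) (hm₄ : m ≤ 4) {n : ℕ} (hn : n ≠ 0)
    (h16 : ¬16 ∣ n) : Nat.card (rootsOfUnity m (ZMod n)) ≤ n.divisors.card ^ 2 := by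
  induction n using Nat.recOnPosPrimePosCoprime with
  | zero => exact absurd rfl hn
  | one => simpa using Subgroup.card_le_card_group (rootsOfUnity m (ZMod 1))
  | prime_pow p e hp he =>
    rw [Nat.divisors_prime_pow hp, Finset.card_map, Finset.card_range]
    exact card_rootsOfUnity_zmod_prime_pow_le hm hm₄ hp he h16
  | coprime a b ha hb hab iha ihb =>
    rw [card_rootsOfUnity_zmod_mul m hab, Nat.Coprime.card_divisors_mul hab, mul_pow]
    exact Nat.mul_le_mul (iha (by omega) fun h => h16 (h.mul_right _))
      (ihb (by omega) fun h => h16 (h.mul_left _))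

lemma card_le_card_rootsOfUnity {R : Type*} [CommMonoid R] [Finite R] {m : ℕ} (hm : m ≠ 0) {c : R}
    (hc : IsUnit c) {s : Finset R} (hs : ∀ t ∈ s, t ^ m = c) :
    s.card ≤ Nat.card (rootsOfUnity m R) := by
  rcases s.eq_empty_or_nonempty with rfl | ⟨t₀, ht₀⟩
  · simp
  have : NeZero m := ⟨hm⟩
  obtain ⟨u, rfl⟩ : IsUnit t₀ := (isUnit_pow_iff hm).1 (hs t₀ ht₀ ▸ hc)
  have hroots : Nat.card (rootsOfUnity m R) = {z : R | z ^ m = 1}.ncard := by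
    rw [← Units.val_set_image_rootsOfUnity, Set.ncard_image_of_injective _ Units.val_injective]
    rfl
  rw [hroots, ← Set.ncard_coe_finset]
  refine Set.ncard_le_ncard_of_injOn (fun t => t * (u⁻¹ : Rˣ)) (fun t ht => ?_)
    (fun a _ b _ h => by simpa using h) (Set.toFinite _)
  rw [Set.mem_ofPred_eq, mul_pow, hs t ht, ← hs u ht₀, ← mul_pow, Units.mul_inv, one_pow]

end RootsOfUnity

/-! ### Square values on lattices -/

section Lattice

/-- The pair `e`, `f` is a basis of the lattice of all `z : ℤ × ℤ` with `z.1 ≡ ρ * z.2` modulo `D`;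
this is expressed by membership and by the covolume, which has to be `D`. -/
structure IsCongruenceBasis (D : ℕ) (ρ : ℤ) (e f : ℤ × ℤ) : Prop where
  abs_det : |e.1 * f.2 - f.1 * e.2| = D
  dvd_left : (D : ℤ) ∣ e.1 - ρ * e.2
  dvd_right : (D : ℤ) ∣ f.1 - ρ * f.2

namespace IsCongruenceBasis

variable {D : ℕ} {ρ : ℤ} {e f : ℤ × ℤ}

lemma standard (D : ℕ) (ρ : ℤ) : IsCongruenceBasis D ρ (D, 0) (ρ, 1) :=
  ⟨by simp, by simp, by simp⟩

lemma swap (h : IsCongruenceBasis D ρ e f) : IsCongruenceBasis D ρ f e :=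
  ⟨by rw [← h.abs_det, ← abs_neg, neg_sub, mul_comm e.1, mul_comm f.1],
    h.dvd_right, h.dvd_left⟩

lemma add_zsmul (h : IsCongruenceBasis D ρ e f) (n : ℤ) :
    IsCongruenceBasis D ρ e (f + n • e) := by
  refine ⟨?_, h.dvd_left, ?_⟩
  · rw [← h.abs_det]
    simp only [Prod.fst_add, Prod.snd_add, Prod.smul_fst, Prod.smul_snd, smul_eq_mul]
    congr 1; ring
  · have hsplit : (f + n • e).1 - ρ * (f + n • e).2 = f.1 - ρ * f.2 + n * (e.1 - ρ * e.2) := by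
      rw [Prod.fst_add, Prod.snd_add, Prod.smul_fst, Prod.smul_snd, smul_eq_mul, smul_eq_mul]
      ring
    exact hsplit ▸ dvd_add h.dvd_right (h.dvd_left.mul_left n)

lemma exists_eq_add (h : IsCongruenceBasis D ρ e f) (hD : 0 < D) {z : ℤ × ℤ}
    (hz : (D : ℤ) ∣ z.1 - ρ * z.2) : ∃ s t : ℤ, z = s • e + t • f := by
  have hdet : e.1 * f.2 - f.1 * e.2 ∣ (D : ℤ) := by rw [← h.abs_det]; exact (dvd_abs _ _).2 dvd_rfl
  have hdet₀ : e.1 * f.2 - f.1 * e.2 ≠ 0 := ne_zero_of_dvd_ne_zero (by exact_mod_cast hD.ne') hdet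
  obtain ⟨s, hs⟩ : e.1 * f.2 - f.1 * e.2 ∣ z.1 * f.2 - f.1 * z.2 := by
    refine hdet.trans ?_
    convert dvd_sub (hz.mul_right f.2) (h.dvd_right.mul_right z.2) using 1
    ring
  obtain ⟨t, ht⟩ : e.1 * f.2 - f.1 * e.2 ∣ e.1 * z.2 - z.1 * e.2 := by
    refine hdet.trans ?_
    convert dvd_sub (h.dvd_left.mul_right z.2) (hz.mul_right e.2) using 1
    ring
  refine ⟨s, t, Prod.ext (mul_left_cancel₀ hdet₀ ?_) (mul_left_cancel₀ hdet₀ ?_)⟩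
  · simp only [Prod.fst_add, Prod.smul_fst, smul_eq_mul]
    linear_combination e.1 * hs + f.1 * ht
  · simp only [Prod.snd_add, Prod.smul_snd, smul_eq_mul]
    linear_combination e.2 * hs + f.2 * ht

end IsCongruenceBasis

/-- The quadratic form `(V z₁)² + (U z₂)²`, for which the box `|z₁| ≤ U`, `|z₂| ≤ V` is round. -/
def boxNorm (U V : ℕ) (z : ℤ × ℤ) : ℕ := (V * z.1.natAbs) ^ 2 + (U * z.2.natAbs) ^ 2

section BoxNorm

variable {U V : ℕ}

lemma natCast_boxNorm (U V : ℕ) (z : ℤ × ℤ) :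
    (boxNorm U V z : ℤ) = (V * z.1) ^ 2 + (U * z.2) ^ 2 := by
  simp [boxNorm, mul_pow]

lemma boxNorm_pos (hU : 0 < U) (hV : 0 < V) {z : ℤ × ℤ} (hz : z ≠ 0) : 0 < boxNorm U V z := by
  rw [boxNorm]
  by_contra! h
  apply hz
  have h₁ : V * z.1.natAbs = 0 := by nlinarith
  have h₂ : U * z.2.natAbs = 0 := by nlinarith
  exact Prod.ext (by simpa [hV.ne'] using h₁) (by simpa [hU.ne'] using h₂)

lemma boxNorm_le {z : ℤ × ℤ} (hz₁ : |z.1| ≤ U) (hz₂ : |z.2| ≤ V) :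
    boxNorm U V z ≤ 2 * (U * V) ^ 2 := by
  have h₁ : z.1.natAbs ≤ U := by zify; exact hz₁
  have h₂ : z.2.natAbs ≤ V := by zify; exact hz₂
  calc boxNorm U V z ≤ (V * U) ^ 2 + (U * V) ^ 2 := by unfold boxNorm; gcongr
    _ = 2 * (U * V) ^ 2 := by ring

lemma sq_mul_det_le_boxNorm_mul_boxNorm (U V : ℕ) (e f : ℤ × ℤ) :
    (U * V * (e.1 * f.2 - f.1 * e.2)) ^ 2 ≤ (boxNorm U V e * boxNorm U V f : ℤ) := by
  rw [natCast_boxNorm, natCast_boxNorm]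
  linear_combination sq_nonneg ((V : ℤ) ^ 2 * (e.1 * f.1) + U ^ 2 * (e.2 * f.2))

lemma exists_reduced_congruenceBasis (D : ℕ) (ρ : ℤ) (U V : ℕ) :
    ∃ e f, IsCongruenceBasis D ρ e f ∧ boxNorm U V e ≤ boxNorm U V f ∧
      boxNorm U V f ≤ boxNorm U V (f + e) ∧ boxNorm U V f ≤ boxNorm U V (f - e) := by
  obtain ⟨⟨e, f⟩, hef, hmin⟩ := exists_minimalFor_of_wellFoundedLT
    (fun b : (ℤ × ℤ) × (ℤ × ℤ) => IsCongruenceBasis D ρ b.1 b.2)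
    (fun b => boxNorm U V b.1 + boxNorm U V b.2) ⟨(_, _), .standard D ρ⟩
  have hle : ∀ e' f', IsCongruenceBasis D ρ e' f' →
      boxNorm U V e + boxNorm U V f ≤ boxNorm U V e' + boxNorm U V f' := fun e' f' h' =>
    (le_total _ _).elim id (hmin (j := (e', f')) h')
  wlog h : boxNorm U V e ≤ boxNorm U V f generalizing e f
  · refine this f e hef.swap (fun b hb _ => ?_) (fun e' f' h' => ?_) (le_of_not_ge h)
    · simpa [add_comm] using hle _ _ hb
    · rw [add_comm]; exact hle e' f' h'
  have hadd := hle _ _ (hef.add_zsmul 1)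
  have hsub := hle _ _ (hef.add_zsmul (-1))
  rw [one_zsmul] at hadd
  rw [neg_one_zsmul, ← sub_eq_add_neg] at hsub
  exact ⟨e, f, hef, h, Nat.add_le_add_iff_left.1 hadd, Nat.add_le_add_iff_left.1 hsub⟩

lemma sq_mul_boxNorm_le_of_reduced {e f : ℤ × ℤ} (hef : boxNorm U V e ≤ boxNorm U V f)
    (hadd : boxNorm U V f ≤ boxNorm U V (f + e)) (hsub : boxNorm U V f ≤ boxNorm U V (f - e))
    (s t : ℤ) :
    s.natAbs ^ 2 * boxNorm U V e ≤ 2 * boxNorm U V (s • e + t • f) ∧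
      t.natAbs ^ 2 * boxNorm U V f ≤ 2 * boxNorm U V (s • e + t • f) := by
  zify at hef hadd hsub ⊢
  rw [sq_abs, sq_abs]
  set b : ℤ := V ^ 2 * (e.1 * f.1) + U ^ 2 * (e.2 * f.2) with hb
  have hexp : ∀ s t : ℤ, (boxNorm U V (s • e + t • f) : ℤ) =
      s ^ 2 * boxNorm U V e + 2 * (s * t) * b + t ^ 2 * boxNorm U V f := fun s t => by
    simp only [natCast_boxNorm, Prod.fst_add, Prod.snd_add, Prod.smul_fst, Prod.smul_snd,
      smul_eq_mul, hb]
    ring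
  have hadd' := hexp 1 1
  have hsub' := hexp (-1) 1
  rw [one_zsmul, one_zsmul, add_comm e f] at hadd'
  rw [neg_one_zsmul, one_zsmul, neg_add_eq_sub] at hsub'
  have hb_le : 2 * |b| ≤ boxNorm U V e := by
    rcases abs_cases b with ⟨h, -⟩ | ⟨h, -⟩ <;> linarith
  have hcross : -(4 * (s * t) * b) ≤ (s ^ 2 + t ^ 2) * boxNorm U V e := calc
    -(4 * (s * t) * b) ≤ |4 * (s * t) * b| := neg_le_abs _
    _ = (2 * |s| * |t|) * (2 * |b|) := by simp only [abs_mul]; norm_num; ring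
    _ ≤ (|s| ^ 2 + |t| ^ 2) * boxNorm U V e := by
      gcongr
      exact two_mul_le_add_sq _ _
    _ = _ := by rw [sq_abs, sq_abs]
  have ht := mul_le_mul_of_nonneg_left hef (sq_nonneg t)
  rw [hexp]
  constructor <;> nlinarith [mul_nonneg (sq_nonneg t) (Int.natCast_nonneg (boxNorm U V f)),
    mul_nonneg (sq_nonneg s) (Int.natCast_nonneg (boxNorm U V e))]

lemma natAbs_le_sqrt_of_sq_mul_le {s : ℤ} {q N : ℕ} (hq : 0 < q) (h : s.natAbs ^ 2 * q ≤ N) :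
    |s| ≤ (Nat.sqrt (N / q) : ℕ) := by
  rw [Int.abs_eq_natAbs]
  exact_mod_cast Nat.le_sqrt'.2 ((Nat.le_div_iff_mul_le hq).2 h)

lemma sq_sqrt_div_mul_le (N q : ℕ) : Nat.sqrt (N / q) ^ 2 * q ≤ N :=
  (Nat.mul_le_mul_right q (Nat.sqrt_le' _)).trans (Nat.div_mul_le_self N q)

lemma exists_congruenceBasis_coords_le {D : ℕ} (hD : 0 < D) (ρ : ℤ) (hU : 0 < U) (hV : 0 < V) :
    ∃ e f, IsCongruenceBasis D ρ e f ∧ ∃ S T : ℕ, T ≤ S ∧ S * T * D ≤ 4 * (U * V) ∧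
      ∀ z : ℤ × ℤ, (D : ℤ) ∣ z.1 - ρ * z.2 → |z.1| ≤ U → |z.2| ≤ V →
        ∃ s t : ℤ, z = s • e + t • f ∧ |s| ≤ S ∧ |t| ≤ T := by
  obtain ⟨e, f, hbasis, hef, hadd, hsub⟩ := exists_reduced_congruenceBasis D ρ U V
  have he : 0 < boxNorm U V e := boxNorm_pos hU hV fun he => by
    have := hbasis.abs_det
    simp only [he, Prod.fst_zero, Prod.snd_zero, zero_mul, mul_zero, sub_self, abs_zero] at this
    omega
  have hf : 0 < boxNorm U V f := he.trans_le hef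
  set N := 4 * (U * V) ^ 2 with hN
  refine ⟨e, f, hbasis, Nat.sqrt (N / boxNorm U V e), Nat.sqrt (N / boxNorm U V f),
    Nat.sqrt_le_sqrt (Nat.div_le_div_left hef he), ?_, fun z hz hz₁ hz₂ => ?_⟩
  · have hdet : (U * V * D) ^ 2 ≤ boxNorm U V e * boxNorm U V f := by
      zify
      rw [← hbasis.abs_det, mul_pow, sq_abs, ← mul_pow]
      exact sq_mul_det_le_boxNorm_mul_boxNorm U V e f
    set S := Nat.sqrt (N / boxNorm U V e)
    set T := Nat.sqrt (N / boxNorm U V f)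
    have hsq : (U * V) ^ 2 * (S * T * D) ^ 2 ≤ (U * V) ^ 2 * (4 * (U * V)) ^ 2 := calc
      (U * V) ^ 2 * (S * T * D) ^ 2 = S ^ 2 * T ^ 2 * (U * V * D) ^ 2 := by ring
      _ ≤ S ^ 2 * T ^ 2 * (boxNorm U V e * boxNorm U V f) := by gcongr
      _ = (S ^ 2 * boxNorm U V e) * (T ^ 2 * boxNorm U V f) := by ring
      _ ≤ N * N := Nat.mul_le_mul (sq_sqrt_div_mul_le _ _) (sq_sqrt_div_mul_le _ _)
      _ = (U * V) ^ 2 * (4 * (U * V)) ^ 2 := by rw [hN]; ring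
    exact (Nat.pow_le_pow_iff_left two_ne_zero).1 (Nat.le_of_mul_le_mul_left hsq (by positivity))
  · obtain ⟨s, t, rfl⟩ := hbasis.exists_eq_add hD hz
    have hnorm : 2 * boxNorm U V (s • e + t • f) ≤ N := by
      have := boxNorm_le hz₁ hz₂
      omega
    obtain ⟨hs, ht⟩ := sq_mul_boxNorm_le_of_reduced hef hadd hsub s t
    exact ⟨s, t, rfl, natAbs_le_sqrt_of_sq_mul_le he (hs.trans hnorm),
      natAbs_le_sqrt_of_sq_mul_le hf (ht.trans hnorm)⟩

end BoxNorm

end Lattice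

section SquareValuesOnLattice

lemma card_le_two_of_isCoprime_of_eq_zsmul {e : ℤ × ℤ} {Z : Finset (ℤ × ℤ)}
    (hZ : ∀ z ∈ Z, IsCoprime z.1 z.2 ∧ ∃ s : ℤ, z = s • e) : Z.card ≤ 2 := by
  refine (Finset.card_le_card (t := {e, -e}) fun z hz => ?_).trans Finset.card_le_two
  obtain ⟨hcop, s, rfl⟩ := hZ z hz
  have hs : IsUnit s := hcop.isUnit_of_dvd' (Dvd.intro _ rfl) (Dvd.intro _ rfl)
  rcases Int.isUnit_iff.1 hs with rfl | rfl <;> simp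

lemma sq_le_three_mul_rpow {r x : ℝ} (hx : 0 ≤ x) (hr : 0 ≤ r) (h : r ^ 3 ≤ 4 * x) :
    r ^ 2 ≤ 3 * x ^ ((2 : ℝ) / 3) := by
  have hcube : (x ^ ((2 : ℝ) / 3)) ^ 3 = x ^ 2 := by
    rw [← Real.rpow_natCast, ← Real.rpow_mul hx]
    norm_num
  refine (pow_le_pow_iff_left₀ (by positivity) (by positivity) three_ne_zero).1 ?_
  calc (r ^ 2) ^ 3 = (r ^ 3) ^ 2 := by ring
    _ ≤ (4 * x) ^ 2 := by gcongr
    _ ≤ (3 * x ^ ((2 : ℝ) / 3)) ^ 3 := by rw [mul_pow, mul_pow, hcube]; nlinarith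

lemma card_cubic_isSquare_le_of_coords {e f c : ℤ × ℤ} {S T : ℕ} (hT : 0 < T) (hTS : T ≤ S)
    {l x : ℝ} (hl : 1 ≤ l) (hSTx : (S * T : ℝ) ≤ 4 * x) (hxl : 4 * x ≤ Real.exp l)
    (hD : c.1 * c.2 * (e.1 * f.2 - f.1 * e.2) ≠ 0)
    (hDl : |((c.1 * c.2 * (e.1 * f.2 - f.1 * e.2) : ℤ) : ℝ)| ≤ Real.exp l) {Z : Finset (ℤ × ℤ)}
    (hZ : ∀ z ∈ Z, ∃ s t : ℤ, z = s • e + t • f ∧ |s| ≤ S ∧ |t| ≤ T)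
    (hF : ∀ z ∈ Z, c.1 * z.1 ^ 3 + c.2 * z.2 ^ 3 ≠ 0 ∧
      |((c.1 * z.1 ^ 3 + c.2 * z.2 ^ 3 : ℤ) : ℝ)| ≤ Real.exp l ∧
      IsSquare (c.1 * z.1 ^ 3 + c.2 * z.2 ^ 3)) :
    (Z.card : ℝ) ≤ 9 * 10 ^ 10 * l ^ 4 * x ^ ((2 : ℝ) / 3) := by
  choose! s t hz_eq hs ht using hZ
  set r : ℝ := (S * T : ℝ) ^ ((1 : ℝ) / 3)
  have hST₁ : (1 : ℝ) ≤ S * T := by exact_mod_cast Nat.mul_pos (hT.trans_le hTS) hT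
  have hr₃ : r ^ 3 = S * T := by
    rw [← Real.rpow_natCast, ← Real.rpow_mul (by positivity)]
    norm_num
  have hr : 1 ≤ r := Real.one_le_rpow hST₁ (by norm_num)
  have hrl : r ≤ Real.exp l :=
    (le_self_pow₀ hr three_ne_zero).trans (hr₃.trans_le (hSTx.trans hxl))
  have hform : ∀ z ∈ Z, cubicForm c (e.1, f.1) (e.2, f.2) (s z, t z) =
      c.1 * z.1 ^ 3 + c.2 * z.2 ^ 3 := fun z hz => by
    conv_rhs => rw [hz_eq z hz]
    simp only [cubicForm, Prod.fst_add, Prod.snd_add, Prod.smul_fst, Prod.smul_snd, smul_eq_mul,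
      mul_comm]
  have hinj : Set.InjOn (fun z => (s z, t z)) Z := fun z hz z' hz' h => by
    simp only [Prod.mk.injEq] at h
    rw [hz_eq z hz, hz_eq z' hz', h.1, h.2]
  have hsieve := card_cubicForm_isSquare_le (c := c) (u := (e.1, f.1)) (v := (e.2, f.2)) hT hTS hl
    hr hr₃ hrl hD hDl (Z := Z.image fun z => (s z, t z))
    (Finset.forall_mem_image.2 fun z hz => ⟨hs z hz, ht z hz⟩)
    (Finset.forall_mem_image.2 fun z hz => hform z hz ▸ hF z hz)
  rw [Finset.card_image_of_injOn hinj] at hsieve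
  calc (Z.card : ℝ) ≤ 3 * 10 ^ 10 * l ^ 4 * r ^ 2 := hsieve
    _ ≤ 3 * 10 ^ 10 * l ^ 4 * (3 * x ^ ((2 : ℝ) / 3)) := by
      gcongr
      exact sq_le_three_mul_rpow (by linarith) (by positivity) (hr₃.trans_le hSTx)
    _ = 9 * 10 ^ 10 * l ^ 4 * x ^ ((2 : ℝ) / 3) := by ring

theorem card_cubic_isSquare_congruence_le {D : ℕ} (hD : 0 < D) {ρ : ℤ} {U V : ℕ} (hU : 0 < U)
    (hV : 0 < V) {c : ℤ × ℤ} (hc : c.1 * c.2 ≠ 0) {l : ℝ} (hl : 1 ≤ l)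
    (hUVl : 4 * (U * V : ℝ) ≤ Real.exp l) (hcl : |(c.1 : ℝ)| * |(c.2 : ℝ)| * D ≤ Real.exp l)
    (hcUVl : |(c.1 : ℝ)| * U ^ 3 + |(c.2 : ℝ)| * V ^ 3 ≤ Real.exp l) {Z : Finset (ℤ × ℤ)}
    (hZ : ∀ z ∈ Z, |z.1| ≤ U ∧ |z.2| ≤ V ∧ IsCoprime z.1 z.2 ∧ (D : ℤ) ∣ z.1 - ρ * z.2)
    (hF : ∀ z ∈ Z, c.1 * z.1 ^ 3 + c.2 * z.2 ^ 3 ≠ 0 ∧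
      IsSquare (c.1 * z.1 ^ 3 + c.2 * z.2 ^ 3)) :
    (Z.card : ℝ) ≤ 10 ^ 11 * l ^ 4 * (1 + ((U : ℝ) * V / D) ^ ((2 : ℝ) / 3)) := by
  obtain ⟨e, f, hbasis, S, T, hTS, hST, hcoords⟩ := exists_congruenceBasis_coords_le hD ρ hU hV
  have hZ' : ∀ z ∈ Z, ∃ s t : ℤ, z = s • e + t • f ∧ |s| ≤ S ∧ |t| ≤ T := fun z hz =>
    hcoords z (hZ z hz).2.2.2 (hZ z hz).1 (hZ z hz).2.1
  have hl₄ : 1 ≤ l ^ 4 := one_le_pow₀ hl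
  have hx : 0 ≤ ((U : ℝ) * V / D) ^ ((2 : ℝ) / 3) := by positivity
  rcases Nat.eq_zero_or_pos T with rfl | hT
  · have hcard : (Z.card : ℝ) ≤ 2 := by
      refine mod_cast card_le_two_of_isCoprime_of_eq_zsmul (e := e) fun z hz => ?_
      obtain ⟨s, t, hst, -, ht⟩ := hZ' z hz
      exact ⟨(hZ z hz).2.2.1, s, by simpa [abs_nonpos_iff.1 ht] using hst⟩
    nlinarith
  have hD' : (1 : ℝ) ≤ D := by exact_mod_cast hD
  have hdet : |((e.1 * f.2 - f.1 * e.2 : ℤ) : ℝ)| = D := by exact_mod_cast hbasis.abs_det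
  have hdet₀ : e.1 * f.2 - f.1 * e.2 ≠ 0 := fun h => by
    rw [h, Int.cast_zero, abs_zero] at hdet
    linarith
  have hsieve := card_cubic_isSquare_le_of_coords (c := c) (x := U * V / D) hT hTS hl
    (by rw [← mul_div_assoc, le_div_iff₀ (by positivity)]; exact_mod_cast hST)
    (le_trans (by gcongr; exact div_le_self (by positivity) hD') hUVl) (mul_ne_zero hc hdet₀)
    (by rw [Int.cast_mul, Int.cast_mul, abs_mul, abs_mul, hdet]; exact hcl) hZ' fun z hz =>
      ⟨(hF z hz).1, le_trans ?_ hcUVl, (hF z hz).2⟩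
  · nlinarith
  · have h₁ : |(z.1 : ℝ)| ≤ U := by exact_mod_cast (hZ z hz).1
    have h₂ : |(z.2 : ℝ)| ≤ V := by exact_mod_cast (hZ z hz).2.1
    push_cast
    refine (abs_add_le _ _).trans ?_
    rw [abs_mul, abs_mul, abs_pow, abs_pow]
    gcongr

end SquareValuesOnLattice

open Finset

section ResidueClasses

variable {ι κ : Type*}

lemma card_le_card_mul_of_card_fiber_le [DecidableEq κ] {s : Finset ι} {f : ι → κ} {t : Finset κ}
    {K : ℝ} (hf : ∀ p ∈ s, f p ∈ t) (hK : ∀ b ∈ t, (#{p ∈ s | f p = b} : ℝ) ≤ K) :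
    (#s : ℝ) ≤ #t * K := by
  rw [card_eq_sum_card_fiberwise hf, Nat.cast_sum, ← nsmul_eq_mul]
  exact sum_le_card_nsmul t _ K hK

lemma isUnit_intCast_zmod_natAbs {A z : ℤ} (h : IsCoprime z A) : IsUnit (z : ZMod A.natAbs) := by
  rw [ZMod.coe_int_isUnit_iff_isCoprime, Int.isCoprime_iff_gcd_eq_one, Int.gcd, Int.natAbs_natCast]
  exact Int.isCoprime_iff_gcd_eq_one.1 h.symm

lemma intCast_zmod_natAbs_eq_zero_iff {A z : ℤ} : (z : ZMod A.natAbs) = 0 ↔ A ∣ z := by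
  rw [ZMod.intCast_zmod_eq_zero_iff_dvd, Int.natAbs_dvd]

/-- The ratio `u / v` of a zero of `b u ^ m + c v ^ m` modulo `A` is an `m`-th root of `-c / b`, so
the zeros lie on few lines `u = ρ v` modulo `A`. -/
lemma card_le_card_rootsOfUnity_mul {m : ℕ} (hm : m ≠ 0) {A b c : ℤ} (hA : A ≠ 0)
    (hb : IsCoprime b A) (hc : IsCoprime c A) {s : Finset ι} {u v : ι → ℤ} {K : ℝ}
    (hv : ∀ p ∈ s, IsCoprime (v p) A) (hs : ∀ p ∈ s, A ∣ b * u p ^ m + c * v p ^ m)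
    (hK : ∀ ρ : ℤ, ∀ t ⊆ s, (∀ p ∈ t, A ∣ u p - ρ * v p) → (#t : ℝ) ≤ K) :
    (#s : ℝ) ≤ Nat.card (rootsOfUnity m (ZMod A.natAbs)) * K := by
  have : NeZero A.natAbs := ⟨Int.natAbs_ne_zero.2 hA⟩
  set ratio : ι → ZMod A.natAbs := fun p => u p * (v p : ZMod A.natAbs)⁻¹
  have hratio : ∀ p ∈ s, (u p : ZMod A.natAbs) = ratio p * v p := fun p hp => by
    rw [mul_assoc, ZMod.inv_mul_of_unit _ (isUnit_intCast_zmod_natAbs (hv p hp)), mul_one]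
  obtain ⟨b', hb'⟩ := isUnit_intCast_zmod_natAbs hb
  obtain ⟨c', hc'⟩ := isUnit_intCast_zmod_natAbs hc
  have hroot : ∀ p ∈ s, ratio p ^ m = (b'⁻¹ * -c' : (ZMod A.natAbs)ˣ) := by
    intro p hp
    have h := intCast_zmod_natAbs_eq_zero_iff.2 (hs p hp)
    push_cast at h
    rw [hratio p hp, mul_pow, ← mul_assoc, ← add_mul] at h
    have h0 := (((isUnit_intCast_zmod_natAbs (hv p hp)).pow m).mul_left_eq_zero).1 h
    rw [← hb', ← hc'] at h0
    rw [Units.val_mul, Units.eq_inv_mul_iff_mul_eq, Units.val_neg]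
    exact eq_neg_of_add_eq_zero_left h0
  have hK0 : 0 ≤ K := by simpa using hK 0 ∅ (empty_subset s) (by simp)
  calc (#s : ℝ) ≤ #(s.image ratio) * K :=
        card_le_card_mul_of_card_fiber_le (fun p hp => mem_image_of_mem ratio hp) fun ρ _ =>
          hK ρ.cast _ (filter_subset _ s) fun p hp => by
            obtain ⟨hps, rfl⟩ := mem_filter.1 hp
            rw [← intCast_zmod_natAbs_eq_zero_iff]
            rw [Int.cast_sub, Int.cast_mul, ZMod.intCast_zmod_cast, ← hratio p hps, sub_self]
    _ ≤ _ := by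
        gcongr
        exact card_le_card_rootsOfUnity hm (Units.isUnit (b'⁻¹ * -c')) fun t ht => by
          obtain ⟨p, hp, rfl⟩ := mem_image.1 ht
          exact hroot p hp

end ResidueClasses

theorem card_cubic_eq_mul_sq_le {g κ α β : ℤ} (hg : g ≠ 0) (hκ : κ ≠ 0) (hα : α ≠ 0) (hβ : β ≠ 0)
    (hαg : IsCoprime α (g * κ ^ 3)) (hβg : IsCoprime β (g * κ ^ 3)) {U V : ℕ} (hU : 0 < U)
    (hV : 0 < V) {l : ℝ} (hl : 1 ≤ l) (hUVl : 4 * (U * V : ℝ) ≤ Real.exp l)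
    (hgl : |(g * κ * α : ℝ)| * |(g * κ * β : ℝ)| * |(g * κ ^ 3 : ℝ)| ≤ Real.exp l)
    (hgUVl : |(g * κ * α : ℝ)| * U ^ 3 + |(g * κ * β : ℝ)| * V ^ 3 ≤ Real.exp l)
    {Z : Finset (ℤ × ℤ)}
    (hZ : ∀ z ∈ Z, |z.1| ≤ U ∧ |z.2| ≤ V ∧ IsCoprime z.1 z.2 ∧ IsCoprime z.2 (g * κ ^ 3))
    (hsq : ∀ z ∈ Z, ∃ x ≠ 0, α * z.1 ^ 3 + β * z.2 ^ 3 = g * κ ^ 3 * x ^ 2) :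
    (#Z : ℝ) ≤ Nat.card (rootsOfUnity 3 (ZMod (g * κ ^ 3).natAbs)) *
      (10 ^ 11 * l ^ 4 * (1 + (U * V / |(g * κ ^ 3 : ℝ)|) ^ ((2 : ℝ) / 3))) := by
  have hN : g * κ ^ 3 ≠ 0 := by positivity
  have hN' : ((g * κ ^ 3).natAbs : ℝ) = |(g * κ ^ 3 : ℝ)| := by
    rw [Nat.cast_natAbs]; push_cast; rfl
  refine card_le_card_rootsOfUnity_mul (u := Prod.fst) (v := Prod.snd) (by norm_num) hN hαg hβg
    (fun z hz => (hZ z hz).2.2.2) (fun z hz => ?_) fun ρ T hTZ hT => ?_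
  · obtain ⟨x, -, hx⟩ := hsq z hz
    exact ⟨x ^ 2, hx⟩
  rw [← hN']
  refine card_cubic_isSquare_congruence_le (c := (g * κ * α, g * κ * β)) (ρ := ρ)
    (Int.natAbs_pos.2 hN) hU hV (by positivity) hl hUVl ?_ ?_ (fun z hz => ?_) fun z hz => ?_
  · rw [hN']; exact_mod_cast hgl
  · exact_mod_cast hgUVl
  · obtain ⟨h₁, h₂, h₃, -⟩ := hZ z (hTZ hz)
    exact ⟨h₁, h₂, h₃, Int.natAbs_dvd.2 (hT z hz)⟩
  · obtain ⟨x, hx0, hx⟩ := hsq z (hTZ hz)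
    have hsq : g * κ * α * z.1 ^ 3 + g * κ * β * z.2 ^ 3 = (g * κ ^ 2 * x) ^ 2 := by
      linear_combination g * κ * hx
    simp only [hsq]
    exact ⟨by positivity, IsSquare.sq _⟩

/-! ### Primitive points on a conic -/

section FinThree

variable {i j k : Fin 3} (hij : i ≠ j) (hik : i ≠ k) (hjk : j ≠ k)
include hij hik hjk

lemma univ_fin_three_eq_of_ne : (univ : Finset (Fin 3)) = {i, j, k} := by
  revert i j k
  decide

lemma forall_fin_three_of_ne {P : Fin 3 → Prop} (hi : P i) (hj : P j) (hk : P k) (m : Fin 3) :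
    P m := by
  have hm := univ_fin_three_eq_of_ne hij hik hjk ▸ mem_univ m
  simp only [mem_insert, mem_singleton] at hm
  rcases hm with rfl | rfl | rfl <;> assumption

@[to_additive]
lemma prod_fin_three_of_ne {M : Type*} [CommMonoid M] (f : Fin 3 → M) :
    ∏ m, f m = f i * f j * f k := by
  rw [univ_fin_three_eq_of_ne hij hik hjk, prod_insert (by simp [hij, hik]),
    prod_insert (by simp [hjk]), prod_singleton, mul_assoc]

end FinThree

lemma exists_fin_three_ne_ne (k : Fin 3) : ∃ i j : Fin 3, i ≠ j ∧ i ≠ k ∧ j ≠ k := by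
  revert k
  decide

lemma card_le_one_add_div_of_separated {ι : Type*} {s : Finset ι} {w : ι → ℝ} {W δ : ℝ}
    (hδ : 0 < δ) (hW : 0 ≤ W) (hw : ∀ p ∈ s, 0 ≤ w p ∧ w p ≤ W)
    (hsep : ∀ p ∈ s, ∀ q ∈ s, p ≠ q → δ ≤ |w p - w q|) : (#s : ℝ) ≤ 1 + W / δ := by
  have hcard : #s ≤ #(range (⌊W / δ⌋₊ + 1)) := by
    refine card_le_card_of_injOn (fun p => ⌊w p / δ⌋₊) (fun p hp => ?_) fun p hp q hq hpq => ?_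
    · exact mem_coe.2 <| mem_range.2 <| Nat.lt_succ_of_le <|
        Nat.floor_le_floor (div_le_div_of_nonneg_right (hw p hp).2 hδ.le)
    · by_contra hne
      have hlt : |w p / δ - w q / δ| < 1 := by
        have hp' := Nat.floor_le (div_nonneg (hw p hp).1 hδ.le)
        have hq' := Nat.floor_le (div_nonneg (hw q hq).1 hδ.le)
        have hp'' := Nat.lt_floor_add_one (w p / δ)
        have hq'' := Nat.lt_floor_add_one (w q / δ)
        simp only at hpq
        rw [hpq] at hp' hp''
        rw [abs_lt]
        constructor <;> linarith
      rw [← sub_div, abs_div, abs_of_pos hδ, div_lt_one hδ] at hlt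
      exact (hsep p hp q hq hne).not_gt hlt
  rw [card_range] at hcard
  calc (#s : ℝ) ≤ ⌊W / δ⌋₊ + 1 := by exact_mod_cast hcard
    _ ≤ 1 + W / δ := by rw [add_comm]; gcongr; exact Nat.floor_le (by positivity)

section Conic

/-- A point with positive, pairwise coprime coordinates on the conic `∑ A m * x m ^ 2 = 0`. -/
structure IsPrimitiveConicPoint (A x : Fin 3 → ℤ) : Prop where
  pos : ∀ m, 0 < x m
  isCoprime : ∀ m n, m ≠ n → IsCoprime (x m) (x n)
  sum_eq_zero : ∑ m, A m * x m ^ 2 = 0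

/-- The polar form of the quadratic form `∑ A m * x m ^ 2`, normalised to agree with it on the
diagonal. -/
def conicPolar (A x z : Fin 3 → ℤ) : ℤ :=
  ∑ m, A m * x m * z m

variable {A x z : Fin 3 → ℤ} {i j k : Fin 3}

namespace IsPrimitiveConicPoint

lemma isCoprime_coeff (hx : IsPrimitiveConicPoint A x) (hA : ∀ m n, m ≠ n → IsCoprime (A m) (A n))
    (hij : i ≠ j) : IsCoprime (A i) (x j) := by
  obtain ⟨k, hik, hjk⟩ : ∃ k, i ≠ k ∧ j ≠ k := by revert i j; decide
  refine isCoprime_of_prime_dvd (fun h => (hx.pos j).ne' h.2) fun p hp hpi hpj => ?_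
  have hsum := hx.sum_eq_zero
  rw [sum_fin_three_of_ne hij hik hjk] at hsum
  have hpk : p ∣ A k * x k ^ 2 := by
    have : A k * x k ^ 2 = A i * -x i ^ 2 + x j * (-A j * x j) := by linear_combination hsum
    exact this ▸ dvd_add (hpi.mul_right _) (hpj.mul_right _)
  rcases hp.dvd_or_dvd hpk with h | h
  · exact hp.not_isUnit ((hA i k hik).isUnit_of_dvd' hpi h)
  · exact hp.not_isUnit ((hx.isCoprime j k hjk).isUnit_of_dvd' hpj (hp.dvd_of_dvd_pow h))

lemma eq_of_mul_eq_mul (hx : IsPrimitiveConicPoint A x) (hz : IsPrimitiveConicPoint A z)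
    (h : ∀ m n, m ≠ n → x m * z n = x n * z m) : x = z := by
  funext m
  obtain ⟨n, hn⟩ := exists_ne m
  refine Int.dvd_antisymm (hx.pos m).le (hz.pos m).le
    ((hx.isCoprime m n hn.symm).dvd_of_dvd_mul_left ⟨z n, (h m n hn.symm).symm⟩)
    ((hz.isCoprime m n hn.symm).dvd_of_dvd_mul_right ⟨x n, ?_⟩)
  rw [h m n hn.symm, mul_comm]

/-- Two orthogonal isotropic vectors of a nondegenerate ternary quadratic form are proportional. -/
lemma eq_of_conicPolar_eq_zero (hx : IsPrimitiveConicPoint A x) (hz : IsPrimitiveConicPoint A z)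
    (hA : ∀ m, A m ≠ 0) (hxz : conicPolar A x z = 0) : x = z := by
  refine hx.eq_of_mul_eq_mul hz fun i j hij => sub_eq_zero.1 ?_
  obtain ⟨k, hik, hjk⟩ : ∃ k, i ≠ k ∧ j ≠ k := by revert i j; decide
  have hx0 := hx.sum_eq_zero
  have hz0 := hz.sum_eq_zero
  rw [conicPolar, sum_fin_three_of_ne hij hik hjk] at hxz
  rw [sum_fin_three_of_ne hij hik hjk] at hx0 hz0
  have hxi : A i * x i * (x i * z j - x j * z i) = A k * x k * (x j * z k - x k * z j) := by
    linear_combination z j * hx0 - x j * hxz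
  have hzi : A i * z i * (x i * z j - x j * z i) = A k * z k * (x j * z k - x k * z j) := by
    linear_combination z j * hxz - x j * hz0
  have hxj : A j * x j * (x i * z j - x j * z i) = A k * x k * (x k * z i - x i * z k) := by
    linear_combination x i * hxz - z i * hx0
  have hprod : A i * ((x i * z j - x j * z i) * (x k * z i - x i * z k)) = 0 := by
    linear_combination x k * hzi - z k * hxi
  have hsq : A i * (A j * x j) * (x i * z j - x j * z i) ^ 2 = 0 := by
    linear_combination A i * (x i * z j - x j * z i) * hxj + A k * x k * hprod
  have hne : A i * (A j * x j) ≠ 0 := mul_ne_zero (hA i) (mul_ne_zero (hA j) (hx.pos j).ne')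
  exact pow_eq_zero_iff two_ne_zero |>.1 ((mul_eq_zero.1 hsq).resolve_left hne)

lemma coeff_dvd_conicPolar (hx : IsPrimitiveConicPoint A x)
    (hA : ∀ m n, m ≠ n → IsCoprime (A m) (A n)) (hij : i ≠ j) (hik : i ≠ k) (hjk : j ≠ k)
    (h : A i ∣ x j * z k - x k * z j) : A i ∣ conicPolar A x z := by
  refine (hx.isCoprime_coeff hA hik).dvd_of_dvd_mul_right ?_
  have hx0 := hx.sum_eq_zero
  rw [sum_fin_three_of_ne hij hik hjk] at hx0
  rw [conicPolar, sum_fin_three_of_ne hij hik hjk]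
  have : (A i * x i * z i + A j * x j * z j + A k * x k * z k) * x k =
      A i * (x i * (z i * x k - z k * x i)) + (x j * z k - x k * z j) * (-A j * x j) := by
    linear_combination z k * hx0
  exact this ▸ dvd_add (Dvd.intro _ rfl) (h.mul_right _)

lemma mul_abs_conicPolar_le (hx : IsPrimitiveConicPoint A x) (hz : IsPrimitiveConicPoint A z)
    (hij : i ≠ j) (hik : i ≠ k) (hjk : j ≠ k) :
    2 * (x i * z i) * |conicPolar A x z| ≤
      |A j| * (x j * z i - z j * x i) ^ 2 + |A k| * (x k * z i - z k * x i) ^ 2 := by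
  have hx0 := hx.sum_eq_zero
  have hz0 := hz.sum_eq_zero
  rw [sum_fin_three_of_ne hij hik hjk] at hx0 hz0
  have hxz : 0 < 2 * (x i * z i) := by have := hx.pos i; have := hz.pos i; positivity
  have hid : 2 * (x i * z i) * conicPolar A x z =
      -(A j * (x j * z i - z j * x i) ^ 2 + A k * (x k * z i - z k * x i) ^ 2) := by
    rw [conicPolar, sum_fin_three_of_ne hij hik hjk]
    linear_combination z i ^ 2 * hx0 + x i ^ 2 * hz0
  rw [← abs_of_pos hxz, ← abs_mul, hid, abs_neg]
  refine (abs_add_le _ _).trans_eq ?_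
  rw [abs_mul, abs_mul, abs_sq, abs_sq]

section Spacing

variable {K : ℤ} (hij : i ≠ j) (hik : i ≠ k) (hjk : j ≠ k) (hA : ∀ m, A m ≠ 0)
  (hx : IsPrimitiveConicPoint A x) (hz : IsPrimitiveConicPoint A z)
  (hxK : |A k| * x k ^ 2 ≤ K * |A j| * x j ^ 2) (hzK : |A k| * z k ^ 2 ≤ K * |A j| * z j ^ 2)
include hA hx hz hxK hzK

lemma abs_mul_add_sq_le (i : Fin 3) :
    |A k| * (x k * z i + z k * x i) ^ 2 ≤ K * |A j| * (x j * z i + z j * x i) ^ 2 := by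
  have hxp := hx.pos
  have hzp := hz.pos
  have hAk := abs_pos.2 (hA k)
  have hK : 0 ≤ K * |A j| := by
    refine (pos_of_mul_pos_left (lt_of_lt_of_le ?_ hxK) (sq_nonneg (x j))).le
    have := hxp k
    positivity
  have hcross : |A k| * (x k * z k) ≤ K * |A j| * (x j * z j) := by
    have := hxp j; have := hzp j; have := hxp k; have := hzp k
    refine le_of_sq_le_sq ?_ (by positivity)
    calc (|A k| * (x k * z k)) ^ 2 = |A k| * x k ^ 2 * (|A k| * z k ^ 2) := by ring
      _ ≤ K * |A j| * x j ^ 2 * (K * |A j| * z j ^ 2) := by gcongr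
      _ = (K * |A j| * (x j * z j)) ^ 2 := by ring
  have := hxp i
  have := hzp i
  calc |A k| * (x k * z i + z k * x i) ^ 2 = |A k| * x k ^ 2 * z i ^ 2 +
        |A k| * z k ^ 2 * x i ^ 2 + 2 * (|A k| * (x k * z k)) * (x i * z i) := by ring
    _ ≤ K * |A j| * x j ^ 2 * z i ^ 2 + K * |A j| * z j ^ 2 * x i ^ 2 +
        2 * (K * |A j| * (x j * z j)) * (x i * z i) := by gcongr
    _ = K * |A j| * (x j * z i + z j * x i) ^ 2 := by ring

include hij hik hjk

lemma abs_mul_sub_sq_le :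
    |A j| * (x j * z i - z j * x i) ^ 2 ≤ K * |A k| * (x k * z i - z k * x i) ^ 2 := by
  have hx0 := hx.sum_eq_zero
  have hz0 := hz.sum_eq_zero
  rw [sum_fin_three_of_ne hij hik hjk] at hx0 hz0
  set dj := x j * z i - z j * x i with hdj
  set dk := x k * z i - z k * x i with hdk
  set sj := x j * z i + z j * x i with hsj
  set sk := x k * z i + z k * x i with hsk
  have hsum : |A k| * sk ^ 2 ≤ K * |A j| * sj ^ 2 := abs_mul_add_sq_le hA hx hz hxK hzK i
  have hds : |A j| ^ 2 * dj ^ 2 * sj ^ 2 = |A k| ^ 2 * dk ^ 2 * sk ^ 2 := by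
    have : A j * dj * sj = -(A k * dk * sk) := by
      rw [hdj, hdk, hsj, hsk]
      linear_combination z i ^ 2 * hx0 - x i ^ 2 * hz0
    rw [sq_abs, sq_abs]
    linear_combination (A j * dj * sj - A k * dk * sk) * this
  have hpos : 0 < |A j| * sj ^ 2 := by
    have := abs_pos.2 (hA j)
    have := mul_pos (hx.pos j) (hz.pos i)
    have := mul_pos (hz.pos j) (hx.pos i)
    positivity
  refine le_of_mul_le_mul_left ?_ hpos
  calc |A j| * sj ^ 2 * (|A j| * dj ^ 2) = |A j| ^ 2 * dj ^ 2 * sj ^ 2 := by ring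
    _ = |A k| * dk ^ 2 * (|A k| * sk ^ 2) := by rw [hds]; ring
    _ ≤ |A k| * dk ^ 2 * (K * |A j| * sj ^ 2) := by gcongr
    _ = |A j| * sj ^ 2 * (K * |A k| * dk ^ 2) := by ring

lemma two_mul_le_sub_sq_of_prod_dvd (hdvd : ∏ m, A m ∣ conicPolar A x z) (hxz : x ≠ z) :
    2 * (x i * z i) * (|A i| * |A j|) ≤ (K + 1) * (x k * z i - z k * x i) ^ 2 := by
  have hpolar : |A i| * |A j| * |A k| ≤ |conicPolar A x z| := by
    rw [← abs_mul, ← abs_mul, ← prod_fin_three_of_ne hij hik hjk A]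
    exact Int.le_of_dvd (abs_pos.2 fun h => hxz (hx.eq_of_conicPolar_eq_zero hz hA h))
      ((abs_dvd_abs _ _).2 hdvd)
  have := hx.pos i
  have := hz.pos i
  refine le_of_mul_le_mul_left ?_ (abs_pos.2 (hA k))
  calc |A k| * (2 * (x i * z i) * (|A i| * |A j|))
      = 2 * (x i * z i) * (|A i| * |A j| * |A k|) := by ring
    _ ≤ 2 * (x i * z i) * |conicPolar A x z| := by gcongr
    _ ≤ |A j| * (x j * z i - z j * x i) ^ 2 + |A k| * (x k * z i - z k * x i) ^ 2 :=
        hx.mul_abs_conicPolar_le hz hij hik hjk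
    _ ≤ K * |A k| * (x k * z i - z k * x i) ^ 2 + |A k| * (x k * z i - z k * x i) ^ 2 :=
        add_le_add (abs_mul_sub_sq_le hij hik hjk hA hx hz hxK hzK) le_rfl
    _ = |A k| * ((K + 1) * (x k * z i - z k * x i) ^ 2) := by ring

end Spacing

end IsPrimitiveConicPoint

lemma div_le_abs_div_sub_div {E T p q r t : ℝ} (hE : 0 ≤ E) (hq : 0 < q) (ht : 0 < t) (hqT : q ≤ T)
    (htT : t ≤ T) (h : q * t * E ^ 2 ≤ (p * t - r * q) ^ 2) : E / T ≤ |p / q - r / t| := by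
  have hT : 0 < T := hq.trans_le hqT
  rw [div_sub_div _ _ hq.ne' ht.ne', ← abs_of_nonneg (div_nonneg hE hT.le), ← sq_le_sq, div_pow,
    div_pow, div_le_div_iff₀ (by positivity) (by positivity)]
  calc E ^ 2 * (q * t) ^ 2 = q * t * E ^ 2 * (q * t) := by ring
    _ ≤ (p * t - r * q) ^ 2 * (T * T) := by gcongr
    _ = (p * t - q * r) ^ 2 * T ^ 2 := by ring

section Counting

variable {s : Finset (Fin 3 → ℤ)} (hs : ∀ x ∈ s, IsPrimitiveConicPoint A x)
  (hA : ∀ m, A m ≠ 0)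
include hs hA

/-- Distinct points whose polar form is divisible by `∏ A m` have well separated ratios
`x k / x i`. -/
lemma card_conicPoint_le_of_prod_dvd (hij : i ≠ j) (hik : i ≠ k) (hjk : j ≠ k) {K : ℤ} {E T W : ℝ}
    (hE : 0 < E) (hT : 0 < T) (hW : 0 < W) (hEA : (K + 1) * E ^ 2 ≤ 2 * (|(A i : ℝ)| * |(A j : ℝ)|))
    (hK : ∀ x ∈ s, |A k| * x k ^ 2 ≤ K * |A j| * x j ^ 2)
    (hi : ∀ x ∈ s, T / 2 < x i ∧ x i ≤ T) (hk : ∀ x ∈ s, x k ≤ W)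
    (hdvd : ∀ x ∈ s, ∀ z ∈ s, ∏ m, A m ∣ conicPolar A x z) : (#s : ℝ) ≤ 1 + 2 * W / E := by
  have hpos : ∀ x ∈ s, ∀ m, (0 : ℝ) < x m := fun x hx m => by exact_mod_cast (hs x hx).pos m
  refine (card_le_one_add_div_of_separated (w := fun x => (x k / x i : ℝ)) (W := 2 * W / T)
    (div_pos hE hT) (by positivity) (fun x hx => ⟨?_, ?_⟩) fun x hx z hz hxz => ?_).trans_eq ?_
  · exact (div_pos (hpos x hx k) (hpos x hx i)).le
  · rw [div_le_div_iff₀ (hpos x hx i) hT]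
    nlinarith [hi x hx, hk x hx]
  · have hsep : 2 * (x i * z i : ℝ) * (|(A i : ℝ)| * |(A j : ℝ)|) ≤
        (K + 1) * (x k * z i - z k * x i) ^ 2 := by
      exact_mod_cast (hs x hx).two_mul_le_sub_sq_of_prod_dvd hij hik hjk hA (hs z hz) (hK x hx)
        (hK z hz) (hdvd x hx z hz) hxz
    have hAi : (0 : ℝ) < |(A i : ℝ)| := abs_pos.2 (Int.cast_ne_zero.2 (hA i))
    have hAj : (0 : ℝ) < |(A j : ℝ)| := abs_pos.2 (Int.cast_ne_zero.2 (hA j))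
    have hxi := hpos x hx i
    have hzi := hpos z hz i
    have hK₁ : (0 : ℝ) < K + 1 :=
      pos_of_mul_pos_left (lt_of_lt_of_le (by positivity) hsep) (sq_nonneg _)
    refine div_le_abs_div_sub_div hE.le hxi hzi (hi x hx).2 (hi z hz).2
      (le_of_mul_le_mul_left ?_ hK₁)
    calc (K + 1) * (x i * z i * E ^ 2) = x i * z i * ((K + 1) * E ^ 2) := by ring
      _ ≤ x i * z i * (2 * (|(A i : ℝ)| * |(A j : ℝ)|)) := by gcongr
      _ = 2 * (x i * z i : ℝ) * (|(A i : ℝ)| * |(A j : ℝ)|) := by ring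
      _ ≤ (K + 1) * (x k * z i - z k * x i) ^ 2 := hsep
  · field_simp

lemma card_conicPoint_le_mul_of_coeff_dvd (hAA : ∀ m n, m ≠ n → IsCoprime (A m) (A n)) (i : Fin 3)
    {K : ℝ} (hK : ∀ t ⊆ s, (∀ x ∈ t, ∀ z ∈ t, A i ∣ conicPolar A x z) → (#t : ℝ) ≤ K) :
    (#s : ℝ) ≤ Nat.card (rootsOfUnity 2 (ZMod (A i).natAbs)) * K := by
  obtain ⟨j, k, hjk, hji, hki⟩ := exists_fin_three_ne_ne i
  refine card_le_card_rootsOfUnity_mul (u := fun x => x j) (v := fun x => x k) two_ne_zero (hA i)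
    (hAA j i hji) (hAA k i hki) (fun x hx => ((hs x hx).isCoprime_coeff hAA hki.symm).symm)
    (fun x hx => ?_) fun ρ t hts ht => hK t hts fun x hx z hz => ?_
  · have hx0 := (hs x hx).sum_eq_zero
    rw [sum_fin_three_of_ne hji.symm hki.symm hjk] at hx0
    exact ⟨-x i ^ 2, by linear_combination hx0⟩
  · refine (hs x (hts hx)).coeff_dvd_conicPolar hAA hji.symm hki.symm hjk ?_
    have : x j * z k - x k * z j = (x j - ρ * x k) * z k - (z j - ρ * z k) * x k := by ring
    exact this ▸ dvd_sub ((ht x hx).mul_right _) ((ht z hz).mul_right _)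

theorem card_conicPoint_le (hAA : ∀ m n, m ≠ n → IsCoprime (A m) (A n)) (hij : i ≠ j) (hik : i ≠ k)
    (hjk : j ≠ k) {K : ℤ} {E T W : ℝ} (hE : 0 < E) (hT : 0 < T) (hW : 0 < W)
    (hEA : (K + 1) * E ^ 2 ≤ 2 * (|(A i : ℝ)| * |(A j : ℝ)|))
    (hK : ∀ x ∈ s, |A k| * x k ^ 2 ≤ K * |A j| * x j ^ 2)
    (hi : ∀ x ∈ s, T / 2 < x i ∧ x i ≤ T) (hk : ∀ x ∈ s, x k ≤ W) :
    (#s : ℝ) ≤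
      (∏ m, (Nat.card (rootsOfUnity 2 (ZMod (A m).natAbs)) : ℝ)) * (1 + 2 * W / E) := by
  rw [prod_fin_three_of_ne hij hik hjk, mul_assoc, mul_assoc]
  refine card_conicPoint_le_mul_of_coeff_dvd hs hA hAA i fun t₁ ht₁ h₁ => ?_
  refine card_conicPoint_le_mul_of_coeff_dvd (fun x hx => hs x (ht₁ hx)) hA hAA j
    fun t₂ ht₂ h₂ => ?_
  refine card_conicPoint_le_mul_of_coeff_dvd (fun x hx => hs x (ht₁ (ht₂ hx))) hA hAA k
    fun t ht h₃ => ?_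
  have hts := ht.trans (ht₂.trans ht₁)
  refine card_conicPoint_le_of_prod_dvd (fun x hx => hs x (hts hx)) hA hij hik hjk hE hT hW hEA
    (fun x hx => hK x (hts hx)) (fun x hx => hi x (hts hx)) (fun x hx => hk x (hts hx))
    fun x hx z hz => Fintype.prod_dvd_of_coprime (fun m n hmn => hAA m n hmn) ?_
  exact forall_fin_three_of_ne hij hik hjk (h₁ x (ht₂ (ht hx)) z (ht₂ (ht hz)))
    (h₂ x (ht hx) z (ht hz)) (h₃ x hx z hz)

end Counting

end Conic

/-! ### The two fibrations -/

section Solutions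

/-- The conditions defining membership in `S0`, with the gcd conditions in pairwise form. -/
structure IsSolution (a : Fin 3 → ℤ) (X Y : Fin 3 → ℝ) (x y : Fin 3 → ℤ) : Prop where
  fst_pos : ∀ m, 0 < x m
  snd_pos : ∀ m, 0 < y m
  fst_bounds : ∀ m, X m / 2 < x m ∧ x m ≤ X m
  snd_bounds : ∀ m, Y m / 2 < y m ∧ y m ≤ Y m
  sum_eq_zero : ∑ m, a m * x m ^ 2 * y m ^ 3 = 0
  isCoprime_coeff : ∀ m n, IsCoprime (a m) (x n * y n)
  isCoprime : ∀ m n, m ≠ n → IsCoprime (x m * y m) (x n * y n)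
  squarefree : ∀ m, Squarefree (a m * y m)

variable {a x y : Fin 3 → ℤ} {X Y : Fin 3 → ℝ} {i j k : Fin 3}

lemma isCoprime_of_sum_eq_zero (hxy : ∀ m, x m * y m ≠ 0)
    (hsum : ∑ m, a m * x m ^ 2 * y m ^ 3 = 0) (ha : ∀ m n, IsCoprime (a m) (x n * y n))
    (hprime : ∀ q : ℤ, Prime q → ¬∀ m, q ∣ x m * y m) (hij : i ≠ j) :
    IsCoprime (x i * y i) (x j * y j) := by
  obtain ⟨k, hik, hjk⟩ : ∃ k, i ≠ k ∧ j ≠ k := by revert i j; decide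
  refine isCoprime_of_prime_dvd (fun h => hxy i h.1) fun q hq hqi hqj =>
    hprime q hq (forall_fin_three_of_ne hij hik hjk hqi hqj ?_)
  rw [sum_fin_three_of_ne hij hik hjk] at hsum
  have hqk : q ∣ a k * (x k ^ 2 * y k ^ 3) := by
    have : a k * (x k ^ 2 * y k ^ 3) = x i * y i * -(a i * x i * y i ^ 2) +
        x j * y j * -(a j * x j * y j ^ 2) := by linear_combination hsum
    exact this ▸ dvd_add (hqi.mul_right _) (hqj.mul_right _)
  rcases hq.dvd_or_dvd hqk with h | h
  · exact absurd ((ha k i).isUnit_of_dvd' h hqi) hq.not_isUnit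
  · exact (hq.dvd_or_dvd h).elim (fun h => (hq.dvd_of_dvd_pow h).mul_right _)
      fun h => (hq.dvd_of_dvd_pow h).mul_left _

lemma isSolution_of_mem_S0 (h : (x, y) ∈ S0 a X Y) : IsSolution a X Y x y := by
  obtain ⟨hx, hy, hxX, hyY, hsum, hgcd, hcoeff, hsq⟩ := h
  have hsum' : ∑ m, a m * x m ^ 2 * y m ^ 3 = 0 := by rw [Fin.sum_univ_three]; exact hsum
  have hcoeff' : ∀ m n, IsCoprime (a m) (x n * y n) := by
    have h : IsCoprime (∏ m, a m) (∏ m, x m * y m) := by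
      rw [Int.isCoprime_iff_gcd_eq_one, Fin.prod_univ_three, Fin.prod_univ_three, ← hcoeff]
      congr 1
      ring
    exact fun m n => IsCoprime.prod_right_iff.1 (IsCoprime.prod_left_iff.1 h m (mem_univ m)) n
      (mem_univ n)
  refine ⟨hx, hy, hxX, hyY, hsum', hcoeff', fun m n => isCoprime_of_sum_eq_zero
    (fun m => (mul_pos (hx m) (hy m)).ne') hsum' hcoeff' fun q hq h => hq.not_isUnit ?_, hsq⟩
  have hq := Int.dvd_coe_gcd (h 0) (Int.dvd_coe_gcd (h 1) (h 2))
  rw [hgcd] at hq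
  exact isUnit_of_dvd_one hq

lemma not_sixteen_dvd_mul_cube {b z : ℤ} (h : Squarefree (b * z)) : ¬16 ∣ b * z ^ 3 := by
  intro h16
  have h4 : ¬(2 : ℤ) * 2 ∣ b * z := fun h' => Int.prime_two.not_isUnit (h 2 h')
  rcases Int.even_or_odd' z with ⟨w, rfl | hz⟩
  · have hbw : (2 : ℤ) ∣ b * w ^ 3 := by
      rw [show b * (2 * w) ^ 3 = 8 * (b * w ^ 3) by ring, show (16 : ℤ) = 8 * 2 by rfl] at h16
      exact (mul_dvd_mul_iff_left (by norm_num)).1 h16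
    refine h4 ((mul_left_comm b 2 w) ▸ mul_dvd_mul_left 2 ?_)
    exact (Int.prime_two.dvd_or_dvd hbw).elim (fun h => h.mul_right _)
      fun h => (Int.prime_two.dvd_of_dvd_pow h).mul_left _
  · have hcop : IsCoprime ((2 : ℤ) ^ 4) (z ^ 3) := (Int.isCoprime_two_left.2 ⟨w, hz⟩).pow
    have hb : (16 : ℤ) ∣ b := hcop.dvd_of_dvd_mul_right h16
    exact h4 ((dvd_trans (by norm_num) hb).mul_right z)

namespace IsSolution

variable (h : IsSolution a X Y x y)
include h

lemma isPrimitiveConicPoint : IsPrimitiveConicPoint (fun m => a m * y m ^ 3) x where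
  pos := h.fst_pos
  isCoprime m n hmn := (h.isCoprime m n hmn).of_mul_left_left.of_mul_right_left
  sum_eq_zero := by rw [← h.sum_eq_zero]; exact sum_congr rfl fun m _ => by ring

lemma isCoprime_snd_mul_cube {m n : Fin 3} (hmn : m ≠ n) : IsCoprime (y m) (a n * y n ^ 3) :=
  (h.isCoprime_coeff n m).of_mul_right_right.symm.mul_right
    (h.isCoprime m n hmn).of_mul_left_right.of_mul_right_right.pow_right

lemma isCoprime_coeff_mul_cube (ha : ∀ m n, m ≠ n → IsCoprime (a m) (a n)) {m n : Fin 3}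
    (hmn : m ≠ n) : IsCoprime (a m) (a n * y n ^ 3) :=
  (ha m n hmn).mul_right (h.isCoprime_coeff m n).of_mul_right_right.pow_right

lemma isCoprime_mul_cube (ha : ∀ m n, m ≠ n → IsCoprime (a m) (a n)) {m n : Fin 3} (hmn : m ≠ n) :
    IsCoprime (a m * y m ^ 3) (a n * y n ^ 3) :=
  (h.isCoprime_coeff_mul_cube ha hmn).mul_left (h.isCoprime_snd_mul_cube hmn).pow_left

lemma isCoprime_mul_sq_mul_cube (ha : ∀ m n, m ≠ n → IsCoprime (a m) (a n)) {m n : Fin 3}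
    (hmn : m ≠ n) : IsCoprime (a m * x m ^ 2) (a n * y n ^ 3) :=
  (h.isCoprime_coeff_mul_cube ha hmn).mul_left
    ((h.isCoprime_coeff n m).of_mul_right_left.symm.mul_right
      (h.isCoprime m n hmn).of_mul_left_left.of_mul_right_right.pow_right).pow_left

lemma fst_eq_of_eq {z : Fin 3 → ℤ} (hz : IsSolution a X Y z y) (ha : a k ≠ 0) (hij : i ≠ j)
    (hik : i ≠ k) (hjk : j ≠ k) (hi : x i = z i) (hj : x j = z j) : x = z := by
  have hsum := h.sum_eq_zero.trans hz.sum_eq_zero.symm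
  rw [sum_fin_three_of_ne hij hik hjk, sum_fin_three_of_ne hij hik hjk, hi, hj,
    add_right_inj, mul_left_inj' (pow_ne_zero 3 (h.snd_pos k).ne'), mul_right_inj' ha,
    pow_left_inj₀ (h.fst_pos k).le (hz.fst_pos k).le two_ne_zero] at hsum
  exact funext (forall_fin_three_of_ne hij hik hjk hi hj hsum)

end IsSolution

end Solutions

section Sizes

variable {b : ℤ} {X Y x y L : ℝ}

lemma cube_div_eight_le_abs_mul_cube (hb : b ≠ 0) (hY : 0 ≤ Y) (hy : Y / 2 < y) :
    Y ^ 3 / 8 ≤ |b * y ^ 3| := by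
  have hb₁ : (1 : ℝ) ≤ |(b : ℝ)| := by exact_mod_cast Int.one_le_abs hb
  calc Y ^ 3 / 8 = 1 * (Y / 2) ^ 3 := by ring
    _ ≤ |(b : ℝ)| * |y ^ 3| := by gcongr; exact (by gcongr : _ ≤ y ^ 3).trans (le_abs_self _)
    _ = |b * y ^ 3| := (abs_mul _ _).symm

lemma abs_mul_cube_mul_sq_le (hx : 0 ≤ x) (hxX : x ≤ X) (hy : 0 ≤ y) (hyY : y ≤ Y) :
    |b * y ^ 3| * x ^ 2 ≤ |(b : ℝ)| * X ^ 2 * Y ^ 3 := by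
  rw [abs_mul, abs_of_nonneg (pow_nonneg hy 3), mul_right_comm]
  gcongr

lemma le_mul_abs_mul_cube_mul_sq (hX : 0 ≤ X) (hx : X / 2 ≤ x) (hY : 0 ≤ Y) (hy : Y / 2 ≤ y) :
    |(b : ℝ)| * X ^ 2 * Y ^ 3 ≤ 32 * |b * y ^ 3| * x ^ 2 := by
  have hy₀ : 0 ≤ y := (by positivity : 0 ≤ Y / 2).trans hy
  rw [abs_mul, abs_of_nonneg (pow_nonneg hy₀ 3)]
  calc |(b : ℝ)| * X ^ 2 * Y ^ 3 = 32 * (|(b : ℝ)| * (Y / 2) ^ 3) * (X / 2) ^ 2 := by ring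
    _ ≤ _ := by gcongr

lemma abs_mul_cube_le (hb : |(b : ℝ)| * X ^ 2 * Y ^ 3 ≤ L) (hX : 1 ≤ X) (hy : 0 ≤ y)
    (hyY : y ≤ Y) : |b * y ^ 3| ≤ L := by
  simpa using (abs_mul_cube_mul_sq_le zero_le_one hX hy hyY).trans hb

end Sizes

section ConicFibre

variable {a : Fin 3 → ℤ} {X Y : Fin 3 → ℝ} {x y : Fin 3 → ℤ} {L M : ℝ} {i j k : Fin 3}

namespace IsSolution

variable (h : IsSolution a X Y x y)
include h

lemma fst_cast_pos (m : Fin 3) : (0 : ℝ) < x m := Int.cast_pos.2 (h.fst_pos m)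

lemma snd_cast_pos (m : Fin 3) : (0 : ℝ) < y m := Int.cast_pos.2 (h.snd_pos m)

lemma mul_cube_ne_zero (ha : ∀ m, a m ≠ 0) (m : Fin 3) : a m * y m ^ 3 ≠ 0 :=
  mul_ne_zero (ha m) (pow_ne_zero 3 (h.snd_pos m).ne')

lemma card_rootsOfUnity_le (ha : ∀ m, a m ≠ 0) (hX : ∀ m, 1 ≤ X m)
    (hL : ∀ m, |(a m : ℝ)| * X m ^ 2 * Y m ^ 3 ≤ L)
    (hM : ∀ n : ℕ, n ≠ 0 → (n : ℝ) ≤ L → (#n.divisors : ℝ) ^ 2 ≤ M) {r : ℕ} (hr : 0 < r)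
    (hr₄ : r ≤ 4) (m : Fin 3) :
    (Nat.card (rootsOfUnity r (ZMod (a m * y m ^ 3).natAbs)) : ℝ) ≤ M := by
  have h0 : (a m * y m ^ 3).natAbs ≠ 0 := Int.natAbs_ne_zero.2 (h.mul_cube_ne_zero ha m)
  have h16 : ¬16 ∣ (a m * y m ^ 3).natAbs := fun h' =>
    not_sixteen_dvd_mul_cube (h.squarefree m) (by exact_mod_cast Int.natCast_dvd.2 h')
  calc (Nat.card (rootsOfUnity r (ZMod (a m * y m ^ 3).natAbs)) : ℝ)
      ≤ (#(a m * y m ^ 3).natAbs.divisors : ℝ) ^ 2 := by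
        exact_mod_cast card_rootsOfUnity_zmod_le hr hr₄ h0 h16
    _ ≤ M := hM _ h0 (by
        rw [Nat.cast_natAbs, Int.cast_abs]
        push_cast
        exact abs_mul_cube_le (hL m) (hX m) (h.snd_cast_pos m).le (h.snd_bounds m).2)

lemma coeff_mul_sq_le (hX : ∀ m, 0 ≤ X m) (hY : ∀ m, 0 ≤ Y m)
    (hkj : |(a k : ℝ)| * X k ^ 2 * Y k ^ 3 ≤ |(a j : ℝ)| * X j ^ 2 * Y j ^ 3) :
    |a k * y k ^ 3| * x k ^ 2 ≤ 32 * |a j * y j ^ 3| * x j ^ 2 := by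
  exact_mod_cast (abs_mul_cube_mul_sq_le (h.fst_cast_pos k).le (h.fst_bounds k).2
    (h.snd_cast_pos k).le (h.snd_bounds k).2).trans <| hkj.trans <|
      le_mul_abs_mul_cube_mul_sq (hX j) (h.fst_bounds j).1.le (hY j) (h.snd_bounds j).1.le

lemma mul_sq_le_abs_mul_abs (ha : ∀ m, a m ≠ 0) (hY : ∀ m, 1 ≤ Y m) (i j : Fin 3) :
    (Y i * Y j) ^ 2 ≤ 64 * (|((a i * y i ^ 3 : ℤ) : ℝ)| * |((a j * y j ^ 3 : ℤ) : ℝ)|) := by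
  have hlow : ∀ m, Y m ^ 2 / 8 ≤ |((a m * y m ^ 3 : ℤ) : ℝ)| := fun m => by
    have := cube_div_eight_le_abs_mul_cube (ha m) (zero_le_one.trans (hY m)) (h.snd_bounds m).1
    push_cast
    refine le_trans ?_ this
    gcongr
    exacts [hY m, by norm_num]
  calc (Y i * Y j) ^ 2 = 64 * (Y i ^ 2 / 8 * (Y j ^ 2 / 8)) := by ring
    _ ≤ _ := by gcongr <;> exact hlow _

end IsSolution

theorem card_fst_le (ha : ∀ m, a m ≠ 0) (haa : ∀ m n, m ≠ n → IsCoprime (a m) (a n))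
    (hX : ∀ m, 1 ≤ X m) (hY : ∀ m, 1 ≤ Y m) (hL : ∀ m, |(a m : ℝ)| * X m ^ 2 * Y m ^ 3 ≤ L)
    (hM₀ : 0 ≤ M) (hM : ∀ n : ℕ, n ≠ 0 → (n : ℝ) ≤ L → (#n.divisors : ℝ) ^ 2 ≤ M)
    (hij : i ≠ j) (hik : i ≠ k) (hjk : j ≠ k)
    (hkj : |(a k : ℝ)| * X k ^ 2 * Y k ^ 3 ≤ |(a j : ℝ)| * X j ^ 2 * Y j ^ 3)
    {s : Finset (Fin 3 → ℤ)} (hs : ∀ x ∈ s, IsSolution a X Y x y) :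
    (#s : ℝ) ≤ M ^ 3 * (1 + 80 * (X k / (Y i * Y j))) := by
  have hX₀ := fun m => zero_lt_one.trans_le (hX m)
  have hY₀ := fun m => zero_lt_one.trans_le (hY m)
  have hYij : 0 < Y i * Y j := mul_pos (hY₀ i) (hY₀ j)
  have hXk := hX₀ k
  rcases s.eq_empty_or_nonempty with rfl | ⟨z, hz⟩
  · simp only [card_empty, Nat.cast_zero]
    positivity
  refine (card_conicPoint_le (fun x hx => (hs x hx).isPrimitiveConicPoint)
    ((hs z hz).mul_cube_ne_zero ha) (fun m n => (hs z hz).isCoprime_mul_cube haa) hij hik hjk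
    (K := 32) (E := Y i * Y j / 40) (by positivity) (hX₀ i) hXk ?_
    (fun x hx => (hs x hx).coeff_mul_sq_le (fun m => (hX₀ m).le) (fun m => (hY₀ m).le) hkj)
    (fun x hx => (hs x hx).fst_bounds i) fun x hx => ((hs x hx).fst_bounds k).2).trans ?_
  · have := (hs z hz).mul_sq_le_abs_mul_abs ha hY i j
    push_cast at this ⊢
    linarith [sq_nonneg (Y i * Y j)]
  · have hroots : ∏ m, (Nat.card (rootsOfUnity 2 (ZMod (a m * y m ^ 3).natAbs)) : ℝ) ≤ M ^ 3 :=
      (prod_le_prod (fun _ _ => by positivity) fun m _ =>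
        (hs z hz).card_rootsOfUnity_le ha hX hL hM two_pos (by norm_num) m).trans_eq (by simp)
    calc _ ≤ M ^ 3 * (1 + 2 * X k / (Y i * Y j / 40)) := by gcongr
      _ = M ^ 3 * (1 + 80 * (X k / (Y i * Y j))) := by
          congr 2
          field_simp
          norm_num

end ConicFibre

open Real

section CubicFibre

lemma card_cubic_eq_mul_sq_le_log {g κ α β : ℤ} (hg : g ≠ 0) (hκ : κ ≠ 0) (hα : α ≠ 0) (hβ : β ≠ 0)
    (hαg : IsCoprime α (g * κ ^ 3)) (hβg : IsCoprime β (g * κ ^ 3)) {U V : ℕ} (hU : 0 < U)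
    (hV : 0 < V) {L : ℝ} (hL : 2 ≤ L) (hgL : |(g * κ ^ 3 : ℝ)| ≤ L) (hαL : |(α : ℝ)| * U ^ 3 ≤ L)
    (hβL : |(β : ℝ)| * V ^ 3 ≤ L) {Z : Finset (ℤ × ℤ)}
    (hZ : ∀ z ∈ Z, |z.1| ≤ U ∧ |z.2| ≤ V ∧ IsCoprime z.1 z.2 ∧ IsCoprime z.2 (g * κ ^ 3))
    (hsq : ∀ z ∈ Z, ∃ x ≠ 0, α * z.1 ^ 3 + β * z.2 ^ 3 = g * κ ^ 3 * x ^ 2) :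
    (#Z : ℝ) ≤ Nat.card (rootsOfUnity 3 (ZMod (g * κ ^ 3).natAbs)) *
      (10 ^ 11 * (6 * log L) ^ 4 * (1 + (U * V / |(g * κ ^ 3 : ℝ)|) ^ ((2 : ℝ) / 3))) := by
  have hexp : exp (6 * log L) = L ^ 6 := by
    rw [← log_rpow (by linarith), exp_log (by positivity)]
    norm_cast
  have one_le_abs : ∀ {n : ℤ}, n ≠ 0 → (1 : ℝ) ≤ |(n : ℝ)| := fun hn => by
    exact_mod_cast Int.one_le_abs hn
  have hU₁ : (1 : ℝ) ≤ U := by exact_mod_cast hU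
  have hV₁ : (1 : ℝ) ≤ V := by exact_mod_cast hV
  have hκg : |(g * κ : ℝ)| ≤ L := by
    refine le_trans ?_ hgL
    rw [abs_mul, abs_mul, abs_pow]
    gcongr
    exact le_self_pow₀ (one_le_abs hκ) three_ne_zero
  have hαL' : |(α : ℝ)| ≤ L := (le_mul_of_one_le_right (abs_nonneg _) (one_le_pow₀ hU₁)).trans hαL
  have hβL' : |(β : ℝ)| ≤ L := (le_mul_of_one_le_right (abs_nonneg _) (one_le_pow₀ hV₁)).trans hβL
  have hUL : (U : ℝ) ≤ L := (le_self_pow₀ hU₁ three_ne_zero).trans <|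
    (le_mul_of_one_le_left (by positivity) (one_le_abs hα)).trans hαL
  have hVL : (V : ℝ) ≤ L := (le_self_pow₀ hV₁ three_ne_zero).trans <|
    (le_mul_of_one_le_left (by positivity) (one_le_abs hβ)).trans hβL
  have hL₂ : 4 * L ^ 2 ≤ L ^ 6 := by nlinarith [pow_le_pow_left₀ two_pos.le hL 4, sq_nonneg L]
  refine card_cubic_eq_mul_sq_le hg hκ hα hβ hαg hβg hU hV ?_ ?_ ?_ ?_ hZ hsq
  · linarith [log_two_gt_d9, log_le_log two_pos hL]
  · rw [hexp]
    nlinarith [mul_le_mul hUL hVL (by positivity) (by linarith)]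
  · rw [hexp, abs_mul (g * κ : ℝ), abs_mul (g * κ : ℝ)]
    calc _ ≤ L * L * (L * L) * L := by gcongr
      _ ≤ L ^ 6 := by nlinarith [pow_pos (two_pos.trans_le hL) 5]
  · rw [hexp, abs_mul (g * κ : ℝ), abs_mul (g * κ : ℝ), mul_assoc, mul_assoc]
    calc _ ≤ L * L + L * L := by gcongr
      _ ≤ L ^ 6 := by nlinarith

variable {a : Fin 3 → ℤ} {X Y : Fin 3 → ℝ} {x y : Fin 3 → ℤ} {L M : ℝ} {i j k : Fin 3}

namespace IsSolution

variable (h : IsSolution a X Y x y)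
include h

lemma abs_mul_sq_mul_floor_cube_le (hL : ∀ m, |(a m : ℝ)| * X m ^ 2 * Y m ^ 3 ≤ L)
    (hY : ∀ m, 0 ≤ Y m) (m : Fin 3) :
    |((-(a m * x m ^ 2) : ℤ) : ℝ)| * (⌊Y m⌋₊ : ℝ) ^ 3 ≤ L := by
  push_cast
  rw [abs_neg, abs_mul, abs_of_nonneg (sq_nonneg (x m : ℝ))]
  refine le_trans ?_ (hL m)
  gcongr
  exacts [(h.fst_cast_pos m).le, (h.fst_bounds m).2, Nat.floor_le (hY m)]

lemma abs_snd_le_floor (m : Fin 3) : |y m| ≤ ⌊Y m⌋₊ := by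
  have hy := h.snd_bounds m
  have hpos := h.snd_pos m
  lift y m to ℕ using hpos.le with n
  rw [abs_of_pos hpos]
  exact_mod_cast Nat.le_floor (by exact_mod_cast hy.2)

lemma cubic_eq_mul_sq (hij : i ≠ j) (hik : i ≠ k) (hjk : j ≠ k) :
    -(a i * x i ^ 2) * y i ^ 3 + -(a j * x j ^ 2) * y j ^ 3 = a k * y k ^ 3 * x k ^ 2 := by
  have hsum := h.sum_eq_zero
  rw [sum_fin_three_of_ne hij hik hjk] at hsum
  linear_combination -hsum

end IsSolution

lemma rpow_two_thirds_div_le {u v U V Y D : ℝ} (hu : 0 ≤ u) (huU : u ≤ U) (hv : 0 ≤ v) (hvV : v ≤ V)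
    (hY : 0 < Y) (hYD : Y ^ 3 / 8 ≤ D) :
    (u * v / D) ^ ((2 : ℝ) / 3) ≤ 4 * (U * V / Y ^ 3) ^ ((2 : ℝ) / 3) := by
  have hU := hu.trans huU
  have hV := hv.trans hvV
  have hD : 0 < D := lt_of_lt_of_le (by positivity) hYD
  have h8 : (8 : ℝ) ^ ((2 : ℝ) / 3) = 4 := by
    rw [show (8 : ℝ) = 2 ^ (3 : ℝ) by norm_num, ← rpow_mul two_pos.le]
    norm_num
  calc (u * v / D) ^ ((2 : ℝ) / 3) ≤ (U * V / (Y ^ 3 / 8)) ^ ((2 : ℝ) / 3) := by gcongr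
    _ = (8 * (U * V / Y ^ 3)) ^ ((2 : ℝ) / 3) := by congr 1; field_simp
    _ = 4 * (U * V / Y ^ 3) ^ ((2 : ℝ) / 3) := by
        rw [mul_rpow (by norm_num) (by positivity), h8]

lemma injOn_snd_of_isSolution (ha : a k ≠ 0) (hij : i ≠ j) (hik : i ≠ k) (hjk : j ≠ k) {ξ η κ : ℤ} :
    Set.InjOn (fun p : (Fin 3 → ℤ) × (Fin 3 → ℤ) => (p.2 i, p.2 j))
      {p | IsSolution a X Y p.1 p.2 ∧ p.1 i = ξ ∧ p.1 j = η ∧ p.2 k = κ} := by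
  rintro ⟨x, y⟩ ⟨hx, hxi, hxj, hyk⟩ ⟨z, w⟩ ⟨hz, hzi, hzj, hwk⟩ hyw
  obtain ⟨hi, hj⟩ := Prod.mk.inj hyw
  obtain rfl : y = w := funext (forall_fin_three_of_ne hij hik hjk hi hj (hyk.trans hwk.symm))
  exact Prod.ext (hx.fst_eq_of_eq hz ha hij hik hjk (hxi.trans hzi.symm) (hxj.trans hzj.symm)) rfl

theorem card_cubicFibre_le (ha : ∀ m, a m ≠ 0) (haa : ∀ m n, m ≠ n → IsCoprime (a m) (a n))
    (hX : ∀ m, 1 ≤ X m) (hY : ∀ m, 1 ≤ Y m) (hL₂ : 2 ≤ L)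
    (hL : ∀ m, |(a m : ℝ)| * X m ^ 2 * Y m ^ 3 ≤ L)
    (hM₀ : 0 ≤ M) (hM : ∀ n : ℕ, n ≠ 0 → (n : ℝ) ≤ L → (#n.divisors : ℝ) ^ 2 ≤ M)
    (hij : i ≠ j) (hik : i ≠ k) (hjk : j ≠ k) {ξ η κ : ℤ}
    {s : Finset ((Fin 3 → ℤ) × (Fin 3 → ℤ))}
    (hs : ∀ p ∈ s, IsSolution a X Y p.1 p.2 ∧ p.1 i = ξ ∧ p.1 j = η ∧ p.2 k = κ) :
    (#s : ℝ) ≤ M * (10 ^ 11 * (6 * log L) ^ 4 *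
      (1 + 4 * (Y i * Y j / Y k ^ 3) ^ ((2 : ℝ) / 3))) := by
  have hY₀ := fun m => zero_lt_one.trans_le (hY m)
  rcases s.eq_empty_or_nonempty with rfl | ⟨p, hp⟩
  · have := hY₀ i; have := hY₀ j; have := hY₀ k
    simp only [card_empty, Nat.cast_zero]
    positivity
  rw [← card_image_of_injOn ((injOn_snd_of_isSolution (ha k) hij hik hjk).mono hs)]
  obtain ⟨h, rfl, rfl, rfl⟩ := hs p hp
  have hα : ∀ m, -(a m * p.1 m ^ 2) ≠ 0 := fun m =>
    neg_ne_zero.2 (mul_ne_zero (ha m) (pow_ne_zero 2 (h.fst_pos m).ne'))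
  have hfloor : ∀ m, 0 < ⌊Y m⌋₊ := fun m => Nat.floor_pos.2 (hY m)
  have hyk := h.snd_bounds k
  refine (card_cubic_eq_mul_sq_le_log (ha k) (h.snd_pos k).ne' (hα i) (hα j)
    (h.isCoprime_mul_sq_mul_cube haa hik).neg_left (h.isCoprime_mul_sq_mul_cube haa hjk).neg_left
    (hfloor i) (hfloor j) hL₂ (abs_mul_cube_le (hL k) (hX k) (h.snd_cast_pos k).le hyk.2)
    (h.abs_mul_sq_mul_floor_cube_le hL (fun m => (hY₀ m).le) i)
    (h.abs_mul_sq_mul_floor_cube_le hL (fun m => (hY₀ m).le) j) (forall_mem_image.2 fun q hq => ?_)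
    (forall_mem_image.2 fun q hq => ?_)).trans ?_
  · obtain ⟨h', -, -, hκ⟩ := hs q hq
    exact ⟨h'.abs_snd_le_floor i, h'.abs_snd_le_floor j,
      (h'.isCoprime i j hij).of_mul_left_right.of_mul_right_right,
      hκ ▸ h'.isCoprime_snd_mul_cube hjk⟩
  · obtain ⟨h', hξ, hη, hκ⟩ := hs q hq
    have := h'.cubic_eq_mul_sq hij hik hjk
    rw [hξ, hη, hκ] at this
    exact ⟨q.1 k, (h'.fst_pos k).ne', this⟩
  · gcongr
    · exact h.card_rootsOfUnity_le ha hX hL hM three_pos (by norm_num) k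
    · exact rpow_two_thirds_div_le (Nat.cast_nonneg _) (Nat.floor_le (hY₀ i).le) (Nat.cast_nonneg _)
        (Nat.floor_le (hY₀ j).le) (hY₀ k) (cube_div_eight_le_abs_mul_cube (ha k) (hY₀ k).le hyk.1)

end CubicFibre

section Counting

variable {a : Fin 3 → ℤ} {X Y : Fin 3 → ℝ} {L M : ℝ} {i j k : Fin 3}
  {s : Finset ((Fin 3 → ℤ) × (Fin 3 → ℤ))}

lemma card_Icc_one_floor_le {t : ℝ} (ht : 0 ≤ t) : (#(Icc (1 : ℤ) ⌊t⌋) : ℝ) ≤ t := by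
  rw [Int.card_Icc, add_sub_cancel_right, Int.floor_toNat]
  exact Nat.floor_le ht

lemma mul_le_sqrt {b : ℤ} (hb : b ≠ 0) {X Y : ℝ} (hY : 1 ≤ Y)
    (hL : |(b : ℝ)| * X ^ 2 * Y ^ 3 ≤ L) : X * Y ≤ √L := by
  have hb₁ : (1 : ℝ) ≤ |(b : ℝ)| := by exact_mod_cast Int.one_le_abs hb
  refine le_sqrt_of_sq_le (le_trans ?_ hL)
  calc (X * Y) ^ 2 = 1 * X ^ 2 * Y ^ 2 := by ring
    _ ≤ |(b : ℝ)| * X ^ 2 * Y ^ 3 := by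
        gcongr
        norm_num

variable (ha : ∀ m, a m ≠ 0) (haa : ∀ m n, m ≠ n → IsCoprime (a m) (a n)) (hX : ∀ m, 1 ≤ X m)
  (hY : ∀ m, 1 ≤ Y m) (hL : ∀ m, |(a m : ℝ)| * X m ^ 2 * Y m ^ 3 ≤ L) (hM₀ : 0 ≤ M)
  (hM : ∀ n : ℕ, n ≠ 0 → (n : ℝ) ≤ L → (#n.divisors : ℝ) ^ 2 ≤ M)
  (hs : ∀ p ∈ s, IsSolution a X Y p.1 p.2)
include ha haa hX hY hL hM₀ hM hs

theorem card_isSolution_le_of_conicFibre : (#s : ℝ) ≤ M ^ 3 * (∏ m, Y m + 80 * √L) := by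
  obtain ⟨k, hk⟩ := Finite.exists_min fun m => |(a m : ℝ)| * X m ^ 2 * Y m ^ 3
  obtain ⟨i, j, hij, hik, hjk⟩ := exists_fin_three_ne_ne k
  have hX₀ := fun m => zero_lt_one.trans_le (hX m)
  have hY₀ := fun m => zero_lt_one.trans_le (hY m)
  set t := Fintype.piFinset fun m => Icc (1 : ℤ) ⌊Y m⌋
  have ht : (#t : ℝ) ≤ ∏ m, Y m := by
    rw [Fintype.card_piFinset, Nat.cast_prod]
    exact prod_le_prod (fun _ _ => Nat.cast_nonneg _) fun m _ => card_Icc_one_floor_le (hY₀ m).le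
  have hfibre : ∀ y ∈ t, (#{p ∈ s | p.2 = y} : ℝ) ≤ M ^ 3 * (1 + 80 * (X k / (Y i * Y j))) := by
    intro y _
    have hinj : Set.InjOn Prod.fst (SetLike.coe {p ∈ s | p.2 = y}) := by
      rintro ⟨x, y₁⟩ hp ⟨x', y₂⟩ hq rfl
      exact Prod.ext rfl ((mem_filter.1 hp).2.trans (mem_filter.1 hq).2.symm)
    rw [← card_image_of_injOn hinj]
    refine card_fst_le (y := y) ha haa hX hY hL hM₀ hM hij hik hjk (hk j)
      (forall_mem_image.2 fun p hp => ?_)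
    obtain ⟨hps, rfl⟩ := mem_filter.1 hp
    exact hs p hps
  have hXk := hX₀ k; have hYi := hY₀ i; have hYj := hY₀ j
  calc (#s : ℝ) ≤ #t * (M ^ 3 * (1 + 80 * (X k / (Y i * Y j)))) :=
        card_le_card_mul_of_card_fiber_le (fun p hp => Fintype.mem_piFinset.2 fun m =>
          mem_Icc.2 ⟨(hs p hp).snd_pos m, Int.le_floor.2 ((hs p hp).snd_bounds m).2⟩) hfibre
    _ ≤ (∏ m, Y m) * (M ^ 3 * (1 + 80 * (X k / (Y i * Y j)))) := by gcongr
    _ = M ^ 3 * (∏ m, Y m + 80 * (X k * Y k)) := by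
        rw [prod_fin_three_of_ne hij hik hjk]
        field_simp
    _ ≤ M ^ 3 * (∏ m, Y m + 80 * √L) := by
        gcongr
        exact mul_le_sqrt (ha k) (hY k) (hL k)

theorem card_isSolution_le_of_cubicFibre (hL₂ : 2 ≤ L) (hij : i ≠ j) (hik : i ≠ k) (hjk : j ≠ k) :
    (#s : ℝ) ≤ X i * X j * Y k * (M * (10 ^ 11 * (6 * log L) ^ 4 *
      (1 + 4 * (Y i * Y j / Y k ^ 3) ^ ((2 : ℝ) / 3)))) := by
  have hX₀ := fun m => zero_lt_one.trans_le (hX m)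
  have hY₀ := fun m => zero_lt_one.trans_le (hY m)
  have hXi := hX₀ i; have hYi := hY₀ i; have hYj := hY₀ j; have hYk := hY₀ k
  set t := Icc (1 : ℤ) ⌊X i⌋ ×ˢ Icc (1 : ℤ) ⌊X j⌋ ×ˢ Icc (1 : ℤ) ⌊Y k⌋
  have ht : (#t : ℝ) ≤ X i * X j * Y k := by
    rw [card_product, card_product, Nat.cast_mul, Nat.cast_mul, ← mul_assoc]
    gcongr
    exacts [(mul_pos hXi (hX₀ j)).le, card_Icc_one_floor_le hXi.le,
      card_Icc_one_floor_le (hX₀ j).le, card_Icc_one_floor_le hYk.le]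
  refine (card_le_card_mul_of_card_fiber_le (f := fun p => (p.1 i, p.1 j, p.2 k)) (t := t)
    (fun p hp => ?_) ?_).trans (by gcongr)
  · have h := hs p hp
    exact mem_product.2 ⟨mem_Icc.2 ⟨h.fst_pos i, Int.le_floor.2 (h.fst_bounds i).2⟩, mem_product.2
      ⟨mem_Icc.2 ⟨h.fst_pos j, Int.le_floor.2 (h.fst_bounds j).2⟩,
        mem_Icc.2 ⟨h.snd_pos k, Int.le_floor.2 (h.snd_bounds k).2⟩⟩⟩
  · rintro ⟨ξ, η, κ⟩ -
    refine card_cubicFibre_le (ξ := ξ) (η := η) (κ := κ) ha haa hX hY hL₂ hL hM₀ hM hij hik hjk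
      fun p hp => ?_
    obtain ⟨hps, hpe⟩ := mem_filter.1 hp
    exact ⟨hs p hps, by simpa only [Prod.mk.injEq] using hpe⟩

end Counting

section Balancing

/-- The exponent is dictated by `(X X' Y'' R) ^ 6 * (Y Y' Y'') ^ 5 ≤ L ^ 6`, where
`R = (Y Y' / Y'' ^ 3) ^ (2 / 3)`. -/
lemma mul_rpow_le_or_prod_le_rpow {L X X' Y Y' Y'' : ℝ} (hY : 0 ≤ Y) (hY' : 0 ≤ Y')
    (hY'' : 1 ≤ Y'') (hL : X ^ 2 * Y ^ 3 ≤ L) (hL' : X' ^ 2 * Y' ^ 3 ≤ L) :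
    X * X' * Y'' * (Y * Y' / Y'' ^ 3) ^ ((2 : ℝ) / 3) ≤ L ^ ((6 : ℝ) / 11) ∨
      Y * Y' * Y'' ≤ L ^ ((6 : ℝ) / 11) := by
  have hL₀ : 0 ≤ L := (by positivity : 0 ≤ X ^ 2 * Y ^ 3).trans hL
  have hT : (L ^ ((6 : ℝ) / 11)) ^ 11 = L ^ 6 := by
    rw [← rpow_natCast, ← rpow_mul hL₀, ← rpow_natCast L 6]
    norm_num
  set T := L ^ ((6 : ℝ) / 11)
  have : 0 ≤ T := rpow_nonneg hL₀ _
  set R := (Y * Y' / Y'' ^ 3) ^ ((2 : ℝ) / 3)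
  have hR : R ^ 6 = (Y * Y' / Y'' ^ 3) ^ 4 := by
    rw [← rpow_natCast, ← rpow_mul (by positivity)]
    norm_num
  by_contra! hcon
  obtain ⟨hcubic, hconic⟩ := hcon
  refine (hT.ge : L ^ 6 ≤ T ^ 11).not_gt ?_
  calc T ^ 11 = T ^ 6 * T ^ 5 := by ring
    _ < (X * X' * Y'' * R) ^ 6 * (Y * Y' * Y'') ^ 5 := by gcongr
    _ = (X ^ 2 * Y ^ 3) ^ 3 * (X' ^ 2 * Y' ^ 3) ^ 3 / Y'' := by
        rw [mul_pow, hR]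
        field_simp
    _ ≤ (X ^ 2 * Y ^ 3) ^ 3 * (X' ^ 2 * Y' ^ 3) ^ 3 := div_le_self (by positivity) hY''
    _ ≤ L ^ 3 * L ^ 3 := by gcongr
    _ = L ^ 6 := by ring

lemma exists_divisorBound {ε : ℝ} (hε : 0 < ε) : ∃ C : ℝ, 0 < C ∧ ∀ L : ℝ, 1 ≤ L → ∃ M : ℝ, 0 ≤ M ∧
    (∀ n : ℕ, n ≠ 0 → (n : ℝ) ≤ L → (#n.divisors : ℝ) ^ 2 ≤ M) ∧
      M ^ 3 ≤ C * L ^ ε ∧ M * (10 ^ 11 * (6 * log L) ^ 4) ≤ C * L ^ ε := by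
  set δ := ε / 6 with hδ
  have hδ₀ : 0 < δ := by positivity
  obtain ⟨C, hC, hdiv⟩ := exists_card_divisors_le_mul_rpow hδ₀
  refine ⟨C ^ 6 + C ^ 2 * (10 ^ 11 * (6 / δ) ^ 4), by positivity, fun L hL => ?_⟩
  have hL₀ : 0 ≤ L := zero_le_one.trans hL
  have hE : (L ^ δ) ^ 6 = L ^ ε := by
    rw [← rpow_natCast, ← rpow_mul hL₀, hδ]
    norm_num
  refine ⟨(C * L ^ δ) ^ 2, by positivity, fun n hn hnL => ?_, ?_, ?_⟩
  · calc (#n.divisors : ℝ) ^ 2 ≤ (C * (n : ℝ) ^ δ) ^ 2 := by gcongr; exact hdiv n hn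
      _ ≤ (C * L ^ δ) ^ 2 := by gcongr
  · calc ((C * L ^ δ) ^ 2) ^ 3 = C ^ 6 * L ^ ε := by rw [← hE]; ring
      _ ≤ _ := by gcongr; exact le_add_of_nonneg_right (by positivity)
  · have hlog₀ : 0 ≤ log L := log_nonneg hL
    calc (C * L ^ δ) ^ 2 * (10 ^ 11 * (6 * log L) ^ 4)
        ≤ (C * L ^ δ) ^ 2 * (10 ^ 11 * (6 * (L ^ δ / δ)) ^ 4) := by
          gcongr
          exact log_le_rpow_div hL₀ hδ₀
      _ = C ^ 2 * (10 ^ 11 * (6 / δ) ^ 4) * L ^ ε := by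
          rw [← hE]
          ring
      _ ≤ _ := by gcongr; exact le_add_of_nonneg_left (by positivity)

theorem exists_card_isSolution_le {ε : ℝ} (hε : 0 < ε) : ∃ C : ℝ, 0 < C ∧
    ∀ {a : Fin 3 → ℤ} {X Y : Fin 3 → ℝ} {L : ℝ} {i j k : Fin 3}
      {s : Finset ((Fin 3 → ℤ) × (Fin 3 → ℤ))},
      (∀ m, a m ≠ 0) → (∀ m n, m ≠ n → IsCoprime (a m) (a n)) →
      (∀ m, 1 ≤ X m) → (∀ m, 1 ≤ Y m) → (∀ m, |(a m : ℝ)| * X m ^ 2 * Y m ^ 3 ≤ L) → 2 ≤ L →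
      (∀ p ∈ s, IsSolution a X Y p.1 p.2) → i ≠ j → i ≠ k → j ≠ k →
      (#s : ℝ) ≤ C * (X i * X j * Y k + L ^ ((6 : ℝ) / 11)) * L ^ ε := by
  obtain ⟨C, hC, hdiv⟩ := exists_divisorBound hε
  refine ⟨81 * C, by positivity, fun {a X Y L i j k s} ha haa hX hY hL hL₂ hs hij hik hjk => ?_⟩
  have hL₁ : 1 ≤ L := one_le_two.trans hL₂
  have : 0 ≤ L := zero_le_one.trans hL₁
  obtain ⟨M, hM₀, hM, hconic, hcubic⟩ := hdiv L hL₁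
  have hX₀ := fun m => zero_le_one.trans (hX m)
  have hY₀ := fun m => zero_le_one.trans (hY m)
  have hXY : ∀ m, X m ^ 2 * Y m ^ 3 ≤ L := fun m => by
    refine le_trans ?_ (hL m)
    rw [mul_assoc]
    exact le_mul_of_one_le_left (mul_nonneg (sq_nonneg _) (pow_nonneg (hY₀ m) 3))
      (by exact_mod_cast Int.one_le_abs (ha m))
  have hYi := hY₀ i; have hYj := hY₀ j; have hYk := hY₀ k
  set P := X i * X j * Y k
  have hP : 0 ≤ P := mul_nonneg (mul_nonneg (hX₀ i) (hX₀ j)) (hY₀ k)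
  set T := L ^ ((6 : ℝ) / 11)
  have hT : 0 ≤ T := by positivity
  rcases mul_rpow_le_or_prod_le_rpow (hY₀ i) (hY₀ j) (hY k) (hXY i) (hXY j)
    with h | h
  · set R := (Y i * Y j / Y k ^ 3) ^ ((2 : ℝ) / 3)
    calc (#s : ℝ) ≤ P * (M * (10 ^ 11 * (6 * log L) ^ 4 * (1 + 4 * R))) :=
          card_isSolution_le_of_cubicFibre ha haa hX hY hL hM₀ hM hs hL₂ hij hik hjk
      _ = M * (10 ^ 11 * (6 * log L) ^ 4) * (P + 4 * (P * R)) := by ring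
      _ ≤ C * L ^ ε * (P + 4 * T) := by gcongr
      _ ≤ C * L ^ ε * (81 * (P + T)) := by gcongr; linarith
      _ = 81 * C * (P + T) * L ^ ε := by ring
  · have hsqrt : √L ≤ T := by
      rw [sqrt_eq_rpow]
      exact rpow_le_rpow_of_exponent_le hL₁ (by norm_num)
    calc (#s : ℝ) ≤ M ^ 3 * (∏ m, Y m + 80 * √L) :=
          card_isSolution_le_of_conicFibre ha haa hX hY hL hM₀ hM hs
      _ ≤ C * L ^ ε * (T + 80 * T) := by rw [prod_fin_three_of_ne hij hik hjk]; gcongr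
      _ ≤ C * L ^ ε * (81 * (P + T)) := by gcongr; linarith
      _ = 81 * C * (P + T) * L ^ ε := by ring

end Balancing

end SquarefulSum

/-- For every `ε > 0` there is a constant `C(ε)` such that for any permutation `(i, j, k)` of
`(1, 2, 3)` one has `N₀(B) ≤ C(ε)(X_iX_jY_k + B^{6/11})B^ε`. -/
theorem N0_XXY_bound (ε : ℝ) (hε : 0 < ε) :
    ∃ C : ℝ, 0 < C ∧ ∀ (a : Fin 3 → ℤ) (X Y : Fin 3 → ℝ) (B : ℝ),
      2 ≤ B → (∀ i, a i ≠ 0) → (∀ i, Squarefree (a i)) →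
      (∀ i j, i ≠ j → IsCoprime (a i) (a j)) →
      (∀ i, 1 ≤ X i) → (∀ i, 1 ≤ Y i) →
      (∀ i, X i ^ 2 * Y i ^ 3 ≤ 32 * B / |(a i : ℝ)|) →
      ∀ i j k : Fin 3, i ≠ j → i ≠ k → j ≠ k →
        ((S0 a X Y).ncard : ℝ) ≤
          C * (X i * X j * Y k + B ^ ((6 : ℝ) / 11)) * B ^ ε := by
  obtain ⟨C, hC, hcard⟩ := SquarefulSum.exists_card_isSolution_le hε
  refine ⟨C * 32 * 32 ^ ε, by positivity, fun a X Y B hB ha _ haa hX hY hXY i j k hij hik hjk => ?_⟩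
  have hP : 0 ≤ X i * X j * Y k := by have := hX i; have := hX j; have := hY k; positivity
  obtain hfin | hinf := (S0 a X Y).finite_or_infinite
  · have hL : ∀ m, |(a m : ℝ)| * X m ^ 2 * Y m ^ 3 ≤ 32 * B := fun m => by
      linarith [(le_div_iff₀ (by simpa using ha m)).1 (hXY m)]
    have h32 : (32 : ℝ) ^ ((6 : ℝ) / 11) ≤ 32 :=
      Real.rpow_le_self_of_one_le (by norm_num) (by norm_num)
    have hB' : (32 * B) ^ ((6 : ℝ) / 11) ≤ 32 * B ^ ((6 : ℝ) / 11) := by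
      rw [Real.mul_rpow (by norm_num) (by linarith)]
      gcongr
    rw [Set.ncard_eq_toFinset_card _ hfin]
    calc (hfin.toFinset.card : ℝ)
        ≤ C * (X i * X j * Y k + (32 * B) ^ ((6 : ℝ) / 11)) * (32 * B) ^ ε :=
          hcard ha haa hX hY hL (by linarith) (fun p hp =>
            SquarefulSum.isSolution_of_mem_S0 (hfin.mem_toFinset.1 hp)) hij hik hjk
      _ ≤ C * (32 * (X i * X j * Y k + B ^ ((6 : ℝ) / 11))) * (32 * B) ^ ε := by
          gcongr
          linarith
      _ = C * 32 * 32 ^ ε * (X i * X j * Y k + B ^ ((6 : ℝ) / 11)) * B ^ ε := by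
          rw [Real.mul_rpow (by norm_num) (by linarith)]
          ring
  · rw [hinf.ncard, Nat.cast_zero]
    positivity
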